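/- arXiv:2002.01790 — 3 statements merged into one kernel-verified Lean document; each statement's English description precedes it below -/
import Mathlib

section
/- There exists a constant C(d) depending only on d such that for every p ≥ 1, E sup{ ‖ Σ_{i∈[n]^d} a_i g_{i_1} ∏_{k=2}^d x^k_{i_k} ‖ : (x^2,...,x^d) ∈ (B_2^n)^{d−1} } ≤ C(d) · Σ_{(P,P')∈P([d])} p^{(|P|+1−d)/2} ‖A‖_{P'|P}, where (g_i)_{i≤n} are i.i.d. standard Gaussian and B_2^n is the Euclidean unit ball of ℝ^n. -/
/-!
The bound follows from smoothing the directions `x` by Gaussian noise and paying with entropy.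

Write `slice A k₀ g x` for the `F`-valued process `∑ a_i g_{i_1} ∏ x^k_{i_k}` (with `k₀` the slot of
the Gaussian `g`). For a fixed `y`, the norm of `slice A k₀ g y` is a supremum of a Gaussian process
over the dual unit ball. Penalising it by twice its variance gives a variable whose exponential
moment is at most the exponential of the mean of the unpenalised supremum (`pen_exp_le`); this is
proved by rotating one Gaussian vector into an independent copy in many small steps, the growing
penalty absorbing the variance of each increment.

Let `G` be a family of independent standard Gaussian vectors and `s > 0`. Averaging the resulting
exponential bound over `y = s G` and applying the Gibbs variational inequality to the law of
`x + s G`, whose entropy relative to that of `s G` is `|x|² / (2 s²) ≤ d / (2 s²)`, controls all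
directions `x` at once (`gibbs`, `sup_le_smoothed`). Because `slice` is affine in each direction,
smoothing does not alter its mean, so for every `lam > 0`
`E sup ‖slice A k₀ g x‖ ≤ a + 2 lam m + d / (2 s² lam)`, where `a` bounds the mean norm and `m` the
weak variance at the smoothed points.

Expanding the products `∏ (x^k + s G^k)` bounds `a` by the sum over `I` of `s^|I|` times the chaos
norms with Gaussian singletons in `{k₀} ∪ I` (`smoothed_mean_le`), and `√m` by the sum over `I` of
`s^|I|` times the chaos norms with no Gaussians and `{k₀} ∪ I` as one block (`smoothed_sq_le`); in
both cases the other coordinates are singleton sup-blocks. With `s = p^{-1/2}` and `lam` of order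
`√(p / m)`, the terms become exactly those of the right-hand side for these partition pairs.
-/

open MeasureTheory ProbabilityTheory
open scoped Classical

noncomputable section

def stdGaussian (ι : Type*) [Fintype ι] : Measure (ι → ℝ) :=
  Measure.pi fun _ => gaussianReal 0 1

abbrev GIdx (d n : ℕ) := Σ J : Finset (Fin d), ({l // l ∈ J} → Fin n)

def IsPartition {d : ℕ} (J : Finset (Fin d)) (P : Finset (Finset (Fin d))) : Prop :=
  (∀ I ∈ P, I.Nonempty) ∧ (∀ I ∈ P, ∀ I' ∈ P, I ≠ I' → Disjoint I I') ∧ P.sup id = J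

def IsPartitionPair {d : ℕ} (S : Finset (Fin d)) (P P' : Finset (Finset (Fin d))) : Prop :=
  Disjoint P P' ∧ IsPartition S (P ∪ P')

def partitionsOf {d : ℕ} (J : Finset (Fin d)) : Finset (Finset (Finset (Fin d))) :=
  Finset.univ.filter fun P => IsPartition J P

def partitionPairs (d : ℕ) :
    Finset (Finset (Finset (Fin d)) × Finset (Finset (Fin d))) :=
  Finset.univ.filter fun PP => IsPartitionPair Finset.univ PP.1 PP.2

def chaosNorm {F : Type*} [NormedAddCommGroup F] [NormedSpace ℝ F] {d n : ℕ}
    (A : (Fin d → Fin n) → F) (P' P : Finset (Finset (Fin d))) : ℝ :=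
  sSup { r : ℝ | ∃ x : (I : Finset (Fin d)) → ({l // l ∈ I} → Fin n) → ℝ,
    (∀ I ∈ P, ∑ v : {l // l ∈ I} → Fin n, x I v ^ 2 ≤ 1) ∧
    r = ∫ ω : GIdx d n → ℝ,
        ‖∑ i : Fin d → Fin n,
          ((∏ I ∈ P, x I fun l => i l.1) * ∏ J ∈ P', ω ⟨J, fun l => i l.1⟩) • A i‖
          ∂ stdGaussian (GIdx d n) }

def tNorm {F : Type*} [NormedAddCommGroup F] [NormedSpace ℝ F] {d n : ℕ}
    (A : (Fin d → Fin n) → F) (J : Finset (Fin d)) (P : Finset (Finset (Fin d))) : ℝ :=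
  chaosNorm A ((Finset.univ \ J).image fun l => ({l} : Finset (Fin d))) P

def decChaos {F : Type*} [NormedAddCommGroup F] [NormedSpace ℝ F] {d n : ℕ}
    (A : (Fin d → Fin n) → F) (ω : Fin d × Fin n → ℝ) : F :=
  ∑ i : Fin d → Fin n, (∏ k, ω (k, i k)) • A i

def momP {F : Type*} [NormedAddCommGroup F] [NormedSpace ℝ F] {d n : ℕ}
    (A : (Fin d → Fin n) → F) (p : ℝ) : ℝ :=
  (∫ ω : Fin d × Fin n → ℝ, ‖decChaos A ω‖ ^ p ∂ stdGaussian (Fin d × Fin n)) ^ (1 / p)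

end

/-! ### Gaussian measures: rotation, translation, exponential moments -/

instance instProbStd (ι : Type*) [Fintype ι] : IsProbabilityMeasure (_root_.stdGaussian ι) := by
  unfold _root_.stdGaussian; infer_instance

/-- Rotation invariance of a pair of independent standard Gaussian vectors. -/
lemma std_rotation (ι : Type*) [Fintype ι] (θ : ℝ) :
    MeasurePreserving
      (fun q : (ι → ℝ) × (ι → ℝ) =>
        (Real.cos θ • q.1 + Real.sin θ • q.2, -Real.sin θ • q.1 + Real.cos θ • q.2))
      ((_root_.stdGaussian ι).prod (_root_.stdGaussian ι))
      ((_root_.stdGaussian ι).prod (_root_.stdGaussian ι)) := by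
  have h1 : MeasurePreserving (ContinuousLinearMap.rotation (E := ℝ) θ)
      ((gaussianReal 0 1).prod (gaussianReal 0 1)) ((gaussianReal 0 1).prod (gaussianReal 0 1)) := by
    refine ⟨by fun_prop, ?_⟩
    refine IsGaussian.map_rotation_eq_self_of_forall_strongDual_eq_zero (fun L => ?_) θ
    rw [integral_continuousLinearMap_gaussianReal]; simp
  have h2 := measurePreserving_pi (fun _ : ι => (gaussianReal 0 1).prod (gaussianReal 0 1))
    (fun _ : ι => (gaussianReal 0 1).prod (gaussianReal 0 1)) (fun _ => h1)
  have h3 := measurePreserving_arrowProdEquivProdArrow ℝ ℝ ι (fun _ => gaussianReal 0 1)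
    (fun _ => gaussianReal 0 1)
  exact (h3.comp h2).comp h3.symm

lemma std_lintegral_exp (ι : Type*) [Fintype ι] (w : ι → ℝ) :
    ∫⁻ y, ENNReal.ofReal (Real.exp (∑ i, y i * w i)) ∂(_root_.stdGaussian ι)
      = ENNReal.ofReal (Real.exp ((∑ i, w i ^ 2) / 2)) := by
  have hInt : Integrable (fun y : ι → ℝ => ∏ i, Real.exp (y i * w i)) (_root_.stdGaussian ι) := by
    refine Integrable.fintype_prod_dep (f := fun i t => Real.exp (t * w i)) (fun i => ?_)
    simpa [mul_comm] using integrable_exp_mul_gaussianReal (μ := 0) (v := 1) (w i)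
  have : ∀ y : ι → ℝ, Real.exp (∑ i, y i * w i) = ∏ i, Real.exp (y i * w i) := fun y => by
    rw [Real.exp_sum]
  simp_rw [this]
  rw [← ofReal_integral_eq_lintegral_ofReal hInt
    (Filter.Eventually.of_forall fun y => Finset.prod_nonneg fun i _ => (Real.exp_pos _).le)]
  congr 1
  unfold _root_.stdGaussian
  rw [integral_fintype_prod_eq_prod (𝕜 := ℝ) (f := fun i t => Real.exp (t * w i)), Finset.sum_div,
    Real.exp_sum]
  refine Finset.prod_congr rfl fun i _ => ?_
  have := congrFun (mgf_id_gaussianReal (μ := 0) (v := 1)) (w i)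
  simp only [mgf, id] at this
  simp only [mul_comm _ (w i)]
  rw [this]; simp

lemma std_integrable_exp_abs (ι : Type*) [Fintype ι] (K : ℝ) :
    Integrable (fun y : ι → ℝ => Real.exp (∑ i, K * |y i|)) (_root_.stdGaussian ι) := by
  simp_rw [Real.exp_sum]
  refine Integrable.fintype_prod_dep (f := fun _ t => Real.exp (K * |t|)) (fun i => ?_)
  refine ((integrable_exp_mul_gaussianReal (μ := 0) (v := 1) K).add
    (integrable_exp_mul_gaussianReal (μ := 0) (v := 1) (-K))).mono'
    (by fun_prop) (Filter.Eventually.of_forall fun t => ?_)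
  rw [Real.norm_eq_abs, abs_of_pos (Real.exp_pos _)]
  simp only [Pi.add_apply]
  rcases abs_cases t with ⟨h, _⟩ | ⟨h, _⟩ <;> rw [h]
  · linarith [Real.exp_pos (-K * t)]
  · have : K * -t = -K * t := by ring
    rw [this]; linarith [Real.exp_pos (K * t)]

/-- The one-dimensional Cameron–Martin formula. -/
lemma gauss_shift (c : ℝ) :
    ((gaussianReal 0 1).withDensity
      (fun t => ENNReal.ofReal (Real.exp (-(c * t) - c ^ 2 / 2)))).map (fun t => c + t)
      = gaussianReal 0 1 := by
  have : (gaussianReal 0 1).withDensity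
      (fun t => ENNReal.ofReal (Real.exp (-(c * t) - c ^ 2 / 2))) = gaussianReal (-c) 1 := by
    rw [gaussianReal_of_var_ne_zero _ one_ne_zero, gaussianReal_of_var_ne_zero _ one_ne_zero,
      ← withDensity_mul _ (measurable_gaussianPDF _ _) (by fun_prop)]
    congr 1
    ext t
    simp only [Pi.mul_apply, gaussianPDF, gaussianPDFReal]
    rw [← ENNReal.ofReal_mul (by positivity), mul_assoc, ← Real.exp_add]
    congr 3
    simp; ring
  rw [this, gaussianReal_map_const_add]; simp

lemma pi_withDensity_prod {ι : Type*} [Fintype ι] {X : ι → Type*} [∀ i, MeasurableSpace (X i)]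
    (μ : ∀ i, Measure (X i)) [∀ i, IsProbabilityMeasure (μ i)] (w : ∀ i, X i → ENNReal)
    (hw : ∀ i, Measurable (w i)) [∀ i, SigmaFinite ((μ i).withDensity (w i))] :
    (Measure.pi μ).withDensity (fun x => ∏ i, w i (x i))
      = Measure.pi (fun i => (μ i).withDensity (w i)) := by
  refine (Measure.pi_eq fun s hs => ?_).symm
  rw [withDensity_apply _ (MeasurableSet.univ_pi hs), ← lintegral_indicator (MeasurableSet.univ_pi hs)]
  have h1 : ∀ x : ∀ i, X i, (Set.univ.pi s).indicator (fun x => ∏ i, w i (x i)) x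
      = ∏ i, (s i).indicator (w i) (x i) := by
    intro x
    by_cases hx : x ∈ Set.univ.pi s
    · rw [Set.indicator_of_mem hx]
      exact Finset.prod_congr rfl fun i _ => (Set.indicator_of_mem (hx i trivial) _).symm
    · rw [Set.indicator_of_notMem hx]
      simp only [Set.mem_pi, Set.mem_univ, true_imp_iff, not_forall] at hx
      obtain ⟨i, hi⟩ := hx
      exact (Finset.prod_eq_zero (Finset.mem_univ i) (Set.indicator_of_notMem hi _)).symm
  simp_rw [h1]
  have hm : ∀ i, Measurable ((s i).indicator (w i)) := fun i => (hw i).indicator (hs i)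
  have := lintegral_prod_eq_prod_lintegral_of_indepFun (μ := Measure.pi μ) Finset.univ
    (fun i x => (s i).indicator (w i) (x i))
    (iIndepFun_pi (fun i => (hm i).aemeasurable)) (fun i => (hm i).comp (measurable_pi_apply i))
  rw [this]
  refine Finset.prod_congr rfl fun i _ => ?_
  rw [withDensity_apply _ (hs i), ← lintegral_indicator (hs i),
    ← (measurePreserving_eval μ i).lintegral_comp (hm i)]

/-- A translation formula with densities `w i` on the factors passes to the product measure, with
the product density. -/
lemma pi_shift {ι : Type*} [Fintype ι] {X : ι → Type*} [∀ i, MeasurableSpace (X i)]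
    [∀ i, AddCommGroup (X i)] [∀ i, MeasurableAdd (X i)]
    (μ : ∀ i, Measure (X i)) [∀ i, IsProbabilityMeasure (μ i)] (c : ∀ i, X i) (w : ∀ i, X i → ENNReal)
    (hw : ∀ i, Measurable (w i))
    (h : ∀ i, ((μ i).withDensity (w i)).map (fun t => c i + t) = μ i) :
    ((Measure.pi μ).withDensity (fun x => ∏ i, w i (x i))).map (fun x => c + x)
      = Measure.pi μ := by
  have hp : ∀ i, IsProbabilityMeasure ((μ i).withDensity (w i)) := fun i => by
    constructor
    have := congrArg (fun ν => ν Set.univ) (h i)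
    simp only [measure_univ] at this
    rw [← this, Measure.map_apply (measurable_const_add (c i)) MeasurableSet.univ]; simp
  have hp' : ∀ i, SigmaFinite (((μ i).withDensity (w i)).map (fun t => c i + t)) := fun i => by
    rw [h i]; infer_instance
  rw [pi_withDensity_prod μ w hw]
  have := Measure.pi_map_pi (μ := fun i => (μ i).withDensity (w i)) (f := fun i t => c i + t)
    (fun i => (measurable_const_add (c i)).aemeasurable)
  simp only [h] at this
  exact this

/-- The law of `d` independent standard Gaussian vectors in `ℝⁿ`. -/
noncomputable def gFam (d n : ℕ) : Measure (Fin d → Fin n → ℝ) :=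
  Measure.pi fun _ => _root_.stdGaussian (Fin n)

instance instProbFam (d n : ℕ) : IsProbabilityMeasure (gFam d n) := by
  unfold gFam; infer_instance

/-- The Cameron–Martin formula for `gFam`. -/
lemma fam_shift (d n : ℕ) (c : Fin d → Fin n → ℝ) :
    ((gFam d n).withDensity (fun x =>
      ENNReal.ofReal (Real.exp (∑ k, ∑ j, (-(c k j * x k j) - c k j ^ 2 / 2))))).map
        (fun x => c + x) = gFam d n := by
  have h1 : ∀ k, ((_root_.stdGaussian (Fin n)).withDensity
      (fun x => ∏ j, ENNReal.ofReal (Real.exp (-(c k j * x j) - c k j ^ 2 / 2)))).map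
        (fun x => c k + x) = _root_.stdGaussian (Fin n) := fun k =>
    pi_shift (fun _ => gaussianReal 0 1) (c k)
      (fun j t => ENNReal.ofReal (Real.exp (-(c k j * t) - c k j ^ 2 / 2)))
      (fun j => by fun_prop) (fun j => gauss_shift _)
  have h2 := pi_shift (fun _ : Fin d => _root_.stdGaussian (Fin n)) c
    (fun k x => ∏ j, ENNReal.ofReal (Real.exp (-(c k j * x j) - c k j ^ 2 / 2)))
    (fun k => by fun_prop) h1
  unfold gFam
  convert h2 using 3
  ext x
  rw [Real.exp_sum, ENNReal.ofReal_prod_of_nonneg (fun _ _ => (Real.exp_pos _).le)]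
  refine Finset.prod_congr rfl fun k _ => ?_
  rw [Real.exp_sum, ENNReal.ofReal_prod_of_nonneg (fun _ _ => (Real.exp_pos _).le)]

/-! ### Exponential moments of penalised Gaussian suprema -/

/-- The supremum over `ψ` of the Gaussian process `x ↦ ⟨x, v ψ⟩`, penalised by `c` times its
variance `|v ψ|²`. -/
noncomputable def penSup {ι Ψ : Type*} [Fintype ι] (v : Ψ → ι → ℝ) (c : ℝ) (x : ι → ℝ) : ℝ :=
  ⨆ ψ, (∑ i, x i * v ψ i - c * ∑ i, v ψ i ^ 2)

section penSup

variable {ι Ψ : Type*} [Fintype ι] {v : Ψ → ι → ℝ} {K : ℝ}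

lemma pen_term_le (hv : ∀ ψ i, |v ψ i| ≤ K) {c : ℝ} (hc : 0 ≤ c) (x : ι → ℝ) (ψ : Ψ) :
    ∑ i, x i * v ψ i - c * ∑ i, v ψ i ^ 2 ≤ ∑ i, K * |x i| := by
  have h1 : 0 ≤ c * ∑ i, v ψ i ^ 2 := mul_nonneg hc (Finset.sum_nonneg fun i _ => sq_nonneg _)
  have h2 : ∑ i, x i * v ψ i ≤ ∑ i, K * |x i| := Finset.sum_le_sum fun i _ => by
    calc x i * v ψ i ≤ |x i * v ψ i| := le_abs_self _
      _ = |v ψ i| * |x i| := by rw [abs_mul, mul_comm]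
      _ ≤ K * |x i| := mul_le_mul_of_nonneg_right (hv ψ i) (abs_nonneg _)
  linarith

lemma pen_bdd (hv : ∀ ψ i, |v ψ i| ≤ K) {c : ℝ} (hc : 0 ≤ c) (x : ι → ℝ) :
    BddAbove (Set.range fun ψ => ∑ i, x i * v ψ i - c * ∑ i, v ψ i ^ 2) :=
  ⟨∑ i, K * |x i|, by rintro _ ⟨ψ, rfl⟩; exact pen_term_le hv hc x ψ⟩

lemma le_pen (hv : ∀ ψ i, |v ψ i| ≤ K) {c : ℝ} (hc : 0 ≤ c) (x : ι → ℝ) (ψ : Ψ) :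
    ∑ i, x i * v ψ i - c * ∑ i, v ψ i ^ 2 ≤ penSup v c x :=
  le_ciSup (pen_bdd hv hc x) ψ

lemma pen_le (hv : ∀ ψ i, |v ψ i| ≤ K) {c : ℝ} (hc : 0 ≤ c) (x : ι → ℝ) [Nonempty Ψ] :
    penSup v c x ≤ ∑ i, K * |x i| :=
  ciSup_le fun ψ => pen_term_le hv hc x ψ

lemma pen_nonneg (hv : ∀ ψ i, |v ψ i| ≤ K) {c : ℝ} (hc : 0 ≤ c) (x : ι → ℝ) {ψ₀ : Ψ}
    (h0 : v ψ₀ = 0) : 0 ≤ penSup v c x := by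
  simpa [h0] using le_pen hv hc x ψ₀

lemma pen_measurable (hv : ∀ ψ i, |v ψ i| ≤ K) {c : ℝ} (hc : 0 ≤ c) :
    Measurable (penSup v c) := by
  refine LowerSemicontinuous.measurable (lowerSemicontinuous_ciSup (fun x => pen_bdd hv hc x)
    fun ψ => Continuous.lowerSemicontinuous (by fun_prop))

/-- One interpolation step: turning the Gaussian vector by the angle `π / (2N)` while raising the
penalty by `2 / N`. At a near-maximiser `ψ` of the penalised supremum at `X`, the increment is a
Gaussian in `Y` whose exponential moment costs `(π / 2)² |v ψ|² / 2`; the extra penalty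
`2 |v ψ|²` absorbs it, and an error of order `1 / N` remains. -/
lemma pen_step [Nonempty Ψ] (hv : ∀ ψ i, |v ψ i| ≤ K) (hK : 0 ≤ K) {N : ℕ} (hN : 0 < N) {a : ℝ}
    (ha : 0 ≤ a) (X : ι → ℝ) :
    ∫⁻ Y, ENNReal.ofReal (Real.exp (N * (penSup v (a + 2 / N) X -
        penSup v a (Real.cos (Real.pi / (2 * N)) • X - Real.sin (Real.pi / (2 * N)) • Y))))
        ∂(_root_.stdGaussian ι)
      ≤ ENNReal.ofReal (Real.exp ((1 + ∑ i, 2 * K * |X i|) / N)) := by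
  set δ := Real.pi / (2 * N) with hδ
  have hN' : (0:ℝ) < N := by exact_mod_cast hN
  have hδ0 : 0 < δ := by positivity
  have hNδ : N * δ = Real.pi / 2 := by rw [hδ]; field_simp
  have hb : 0 ≤ a + 2 / (N:ℝ) := by positivity
  obtain ⟨ψ, hψ⟩ := exists_lt_of_lt_ciSup (f := fun ψ => ∑ i, X i * v ψ i -
    (a + 2 / N) * ∑ i, v ψ i ^ 2) (show penSup v (a + 2 / N) X - 1 / N ^ 2 < _ from by
      have : (0:ℝ) < 1 / N ^ 2 := by positivity
      exact sub_lt_self _ this)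
  set S := ∑ i, v ψ i ^ 2 with hS
  set L := ∑ i, X i * v ψ i with hL
  have hS0 : 0 ≤ S := Finset.sum_nonneg fun i _ => sq_nonneg _
  have hLK : L ≤ ∑ i, K * |X i| := by
    have := pen_term_le hv le_rfl X ψ (c := 0)
    simpa using this
  have hpt : ∀ Y : ι → ℝ, N * (penSup v (a + 2 / N) X - penSup v a (Real.cos δ • X - Real.sin δ • Y))
      ≤ (1 / N + N * (1 - Real.cos δ) * L - 2 * S) + ∑ i, Y i * (N * Real.sin δ * v ψ i) := by
    intro Y
    have h1 := le_pen hv ha (Real.cos δ • X - Real.sin δ • Y) ψ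
    have h2 : ∑ i, (Real.cos δ • X - Real.sin δ • Y) i * v ψ i
        = Real.cos δ * L - Real.sin δ * ∑ i, Y i * v ψ i := by
      rw [hL, Finset.mul_sum, Finset.mul_sum, ← Finset.sum_sub_distrib]
      refine Finset.sum_congr rfl fun i _ => ?_
      simp; ring
    have h3 : ∑ i, Y i * (N * Real.sin δ * v ψ i) = N * Real.sin δ * ∑ i, Y i * v ψ i := by
      rw [Finset.mul_sum]; exact Finset.sum_congr rfl fun i _ => by ring
    rw [h2] at h1
    rw [h3]
    have h4 : penSup v (a + 2 / N) X - penSup v a (Real.cos δ • X - Real.sin δ • Y)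
      ≤ 1 / N ^ 2 + (1 - Real.cos δ) * L - 2 / N * S + Real.sin δ * ∑ i, Y i * v ψ i := by
      linarith
    refine (mul_le_mul_of_nonneg_left h4 hN'.le).trans (le_of_eq ?_)
    field_simp
  have hcos : N * (1 - Real.cos δ) ≤ 2 / N := by
    have h1 := Real.one_sub_sq_div_two_le_cos (x := δ)
    have h2 : N * (1 - Real.cos δ) ≤ N * (δ ^ 2 / 2) := by gcongr; linarith
    have h3 : N * (δ ^ 2 / 2) = (N * δ) ^ 2 / 2 / N := by field_simp
    rw [h3, hNδ] at h2
    refine h2.trans ?_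
    gcongr
    nlinarith [Real.pi_le_four, Real.pi_pos]
  have hcos0 : 0 ≤ N * (1 - Real.cos δ) := mul_nonneg hN'.le (by linarith [Real.cos_le_one δ])
  have hsin : (N * Real.sin δ) ^ 2 ≤ 4 := by
    have h1 : 0 ≤ Real.sin δ := Real.sin_nonneg_of_nonneg_of_le_pi hδ0.le (by
      have : δ ≤ N * δ := le_mul_of_one_le_left hδ0.le (by exact_mod_cast hN)
      linarith [Real.pi_pos])
    have h2 : N * Real.sin δ ≤ N * δ := by gcongr; exact Real.sin_le hδ0.le
    rw [hNδ] at h2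
    have h3 : 0 ≤ N * Real.sin δ := by positivity
    nlinarith [Real.pi_le_four, Real.pi_pos]
  calc _ ≤ ∫⁻ Y, ENNReal.ofReal (Real.exp (1 / N + N * (1 - Real.cos δ) * L - 2 * S)) *
          ENNReal.ofReal (Real.exp (∑ i, Y i * (N * Real.sin δ * v ψ i)))
          ∂(_root_.stdGaussian ι) := by
        refine lintegral_mono fun Y => ?_
        rw [← ENNReal.ofReal_mul (Real.exp_pos _).le, ← Real.exp_add]
        exact ENNReal.ofReal_le_ofReal (Real.exp_le_exp.2 (hpt Y))
    _ = ENNReal.ofReal (Real.exp (1 / N + N * (1 - Real.cos δ) * L - 2 * S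
          + (N * Real.sin δ) ^ 2 * S / 2)) := by
        rw [lintegral_const_mul _ (by fun_prop), std_lintegral_exp,
          ← ENNReal.ofReal_mul (Real.exp_pos _).le, ← Real.exp_add]
        congr 3
        rw [hS, Finset.mul_sum]
        congr 2
        ext i; ring
    _ ≤ _ := by
        refine ENNReal.ofReal_le_ofReal (Real.exp_le_exp.2 ?_)
        have h1 : (N * Real.sin δ) ^ 2 * S ≤ 4 * S := mul_le_mul_of_nonneg_right hsin hS0
        have h2 : N * (1 - Real.cos δ) * L ≤ 2 / N * ∑ i, K * |X i| :=
          (mul_le_mul_of_nonneg_left hLK hcos0).trans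
            (mul_le_mul_of_nonneg_right hcos (Finset.sum_nonneg fun i _ => by positivity))
        have h3 : (1 + ∑ i, 2 * K * |X i|) / N = 1 / N + 2 / N * ∑ i, K * |X i| := by
          simp only [mul_assoc, ← Finset.mul_sum]; field_simp
        rw [h3]; linarith

/-- Comparison of the penalised supremum with an independent copy of the unpenalised one. The pair
is joined by `N` rotations of angle `π / (2N)`; by Jensen the exponential of the average of the `N`
rescaled increments is at most the average of their exponentials, each of mean at most `1 + M / N`
by rotation invariance and `pen_step`, and then `N → ∞`. -/
lemma pen_two_copies [Nonempty Ψ] (hv : ∀ ψ i, |v ψ i| ≤ K) (hK : 0 ≤ K) :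
    ∫⁻ q, ENNReal.ofReal (Real.exp (penSup v 2 q.2 - penSup v 0 q.1))
      ∂((_root_.stdGaussian ι).prod (_root_.stdGaussian ι)) ≤ 1 := by
  set μ := _root_.stdGaussian ι with hμ
  set H : (ι → ℝ) → ℝ := fun X => 1 + ∑ i, 2 * K * |X i| with hH
  have hHint : Integrable (fun X => Real.exp (H X)) μ := by
    have := (std_integrable_exp_abs ι (2 * K)).const_mul (Real.exp 1)
    simpa only [hH, Real.exp_add] using this
  have hH0 : ∀ X, 0 ≤ H X := fun X => by
    simp only [hH]
    have : 0 ≤ ∑ i, 2 * K * |X i| := Finset.sum_nonneg fun i _ => by positivity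
    linarith
  set M := ∫ X, Real.exp (H X) ∂μ with hM
  have hM0 : 0 ≤ M := integral_nonneg fun _ => (Real.exp_pos _).le
  have key : ∀ N : ℕ, 0 < N →
      ∫⁻ q, ENNReal.ofReal (Real.exp (penSup v 2 q.2 - penSup v 0 q.1)) ∂(μ.prod μ)
        ≤ ENNReal.ofReal (1 + M / N) := by
    intro N hN
    have hN' : (0:ℝ) < N := by exact_mod_cast hN
    set δ := Real.pi / (2 * N) with hδ
    set R : ℝ → ((ι → ℝ) × (ι → ℝ)) → ((ι → ℝ) × (ι → ℝ)) := fun θ q =>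
      (Real.cos θ • q.1 + Real.sin θ • q.2, -Real.sin θ • q.1 + Real.cos θ • q.2) with hR
    set T : ℕ → ((ι → ℝ) × (ι → ℝ)) → ℝ := fun k q => N * (penSup v (2 * k / N + 2 / N) q.1 -
      penSup v (2 * k / N) (Real.cos δ • q.1 - Real.sin δ • q.2)) with hT
    have hTm : ∀ k, Measurable (T k) := fun k => by
      have h1 := pen_measurable hv (c := 2 * k / N + 2 / N) (by positivity)
      have h2 := pen_measurable hv (c := 2 * k / N) (by positivity)
      have h3 : Measurable fun q : (ι → ℝ) × (ι → ℝ) => Real.cos δ • q.1 - Real.sin δ • q.2 := by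
        fun_prop
      exact ((h1.comp measurable_fst).sub (h2.comp h3)).const_mul _
    have hterm : ∀ k : ℕ, ∫⁻ q, ENNReal.ofReal (Real.exp (T k q)) ∂(μ.prod μ)
        ≤ ENNReal.ofReal (1 + M / N) := by
      intro k
      rw [lintegral_prod _ (by have := hTm k; fun_prop)]
      calc _ ≤ ∫⁻ X, ENNReal.ofReal (Real.exp (H X / N)) ∂μ :=
            lintegral_mono fun X => pen_step hv hK hN (a := 2 * k / N) (by positivity) X
        _ ≤ ∫⁻ X, ENNReal.ofReal (1 + Real.exp (H X) / N) ∂μ := by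
            refine lintegral_mono fun X => ENNReal.ofReal_le_ofReal ?_
            have hN1 : (1:ℝ) / N ≤ 1 := by
              rw [div_le_one hN']; exact_mod_cast hN
            have hc := convexOn_exp.2 (Set.mem_univ 0) (Set.mem_univ (H X))
              (show (0:ℝ) ≤ 1 - 1 / N by linarith) (show (0:ℝ) ≤ 1 / N by positivity) (by ring)
            simp only [smul_eq_mul, mul_zero, zero_add, Real.exp_zero, mul_one] at hc
            have e1 : 1 / (N:ℝ) * H X = H X / N := by ring
            have e2 : 1 / (N:ℝ) * Real.exp (H X) = Real.exp (H X) / N := by ring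
            have : (0:ℝ) < 1 / N := by positivity
            rw [e1, e2] at hc; linarith
        _ = ENNReal.ofReal (1 + M / N) := by
            rw [← ofReal_integral_eq_lintegral_ofReal]
            · congr 1
              rw [integral_add (integrable_const _) (hHint.div_const _), integral_div, ← hM]
              simp
            · exact (integrable_const _).add (hHint.div_const _)
            · exact Filter.Eventually.of_forall fun X => by positivity
    have hdecomp : ∀ q, penSup v 2 q.2 - penSup v 0 q.1
        = ∑ k ∈ Finset.range N, (1 / (N:ℝ)) • T k (R ((k + 1) * δ) q) := by
      intro q
      have h1 : ∀ k : ℕ, (1 / (N:ℝ)) • T k (R ((k + 1) * δ) q)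
          = penSup v (2 * (k + 1 : ℕ) / N) (R ((k + 1 : ℕ) * δ) q).1
            - penSup v (2 * k / N) (R (k * δ) q).1 := by
        intro k
        have e1 : Real.cos δ • (R ((k + 1) * δ) q).1 - Real.sin δ • (R ((k + 1) * δ) q).2
            = (R (k * δ) q).1 := by
          have ek : (k:ℝ) * δ = (k + 1) * δ - δ := by ring
          simp only [hR]
          rw [ek, Real.cos_sub, Real.sin_sub]
          ext i; simp; ring
        simp only [hT, e1, smul_eq_mul]
        push_cast
        have e2 : 2 * (k:ℝ) / N + 2 / N = 2 * (k + 1) / N := by ring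
        rw [e2]
        field_simp
      rw [Finset.sum_congr rfl fun k _ => h1 k,
        Finset.sum_range_sub (fun k : ℕ => penSup v (2 * k / N) (R (k * δ) q).1)]
      have e1 : (N:ℝ) * δ = Real.pi / 2 := by rw [hδ]; field_simp
      have e2 : 2 * (N:ℝ) / N = 2 := by field_simp
      simp [hR, e1, e2]
    calc _ ≤ ∫⁻ q, ∑ k ∈ Finset.range N, ENNReal.ofReal (1 / N) *
            ENNReal.ofReal (Real.exp (T k (R ((k + 1) * δ) q))) ∂(μ.prod μ) := by
          refine lintegral_mono fun q => ?_
          simp only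
          rw [hdecomp q]
          simp_rw [← ENNReal.ofReal_mul (show (0:ℝ) ≤ 1 / N by positivity)]
          rw [← ENNReal.ofReal_sum_of_nonneg (fun k _ => by positivity)]
          refine ENNReal.ofReal_le_ofReal ?_
          exact convexOn_exp.map_sum_le (fun _ _ => by positivity)
            (by simp; field_simp) (fun _ _ => Set.mem_univ _)
      _ = ∑ k ∈ Finset.range N, ENNReal.ofReal (1 / N) *
            ∫⁻ q, ENNReal.ofReal (Real.exp (T k q)) ∂(μ.prod μ) := by
          have hmR : ∀ θ, MeasurePreserving (R θ) (μ.prod μ) (μ.prod μ) := fun θ => std_rotation ι θ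
          have hm : ∀ k, Measurable fun q => ENNReal.ofReal (Real.exp (T k q)) := fun k => by
            have := hTm k; fun_prop
          have hm' : ∀ k : ℕ, Measurable fun q =>
              ENNReal.ofReal (Real.exp (T k (R ((k + 1) * δ) q))) :=
            fun k => (hm k).comp (hmR ((k + 1) * δ)).measurable
          rw [lintegral_finsetSum _ fun k _ => (hm' k).const_mul _]
          refine Finset.sum_congr rfl fun k _ => ?_
          rw [lintegral_const_mul _ (hm' k), (hmR ((k + 1) * δ)).lintegral_comp (hm k)]
      _ ≤ ∑ k ∈ Finset.range N, ENNReal.ofReal (1 / N) * ENNReal.ofReal (1 + M / N) :=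
          Finset.sum_le_sum fun k _ => by gcongr; exact hterm k
      _ = ENNReal.ofReal (1 + M / N) := by
          rw [← ENNReal.ofReal_mul (by positivity), Finset.sum_const, Finset.card_range,
            nsmul_eq_mul, ← ENNReal.ofReal_natCast, ← ENNReal.ofReal_mul (by positivity)]
          congr 1; field_simp
  refine ge_of_tendsto (x := Filter.atTop) (f := fun N : ℕ => ENNReal.ofReal (1 + M / N)) ?_
    (Filter.eventually_gt_atTop 0 |>.mono key)
  have h1 : Filter.Tendsto (fun N : ℕ => 1 + M / N) Filter.atTop (nhds (1 + 0)) :=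
    tendsto_const_nhds.add (tendsto_const_div_atTop_nhds_zero_nat M)
  simpa using ENNReal.tendsto_ofReal h1

lemma pen_integrable [Nonempty Ψ] (hv : ∀ ψ i, |v ψ i| ≤ K) {c : ℝ} (hc : 0 ≤ c)
    {ψ₀ : Ψ} (h0 : v ψ₀ = 0) : Integrable (penSup v c) (_root_.stdGaussian ι) := by
  refine (std_integrable_exp_abs ι K).mono' (pen_measurable hv hc).aestronglyMeasurable
    (Filter.Eventually.of_forall fun x => ?_)
  rw [Real.norm_eq_abs, abs_of_nonneg (pen_nonneg hv hc x h0)]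
  linarith [pen_le hv hc x, Real.add_one_le_exp (∑ i, K * |x i|)]

/-- Exponential moment of a supremum penalised by twice the variance: it is at most the
exponential of the mean of the unpenalised supremum. The point `ψ₀` with `v ψ₀ = 0` makes both
suprema nonnegative. -/
lemma pen_exp_le [Nonempty Ψ] (hv : ∀ ψ i, |v ψ i| ≤ K) (hK : 0 ≤ K) {ψ₀ : Ψ} (h0 : v ψ₀ = 0) :
    ∫⁻ x, ENNReal.ofReal (Real.exp (penSup v 2 x)) ∂(_root_.stdGaussian ι)
      ≤ ENNReal.ofReal (Real.exp (∫ x, penSup v 0 x ∂(_root_.stdGaussian ι))) := by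
  set μ := _root_.stdGaussian ι with hμ
  set m := ∫ x, penSup v 0 x ∂μ with hm
  have m2 := pen_measurable hv (c := 2) (by norm_num)
  have m0 := pen_measurable hv (c := 0) le_rfl
  have h1 := pen_two_copies hv hK
  simp_rw [sub_eq_neg_add, Real.exp_add, ENNReal.ofReal_mul (Real.exp_pos _).le] at h1
  rw [lintegral_prod_mul (f := fun x => ENNReal.ofReal (Real.exp (-penSup v 0 x)))
    (g := fun x => ENNReal.ofReal (Real.exp (penSup v 2 x))) (by fun_prop) (by fun_prop)] at h1
  have hInt := pen_integrable hv (c := 0) le_rfl h0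
  have hint2 : Integrable (fun x => Real.exp (-penSup v 0 x)) μ := by
    refine Integrable.mono' (integrable_const 1) (by fun_prop)
      (Filter.Eventually.of_forall fun x => ?_)
    rw [Real.norm_eq_abs, abs_of_pos (Real.exp_pos _), Real.exp_le_one_iff]
    linarith [pen_nonneg hv le_rfl x h0]
  have hJ : Real.exp (-m) ≤ ∫ x, Real.exp (-penSup v 0 x) ∂μ := by
    have := convexOn_exp.map_integral_le (μ := μ) (f := fun x => -penSup v 0 x)
      Real.continuous_exp.continuousOn isClosed_univ (by simp) hInt.neg hint2
    rwa [integral_neg] at this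
  have hJ' : ENNReal.ofReal (Real.exp (-m)) ≤
      ∫⁻ x, ENNReal.ofReal (Real.exp (-penSup v 0 x)) ∂μ := by
    rw [← ofReal_integral_eq_lintegral_ofReal hint2
      (Filter.Eventually.of_forall fun _ => (Real.exp_pos _).le)]
    exact ENNReal.ofReal_le_ofReal hJ
  have h2 := (mul_le_mul_left hJ' _).trans h1
  calc _ = ENNReal.ofReal (Real.exp m) * (ENNReal.ofReal (Real.exp (-m)) *
          ∫⁻ x, ENNReal.ofReal (Real.exp (penSup v 2 x)) ∂μ) := by
        rw [← mul_assoc, ← ENNReal.ofReal_mul (Real.exp_pos _).le, ← Real.exp_add]; simp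
    _ ≤ ENNReal.ofReal (Real.exp m) * 1 := by gcongr
    _ = _ := mul_one _

end penSup

/-! ### The linear process and its penalised supremum over the dual ball -/

/-- The process of interest: the slot `k₀` of the array is filled with `g`, the slot `k ≠ k₀`
with `y k`. -/
noncomputable def slice {d n : ℕ} {E : Type*} [NormedAddCommGroup E] [NormedSpace ℝ E]
    (A : (Fin d → Fin n) → E) (k₀ : Fin d) (g : Fin n → ℝ) (y : Fin d → Fin n → ℝ) : E :=
  ∑ i, (g (i k₀) * ∏ k ∈ Finset.univ.erase k₀, y k (i k)) • A i

/-- The coefficient vector of the linear form `g ↦ lam * ψ (slice A k₀ g y)`, for `ψ` in the dual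
unit ball. -/
noncomputable def sliceVec {d n : ℕ} {E : Type*} [NormedAddCommGroup E] [NormedSpace ℝ E]
    (A : (Fin d → Fin n) → E) (k₀ : Fin d) (lam : ℝ) (y : Fin d → Fin n → ℝ)
    (ψ : {ψ : StrongDual ℝ E // ‖ψ‖ ≤ 1}) (j : Fin n) : ℝ :=
  lam * ψ.1 (slice A k₀ (Pi.single j 1) y)

section slice

variable {d n : ℕ} {E : Type*} [NormedAddCommGroup E] [NormedSpace ℝ E]
  {A : (Fin d → Fin n) → E} {k₀ : Fin d}

lemma slice_continuous :
    Continuous fun q : (Fin n → ℝ) × (Fin d → Fin n → ℝ) => slice A k₀ q.1 q.2 := by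
  unfold slice; fun_prop

lemma slice_congr {g : Fin n → ℝ} {y y' : Fin d → Fin n → ℝ} (h : ∀ k, k ≠ k₀ → y k = y' k) :
    slice A k₀ g y = slice A k₀ g y' := by
  unfold slice
  refine Finset.sum_congr rfl fun i _ => ?_
  rw [Finset.prod_congr rfl fun k hk => by rw [h k (Finset.ne_of_mem_erase hk)]]

lemma slice_eq_sum (g : Fin n → ℝ) (y : Fin d → Fin n → ℝ) :
    slice A k₀ g y = ∑ j, g j • slice A k₀ (Pi.single j 1) y := by
  unfold slice
  simp_rw [Finset.smul_sum]
  rw [Finset.sum_comm]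
  refine Finset.sum_congr rfl fun i _ => ?_
  rw [Finset.sum_eq_single (i k₀)]
  · simp [smul_smul]
  · intro j _ hj
    rw [Pi.single_eq_of_ne hj.symm]; simp
  · simp

lemma sum_sliceVec (lam : ℝ) (g : Fin n → ℝ) (y : Fin d → Fin n → ℝ)
    (ψ : {ψ : StrongDual ℝ E // ‖ψ‖ ≤ 1}) :
    ∑ j, g j * sliceVec A k₀ lam y ψ j = lam * ψ.1 (slice A k₀ g y) := by
  rw [slice_eq_sum g y, map_sum, Finset.mul_sum]
  refine Finset.sum_congr rfl fun j _ => ?_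
  rw [sliceVec, map_smul, smul_eq_mul]; ring

/-- A bound for the entries of `sliceVec`, uniform in the functional. -/
noncomputable def sliceBound (A : (Fin d → Fin n) → E) (k₀ : Fin d) (lam : ℝ)
    (y : Fin d → Fin n → ℝ) : ℝ :=
  |lam| * ∑ j, ‖slice A k₀ (Pi.single j 1) y‖

lemma sliceBound_nonneg (lam : ℝ) (y : Fin d → Fin n → ℝ) : 0 ≤ sliceBound A k₀ lam y := by
  unfold sliceBound; positivity

lemma sliceVec_le (lam : ℝ) (y : Fin d → Fin n → ℝ) (ψ : {ψ : StrongDual ℝ E // ‖ψ‖ ≤ 1})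
    (j : Fin n) : |sliceVec A k₀ lam y ψ j| ≤ sliceBound A k₀ lam y := by
  unfold sliceVec sliceBound
  rw [abs_mul]
  gcongr
  calc |ψ.1 (slice A k₀ (Pi.single j 1) y)| ≤ ‖ψ.1‖ * ‖slice A k₀ (Pi.single j 1) y‖ :=
        ψ.1.le_opNorm _
    _ ≤ 1 * ‖slice A k₀ (Pi.single j 1) y‖ := by gcongr; exact ψ.2
    _ ≤ _ := by
      rw [one_mul]
      exact Finset.single_le_sum (f := fun j => ‖slice A k₀ (Pi.single j 1) y‖)
        (fun _ _ => norm_nonneg _) (Finset.mem_univ j)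

instance dualBallNonempty : Nonempty {ψ : StrongDual ℝ E // ‖ψ‖ ≤ 1} := ⟨⟨0, by simp⟩⟩

lemma sliceVec_zero (lam : ℝ) (y : Fin d → Fin n → ℝ) :
    sliceVec A k₀ lam y ⟨0, by simp⟩ = 0 := by
  ext j; simp [sliceVec]

/-- Without penalty, the supremum over the dual ball is the norm (Hahn–Banach). -/
lemma slice_pen_zero {lam : ℝ} (hl : 0 ≤ lam) (g : Fin n → ℝ) (y : Fin d → Fin n → ℝ) :
    penSup (sliceVec A k₀ lam y) 0 g = lam * ‖slice A k₀ g y‖ := by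
  unfold penSup
  simp only [sum_sliceVec, zero_mul, sub_zero]
  refine le_antisymm (ciSup_le fun ψ => ?_) ?_
  · gcongr
    calc ψ.1 (slice A k₀ g y) ≤ ‖ψ.1 (slice A k₀ g y)‖ := le_abs_self _
      _ ≤ ‖ψ.1‖ * ‖slice A k₀ g y‖ := ψ.1.le_opNorm _
      _ ≤ 1 * ‖slice A k₀ g y‖ := by gcongr; exact ψ.2
      _ = _ := one_mul _
  · obtain ⟨φ, hφ, hφ'⟩ := exists_dual_vector'' ℝ (slice A k₀ g y)
    have hb : BddAbove (Set.range fun ψ : {ψ : StrongDual ℝ E // ‖ψ‖ ≤ 1} =>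
        lam * ψ.1 (slice A k₀ g y)) := by
      have := pen_bdd (sliceVec_le (A := A) (k₀ := k₀) lam y) le_rfl (c := 0) g
      simpa only [sum_sliceVec, zero_mul, sub_zero] using this
    have := le_ciSup hb ⟨φ, hφ⟩
    simpa [hφ'] using this

lemma slice_pen_measurable (lam : ℝ) :
    Measurable fun q : (Fin n → ℝ) × (Fin d → Fin n → ℝ) =>
      penSup (sliceVec A k₀ lam q.2) 2 q.1 := by
  unfold penSup
  refine LowerSemicontinuous.measurable (lowerSemicontinuous_ciSup (fun q =>
    pen_bdd (sliceVec_le lam q.2) (by norm_num) q.1) fun ψ => Continuous.lowerSemicontinuous ?_)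
  have hc : ∀ j, Continuous fun q : (Fin n → ℝ) × (Fin d → Fin n → ℝ) =>
      sliceVec A k₀ lam q.2 ψ j := fun j => by
    unfold sliceVec
    have := slice_continuous (A := A) (k₀ := k₀)
    have h2 : Continuous fun q : (Fin n → ℝ) × (Fin d → Fin n → ℝ) =>
        slice A k₀ (Pi.single j 1) q.2 :=
      this.comp (f := fun q : (Fin n → ℝ) × (Fin d → Fin n → ℝ) =>
        ((Pi.single j 1 : Fin n → ℝ), q.2)) (by fun_prop)
    fun_prop
  fun_prop

/-- The mean of `‖slice A k₀ g y‖` over a standard Gaussian `g`. -/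
noncomputable def sliceMean (A : (Fin d → Fin n) → E) (k₀ : Fin d) (y : Fin d → Fin n → ℝ) : ℝ :=
  ∫ g, ‖slice A k₀ g y‖ ∂(_root_.stdGaussian (Fin n))

lemma sliceMean_measurable : Measurable (sliceMean A k₀) := by
  have h : StronglyMeasurable fun q : (Fin d → Fin n → ℝ) × (Fin n → ℝ) =>
      ‖slice A k₀ q.2 q.1‖ :=
    ((slice_continuous (A := A) (k₀ := k₀)).norm.comp continuous_swap).stronglyMeasurable
  exact (StronglyMeasurable.integral_prod_right (ν := _root_.stdGaussian (Fin n)) h).measurable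

/-- `pen_exp_le` for the process `slice A k₀ · y` with `y` fixed: after subtracting its mean norm,
the penalised supremum over the dual ball has exponential moment at most `1`. -/
lemma slice_exp_le {lam : ℝ} (hl : 0 ≤ lam) (y : Fin d → Fin n → ℝ) :
    ∫⁻ g, ENNReal.ofReal (Real.exp (penSup (sliceVec A k₀ lam y) 2 g - lam * sliceMean A k₀ y))
      ∂(_root_.stdGaussian (Fin n)) ≤ 1 := by
  have h := pen_exp_le (sliceVec_le (A := A) (k₀ := k₀) lam y) (sliceBound_nonneg lam y)
    (sliceVec_zero lam y)
  simp_rw [slice_pen_zero hl] at h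
  rw [integral_const_mul] at h
  have hm := pen_measurable (sliceVec_le (A := A) (k₀ := k₀) lam y) (c := 2) (by norm_num)
  simp_rw [sub_eq_neg_add, Real.exp_add, ENNReal.ofReal_mul (Real.exp_pos _).le]
  rw [lintegral_const_mul _ (by fun_prop)]
  refine (mul_le_mul_right h _).trans ?_
  rw [← ENNReal.ofReal_mul (Real.exp_pos _).le, ← Real.exp_add, sliceMean]
  simp

end slice

section moments

variable {d n : ℕ}

/-- Products of functions of distinct slots factor under `gFam`. -/
lemma fam_prod (S : Finset (Fin d)) (f : Fin d → (Fin n → ℝ) → ℝ)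
    (hf : ∀ k ∈ S, Integrable (f k) (_root_.stdGaussian (Fin n))) :
    Integrable (fun G => ∏ k ∈ S, f k (G k)) (gFam d n) ∧
    ∫ G, ∏ k ∈ S, f k (G k) ∂(gFam d n)
      = ∏ k ∈ S, ∫ y, f k y ∂(_root_.stdGaussian (Fin n)) := by
  set f' : Fin d → (Fin n → ℝ) → ℝ := fun k y => if k ∈ S then f k y else 1 with hf'
  have h1 : ∀ G : Fin d → Fin n → ℝ, ∏ k ∈ S, f k (G k) = ∏ k, f' k (G k) := fun G => by
    simp [hf', Finset.prod_ite_mem]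
  have h2 : ∏ k ∈ S, ∫ y, f k y ∂(_root_.stdGaussian (Fin n))
      = ∏ k, ∫ y, f' k y ∂(_root_.stdGaussian (Fin n)) := by
    rw [← Finset.prod_subset (Finset.subset_univ S)]
    · exact Finset.prod_congr rfl fun k hk => by simp [hf', hk]
    · intro k _ hk; simp [hf', hk]
  have h3 : ∀ k, Integrable (f' k) (_root_.stdGaussian (Fin n)) := fun k => by
    by_cases hk : k ∈ S
    · simpa [hf', hk] using hf k hk
    · simp [hf', hk]
  simp_rw [h1, h2]
  exact ⟨Integrable.fintype_prod_dep h3, integral_fintype_prod_eq_prod (𝕜 := ℝ) f'⟩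

lemma std_eval (j : Fin n) :
    MeasurePreserving (fun y : Fin n → ℝ => y j) (_root_.stdGaussian (Fin n)) (gaussianReal 0 1) :=
  measurePreserving_eval (fun _ => gaussianReal 0 1) j

lemma std_memLp (j : Fin n) : MemLp (fun y : Fin n → ℝ => y j) 2 (_root_.stdGaussian (Fin n)) :=
  (memLp_id_gaussianReal (μ := 0) (v := 1) 2).comp_measurePreserving (std_eval j)

lemma std_integrable_coord (j : Fin n) :
    Integrable (fun y : Fin n → ℝ => y j) (_root_.stdGaussian (Fin n)) :=
  (std_memLp j).integrable (by norm_num)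

lemma std_mean (j : Fin n) : ∫ y : Fin n → ℝ, y j ∂(_root_.stdGaussian (Fin n)) = 0 := by
  have h := integral_map (std_eval j).aemeasurable (f := fun t : ℝ => t)
    (by fun_prop : AEStronglyMeasurable (fun t : ℝ => t) _)
  rw [(std_eval j).map_eq] at h
  rw [← h, integral_id_gaussianReal]

lemma std_cov (j j' : Fin n) :
    ∫ y : Fin n → ℝ, y j * y j' ∂(_root_.stdGaussian (Fin n)) = if j = j' then 1 else 0 := by
  split_ifs with h
  · subst h
    have h := integral_map (std_eval j).aemeasurable (f := fun t : ℝ => t * t)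
      (by fun_prop : AEStronglyMeasurable (fun t : ℝ => t * t) _)
    rw [(std_eval j).map_eq] at h
    rw [← h]
    have h1 := variance_id_gaussianReal (μ := 0) (v := 1)
    rw [variance_of_integral_eq_zero (by fun_prop) (by simp)] at h1
    simpa [sq] using h1
  · have hi : iIndepFun (fun (j : Fin n) (y : Fin n → ℝ) => y j) (_root_.stdGaussian (Fin n)) :=
      iIndepFun_pi (μ := fun _ => gaussianReal 0 1) (X := fun _ t => t) (fun _ => by fun_prop)
    have := (hi.indepFun h).integral_fun_mul_eq_mul_integral
      (std_memLp j).1 (std_memLp j').1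
    rw [this, std_mean, std_mean, zero_mul]

lemma std_affine (a s : ℝ) (j : Fin n) :
    Integrable (fun y : Fin n → ℝ => a + s * y j) (_root_.stdGaussian (Fin n)) ∧
    ∫ y : Fin n → ℝ, (a + s * y j) ∂(_root_.stdGaussian (Fin n)) = a := by
  have h := (std_integrable_coord j).const_mul s
  refine ⟨(integrable_const a).add h, ?_⟩
  rw [integral_add (integrable_const a) h, integral_const_mul, std_mean]; simp

lemma std_affine_mul (a b s : ℝ) (j j' : Fin n) :
    Integrable (fun y : Fin n → ℝ => (a + s * y j) * (b + s * y j')) (_root_.stdGaussian (Fin n)) ∧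
    ∫ y : Fin n → ℝ, (a + s * y j) * (b + s * y j') ∂(_root_.stdGaussian (Fin n))
      = a * b + if j = j' then s ^ 2 else 0 := by
  have h1 := (std_integrable_coord j).const_mul (b * s)
  have h2 := (std_integrable_coord j').const_mul (a * s)
  have h3 : Integrable (fun y : Fin n → ℝ => s ^ 2 * (y j * y j')) (_root_.stdGaussian (Fin n)) :=
    ((std_memLp j).integrable_mul (std_memLp j')).const_mul _
  have e : ∀ y : Fin n → ℝ, (a + s * y j) * (b + s * y j')
      = a * b + b * s * y j + a * s * y j' + s ^ 2 * (y j * y j') := fun y => by ring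
  simp_rw [e]
  have i1 : Integrable (fun y : Fin n → ℝ => a * b + b * s * y j) (_root_.stdGaussian (Fin n)) :=
    (integrable_const _).add h1
  have i2 : Integrable (fun y : Fin n → ℝ => a * b + b * s * y j + a * s * y j')
      (_root_.stdGaussian (Fin n)) := i1.add h2
  refine ⟨i2.add h3, ?_⟩
  rw [integral_add i2 h3, integral_add i1 h2, integral_add (integrable_const _) h1,
    integral_const, integral_const_mul, integral_const_mul, integral_const_mul, std_mean, std_mean,
    std_cov]
  simp

end moments

/-! ### Smoothing and the Gibbs variational inequality -/

section main

variable {d n : ℕ} {E : Type*} [NormedAddCommGroup E] [NormedSpace ℝ E]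
  {A : (Fin d → Fin n) → E} {k₀ : Fin d}

/-- Resampling the `k₀`-th vector of the family does not change its law. -/
lemma fam_update (k₀ : Fin d) :
    MeasurePreserving (fun q : (Fin n → ℝ) × (Fin d → Fin n → ℝ) => Function.update q.2 k₀ q.1)
      ((_root_.stdGaussian (Fin n)).prod (gFam d n)) (gFam d n) := by
  have hm : Measurable
      (fun q : (Fin n → ℝ) × (Fin d → Fin n → ℝ) => Function.update q.2 k₀ q.1) := by
    refine measurable_pi_lambda _ fun k => ?_
    by_cases hk : k = k₀
    · subst hk; simpa using measurable_fst
    · simp only [Function.update_of_ne hk]; fun_prop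
  refine ⟨hm, ?_⟩
  refine (Measure.pi_eq fun s hs => ?_).symm
  rw [Measure.map_apply hm (MeasurableSet.univ_pi hs)]
  have : (fun q : (Fin n → ℝ) × (Fin d → Fin n → ℝ) => Function.update q.2 k₀ q.1) ⁻¹'
      (Set.univ.pi s) = s k₀ ×ˢ (Set.univ.pi (Function.update s k₀ Set.univ)) := by
    ext q
    simp only [Set.mem_preimage, Set.mem_pi, Set.mem_univ, true_imp_iff, Set.mem_prod]
    constructor
    · intro h
      refine ⟨by simpa using h k₀, fun k => ?_⟩
      by_cases hk : k = k₀
      · subst hk; simp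
      · simpa [hk] using h k
    · rintro ⟨h1, h2⟩ k
      by_cases hk : k = k₀
      · subst hk; simpa using h1
      · simpa [hk] using h2 k
  rw [this, Measure.prod_prod, gFam, Measure.pi_pi,
    ← Finset.mul_prod_erase Finset.univ _ (Finset.mem_univ k₀),
    ← Finset.mul_prod_erase Finset.univ (fun i => (_root_.stdGaussian (Fin n)) (s i))
      (Finset.mem_univ k₀)]
  simp only [Function.update_self, measure_univ, one_mul]
  congr 1
  refine Finset.prod_congr rfl fun k hk => ?_
  rw [Function.update_of_ne (Finset.ne_of_mem_erase hk)]

lemma integrable_prod_affine (x : Fin d → Fin n → ℝ) (s : ℝ) (S : Finset (Fin d))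
    (i : Fin d → Fin n) :
    Integrable (fun G : Fin d → Fin n → ℝ => ∏ k ∈ S, (x + s • G) k (i k)) (gFam d n) ∧
    ∫ G, ∏ k ∈ S, (x + s • G) k (i k) ∂(gFam d n) = ∏ k ∈ S, x k (i k) := by
  have := fam_prod S (fun k y => x k (i k) + s * y (i k)) (fun k _ => (std_affine _ _ _).1)
  simp only [(std_affine _ _ _).2] at this
  exact this

/-- Since `slice` is affine in each slot `k ≠ k₀`, centred smoothing does not change its mean. -/
lemma slice_mean (x : Fin d → Fin n → ℝ) (s : ℝ) (g : Fin n → ℝ) (φ : StrongDual ℝ E) :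
    Integrable (fun G => φ (slice A k₀ g (x + s • G))) (gFam d n) ∧
    ∫ G, φ (slice A k₀ g (x + s • G)) ∂(gFam d n) = φ (slice A k₀ g x) := by
  have e : ∀ y, φ (slice A k₀ g y)
      = ∑ i, (g (i k₀) * φ (A i)) * ∏ k ∈ Finset.univ.erase k₀, y k (i k) := fun y => by
    rw [slice, map_sum]
    refine Finset.sum_congr rfl fun i _ => ?_
    rw [map_smul, smul_eq_mul]; ring
  have h := fun i => integrable_prod_affine x s (Finset.univ.erase k₀) i
  have hI := fun i => (h i).1.const_mul (g (i k₀) * φ (A i))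
  simp_rw [e]
  refine ⟨integrable_finsetSum _ fun i _ => hI i, ?_⟩
  rw [integral_finsetSum _ fun i _ => hI i]
  refine Finset.sum_congr rfl fun i _ => ?_
  rw [integral_const_mul, (h i).2]

lemma slice_sq_integrable (x : Fin d → Fin n → ℝ) (s : ℝ) (g : Fin n → ℝ) (φ : StrongDual ℝ E) :
    Integrable (fun G => φ (slice A k₀ g (x + s • G)) ^ 2) (gFam d n) := by
  have e : ∀ y : Fin d → Fin n → ℝ, φ (slice A k₀ g y) ^ 2
      = ∑ i, ∑ i', ((g (i k₀) * φ (A i)) * (g (i' k₀) * φ (A i'))) *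
        ∏ k ∈ Finset.univ.erase k₀, (y k (i k) * y k (i' k)) := fun y => by
    rw [slice, map_sum, sq, Finset.sum_mul_sum]
    refine Finset.sum_congr rfl fun i _ => Finset.sum_congr rfl fun i' _ => ?_
    rw [map_smul, smul_eq_mul, map_smul, smul_eq_mul, Finset.prod_mul_distrib]; ring
  simp_rw [e]
  refine integrable_finsetSum _ fun i _ => integrable_finsetSum _ fun i' _ => ?_
  exact (fam_prod (Finset.univ.erase k₀)
    (fun k y => (x k (i k) + s * y (i k)) * (x k (i' k) + s * y (i' k)))
    (fun k _ => (std_affine_mul _ _ _ _ _).1)).1.const_mul _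

lemma slice_full_integrable (x : Fin d → Fin n → ℝ) (s : ℝ) :
    Integrable (fun U => ‖slice A k₀ (U k₀) (x + s • U)‖) (gFam d n) := by
  have hc : Continuous fun U : Fin d → Fin n → ℝ => ‖slice A k₀ (U k₀) (x + s • U)‖ :=
    (slice_continuous (A := A) (k₀ := k₀)).norm.comp
      (f := fun U : Fin d → Fin n → ℝ => (U k₀, x + s • U)) (by fun_prop)
  have hI : ∀ i : Fin d → Fin n, Integrable
      (fun U : Fin d → Fin n → ℝ => |U k₀ (i k₀) * ∏ k ∈ Finset.univ.erase k₀,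
        (x + s • U) k (i k)| * ‖A i‖) (gFam d n) := fun i => by
    refine Integrable.mul_const (Integrable.abs ?_) _
    have := (fam_prod Finset.univ (fun k y => if k = k₀ then (0 + 1 * y (i k)) else
      (x k (i k) + s * y (i k))) (fun k _ => by
        split_ifs
        · exact (std_affine _ _ _).1
        · exact (std_affine _ _ _).1)).1
    refine this.congr (Filter.Eventually.of_forall fun U => ?_)
    simp only
    rw [← Finset.mul_prod_erase Finset.univ _ (Finset.mem_univ k₀)]
    simp only [if_true, zero_add, one_mul]
    congr 1
    exact Finset.prod_congr rfl fun k hk => by simp [Finset.ne_of_mem_erase hk]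
  refine (integrable_finsetSum Finset.univ fun i _ => hI i).mono' hc.aestronglyMeasurable
    (Filter.Eventually.of_forall fun U => ?_)
  rw [norm_norm]
  refine (norm_sum_le _ _).trans (Finset.sum_le_sum fun i _ => ?_)
  rw [norm_smul, Real.norm_eq_abs]

/-- At a smoothed point the Gaussian `g` of `sliceMean` can be taken to be the unused `k₀`-th
smoothing vector. -/
lemma sliceMean_shift (x : Fin d → Fin n → ℝ) (s : ℝ) :
    Integrable (fun G => sliceMean A k₀ (x + s • G)) (gFam d n) ∧
    ∫ G, sliceMean A k₀ (x + s • G) ∂(gFam d n)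
      = ∫ U, ‖slice A k₀ (U k₀) (x + s • U)‖ ∂(gFam d n) := by
  have hmp := fam_update (n := n) k₀
  have hfull := slice_full_integrable (A := A) (k₀ := k₀) x s
  have e : ∀ q : (Fin n → ℝ) × (Fin d → Fin n → ℝ),
      ‖slice A k₀ ((Function.update q.2 k₀ q.1) k₀) (x + s • Function.update q.2 k₀ q.1)‖
        = ‖slice A k₀ q.1 (x + s • q.2)‖ := fun q => by
    rw [Function.update_self]
    congr 1
    refine slice_congr fun k hk => ?_
    simp [Function.update_of_ne hk]
  have h1 : Integrable (fun q : (Fin n → ℝ) × (Fin d → Fin n → ℝ) =>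
      ‖slice A k₀ q.1 (x + s • q.2)‖) ((_root_.stdGaussian (Fin n)).prod (gFam d n)) := by
    have := hmp.integrable_comp_of_integrable hfull
    exact this.congr (Filter.Eventually.of_forall fun q => e q)
  refine ⟨h1.integral_prod_right, ?_⟩
  have h2 := integral_map hmp.aemeasurable (f := fun U => ‖slice A k₀ (U k₀) (x + s • U)‖)
    (by rw [hmp.map_eq]; exact hfull.1)
  rw [hmp.map_eq] at h2
  simp only [e] at h2
  rw [h2, integral_prod_symm _ h1]
  rfl

/-- The Gibbs variational inequality, for the Gaussian law translated by `x`: whenever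
`exp ∘ h` has finite mean under the centred law of `s • G`, the mean of any minorant of `h`
under the law of `x + s • G` is controlled, at a cost of the relative entropy `|x|² / (2 s²)`. -/
lemma gibbs (h : (Fin d → Fin n → ℝ) → ℝ) (hm : Measurable h) {s : ℝ} (hs : 0 < s)
    (x : Fin d → Fin n → ℝ) (f : (Fin d → Fin n → ℝ) → ℝ)
    (hf : Integrable (fun G => f (x + s • G)) (gFam d n)) (hfh : ∀ y, f y ≤ h y)
    (hW : ∫⁻ G, ENNReal.ofReal (Real.exp (h (s • G))) ∂(gFam d n) ≠ ⊤) :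
    ∫ G, f (x + s • G) ∂(gFam d n) ≤ (∑ k, ∑ j, x k j ^ 2) / (2 * s ^ 2) +
      (∫⁻ G, ENNReal.ofReal (Real.exp (h (s • G))) ∂(gFam d n)).toReal - 1 := by
  set c : Fin d → Fin n → ℝ := s⁻¹ • x with hc
  set lρ : (Fin d → Fin n → ℝ) → ℝ := fun y => ∑ k, ∑ j, (-(c k j * y k j) - c k j ^ 2 / 2) with hlρ
  have hsc : ∀ y, s • (c + y) = x + s • y := fun y => by
    rw [smul_add, hc, smul_smul, mul_inv_cancel₀ hs.ne', one_smul]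
  have hlm : Measurable lρ := by fun_prop
  have e1 : ∫⁻ G, ENNReal.ofReal (Real.exp (h (s • G))) ∂(gFam d n)
      = ∫⁻ G, ENNReal.ofReal (Real.exp (lρ G + h (x + s • G))) ∂(gFam d n) := by
    conv_lhs => rw [← fam_shift d n c]
    rw [lintegral_map (by fun_prop) (by fun_prop), lintegral_withDensity_eq_lintegral_mul _
      (by fun_prop) (by fun_prop)]
    refine lintegral_congr fun y => ?_
    simp only [Pi.mul_apply]
    rw [hsc, ← ENNReal.ofReal_mul (Real.exp_pos _).le, ← Real.exp_add]
  rw [e1] at hW ⊢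
  have hInt : Integrable (fun G => Real.exp (lρ G + h (x + s • G))) (gFam d n) :=
    ⟨by fun_prop, (hasFiniteIntegral_iff_ofReal
      (Filter.Eventually.of_forall fun _ => (Real.exp_pos _).le)).2 (lt_top_iff_ne_top.2 hW)⟩
  rw [← ofReal_integral_eq_lintegral_ofReal hInt
    (Filter.Eventually.of_forall fun _ => (Real.exp_pos _).le), ENNReal.toReal_ofReal
    (integral_nonneg fun _ => (Real.exp_pos _).le)]
  have hcoord : ∀ k j, Integrable (fun G : Fin d → Fin n → ℝ => G k j) (gFam d n) ∧
      ∫ G : Fin d → Fin n → ℝ, G k j ∂(gFam d n) = 0 := fun k j => by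
    have := fam_prod (n := n) {k} (fun k y => y j) (fun k _ => std_integrable_coord j)
    simpa [std_mean] using this
  have hl1 : ∀ k j, Integrable (fun G : Fin d → Fin n → ℝ => -(c k j * G k j) - c k j ^ 2 / 2)
      (gFam d n) := fun k j => ((hcoord k j).1.const_mul _).neg.sub (integrable_const _)
  have hl2 : ∀ k, Integrable (fun G : Fin d → Fin n → ℝ => ∑ j, (-(c k j * G k j) - c k j ^ 2 / 2))
      (gFam d n) := fun k => integrable_finsetSum _ fun j _ => hl1 k j
  have hlint : Integrable lρ (gFam d n) := integrable_finsetSum _ fun k _ => hl2 k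
  have hlval : ∫ G, lρ G ∂(gFam d n) = -((∑ k, ∑ j, x k j ^ 2) / (2 * s ^ 2)) := by
    simp only [hlρ]
    rw [integral_finsetSum _ fun k _ => hl2 k, Finset.sum_div, ← Finset.sum_neg_distrib]
    refine Finset.sum_congr rfl fun k _ => ?_
    rw [integral_finsetSum _ fun j _ => hl1 k j, Finset.sum_div, ← Finset.sum_neg_distrib]
    refine Finset.sum_congr rfl fun j _ => ?_
    rw [integral_sub (f := fun G : Fin d → Fin n → ℝ => -(c k j * G k j))
      ((hcoord k j).1.const_mul _).neg (integrable_const _), integral_neg,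
      integral_const_mul, (hcoord k j).2]
    simp [hc]
    field_simp
  have hle : ∫ G, (lρ G + f (x + s • G) + 1) ∂(gFam d n)
      ≤ ∫ G, Real.exp (lρ G + h (x + s • G)) ∂(gFam d n) := by
    refine integral_mono ((hlint.add hf).add (integrable_const 1)) hInt fun G => ?_
    simp only
    linarith [Real.add_one_le_exp (lρ G + h (x + s • G)), hfh (x + s • G)]
  have e2 : ∫ G, (lρ G + f (x + s • G) + 1) ∂(gFam d n)
      = -((∑ k, ∑ j, x k j ^ 2) / (2 * s ^ 2)) + ∫ G, f (x + s • G) ∂(gFam d n) + 1 := by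
    rw [integral_add (f := fun G => lρ G + f (x + s • G)) (hlint.add hf) (integrable_const 1),
      integral_add hlint hf, hlval]
    simp
  rw [e2] at hle
  linarith

/-- The supremum over the directions `x` is bounded by the mean of the process at the smoothed
point `x + s • G`, by the weak variance there, and by the entropy of the smoothing. For each
realisation `g`, `gibbs` is applied to the penalised and centred process `h g`; its partition
function `W g` has mean at most `1` by `slice_exp_le` and Fubini, whatever the number of
directions. -/
lemma sup_le_smoothed (s lam a m : ℝ) (hs : 0 < s) (hl : 0 < lam)
    (ha : ∀ x : Fin d → Fin n → ℝ, (∀ k, ∑ j, x k j ^ 2 ≤ 1) →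
      ∫ U, ‖slice A k₀ (U k₀) (x + s • U)‖ ∂(gFam d n) ≤ a)
    (hm : ∀ x : Fin d → Fin n → ℝ, (∀ k, ∑ j, x k j ^ 2 ≤ 1) → ∀ φ : StrongDual ℝ E, ‖φ‖ ≤ 1 →
      ∑ j, ∫ G, φ (slice A k₀ (Pi.single j 1) (x + s • G)) ^ 2 ∂(gFam d n) ≤ m) :
    ∫ ω, sSup {r : ℝ | ∃ x : Fin d → Fin n → ℝ, (∀ k, k ≠ k₀ → ∑ j, x k j ^ 2 ≤ 1) ∧
        r = ‖slice A k₀ ω x‖} ∂(_root_.stdGaussian (Fin n))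
      ≤ a + 2 * lam * m + d / (2 * s ^ 2 * lam) := by
  set h : (Fin n → ℝ) → (Fin d → Fin n → ℝ) → ℝ := fun g y =>
    penSup (sliceVec A k₀ lam y) 2 g - lam * sliceMean A k₀ y with hh
  have hhm : Measurable fun q : (Fin n → ℝ) × (Fin d → Fin n → ℝ) => h q.1 q.2 :=
    (slice_pen_measurable lam).sub ((sliceMean_measurable.comp measurable_snd).const_mul lam)
  set W : (Fin n → ℝ) → ENNReal := fun g =>
    ∫⁻ G, ENNReal.ofReal (Real.exp (h g (s • G))) ∂(gFam d n) with hW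
  have hem : Measurable fun q : (Fin n → ℝ) × (Fin d → Fin n → ℝ) =>
      ENNReal.ofReal (Real.exp (h q.1 (s • q.2))) := by
    have : Measurable fun q : (Fin n → ℝ) × (Fin d → Fin n → ℝ) => h q.1 (s • q.2) :=
      hhm.comp (f := fun q : (Fin n → ℝ) × (Fin d → Fin n → ℝ) => (q.1, s • q.2)) (by fun_prop)
    fun_prop
  have hWm : Measurable W := hem.lintegral_prod_right'
  have hW1 : ∫⁻ g, W g ∂(_root_.stdGaussian (Fin n)) ≤ 1 := by
    simp only [hW]
    rw [lintegral_lintegral_swap hem.aemeasurable]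
    calc _ ≤ ∫⁻ _ : Fin d → Fin n → ℝ, 1 ∂(gFam d n) :=
          lintegral_mono fun G => slice_exp_le hl.le (s • G)
      _ = 1 := by simp
  have hWtop : ∫⁻ g, W g ∂(_root_.stdGaussian (Fin n)) ≠ ⊤ := ne_top_of_le_ne_top (by simp) hW1
  have hWint : Integrable (fun g => (W g).toReal) (_root_.stdGaussian (Fin n)) :=
    integrable_toReal_of_lintegral_ne_top hWm.aemeasurable hWtop
  have hWle : ∫ g, (W g).toReal ∂(_root_.stdGaussian (Fin n)) ≤ 1 := by
    rw [integral_toReal hWm.aemeasurable (ae_lt_top hWm hWtop)]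
    exact ENNReal.toReal_le_of_le_ofReal zero_le_one (by simpa using hW1)
  have hpt : ∀ g, W g ≠ ⊤ → ∀ x : Fin d → Fin n → ℝ, (∀ k, k ≠ k₀ → ∑ j, x k j ^ 2 ≤ 1) →
      lam * ‖slice A k₀ g x‖
        ≤ d / (2 * s ^ 2) + (W g).toReal - 1 + 2 * lam ^ 2 * m + lam * a := by
    intro g hg x hx
    -- The `k₀` coordinate of `x` is irrelevant; zero keeps its entropy cost down.
    set x' := Function.update x k₀ 0 with hx'
    have hsl : slice A k₀ g x = slice A k₀ g x' :=
      slice_congr fun k hk => by rw [hx', Function.update_of_ne hk]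
    have hxs : ∀ k, ∑ j, x' k j ^ 2 ≤ 1 := fun k => by
      by_cases hk : k = k₀
      · subst hk; simp [hx']
      · simpa [hx', hk] using hx k hk
    rw [hsl]
    obtain ⟨φ, hφ, hφ'⟩ := exists_dual_vector'' ℝ (slice A k₀ g x')
    set f : (Fin d → Fin n → ℝ) → ℝ := fun y => lam * φ (slice A k₀ g y)
      - 2 * lam ^ 2 * ∑ j, φ (slice A k₀ (Pi.single j 1) y) ^ 2 - lam * sliceMean A k₀ y with hf
    have hfh : ∀ y, f y ≤ h g y := fun y => by
      have := le_pen (sliceVec_le (A := A) (k₀ := k₀) lam y) (c := 2) (by norm_num) g ⟨φ, hφ⟩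
      rw [sum_sliceVec] at this
      simp only [hf, hh]
      have e : 2 * ∑ i, sliceVec A k₀ lam y ⟨φ, hφ⟩ i ^ 2
          = 2 * lam ^ 2 * ∑ j, φ (slice A k₀ (Pi.single j 1) y) ^ 2 := by
        rw [Finset.mul_sum, Finset.mul_sum]
        exact Finset.sum_congr rfl fun j _ => by rw [sliceVec]; ring
      rw [e] at this
      linarith
    have i1 := slice_mean (A := A) (k₀ := k₀) x' s g φ
    have i2 := fun j => slice_sq_integrable (A := A) (k₀ := k₀) x' s (Pi.single j 1) φ
    have i3 := sliceMean_shift (A := A) (k₀ := k₀) x' s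
    have i2' := integrable_finsetSum Finset.univ fun j _ => i2 j
    have j1 := i1.1.const_mul lam
    have j2 := i2'.const_mul (2 * lam ^ 2)
    have j3 := i3.1.const_mul lam
    have j12 : Integrable (fun G => lam * φ (slice A k₀ g (x' + s • G)) - 2 * lam ^ 2 *
        ∑ j, φ (slice A k₀ (Pi.single j 1) (x' + s • G)) ^ 2) (gFam d n) := j1.sub j2
    have hfint : Integrable (fun G => f (x' + s • G)) (gFam d n) := j12.sub j3
    have hfval : ∫ G, f (x' + s • G) ∂(gFam d n) = lam * ‖slice A k₀ g x'‖
        - 2 * lam ^ 2 * ∑ j, ∫ G, φ (slice A k₀ (Pi.single j 1) (x' + s • G)) ^ 2 ∂(gFam d n)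
        - lam * ∫ U, ‖slice A k₀ (U k₀) (x' + s • U)‖ ∂(gFam d n) := by
      simp only [hf]
      rw [integral_sub j12 j3, integral_sub j1 j2, integral_const_mul, integral_const_mul,
        integral_const_mul, integral_finsetSum _ fun j _ => i2 j, i1.2, i3.2, hφ']
      rfl
    have hhg : Measurable (h g) :=
      hhm.comp (f := fun y : Fin d → Fin n → ℝ => (g, y)) measurable_prodMk_left
    have hg' := gibbs (h g) hhg hs x' f hfint hfh hg
    rw [hfval] at hg'
    have b1 := mul_le_mul_of_nonneg_left (hm x' hxs φ hφ) (show 0 ≤ 2 * lam ^ 2 by positivity)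
    have b2 := mul_le_mul_of_nonneg_left (ha x' hxs) hl.le
    have b3 : (∑ k, ∑ j, x' k j ^ 2) / (2 * s ^ 2) ≤ d / (2 * s ^ 2) := by
      gcongr
      calc _ ≤ ∑ _k : Fin d, (1:ℝ) := Finset.sum_le_sum fun k _ => hxs k
        _ = d := by simp
    have b4 : (W g).toReal
      = (∫⁻ G, ENNReal.ofReal (Real.exp (h g (s • G))) ∂(gFam d n)).toReal := rfl
    linarith
  have hbound : ∀ᵐ g ∂(_root_.stdGaussian (Fin n)),
      sSup {r : ℝ | ∃ x : Fin d → Fin n → ℝ, (∀ k, k ≠ k₀ → ∑ j, x k j ^ 2 ≤ 1) ∧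
        r = ‖slice A k₀ g x‖}
      ≤ ((W g).toReal + (d / (2 * s ^ 2) - 1 + 2 * lam ^ 2 * m + lam * a)) / lam := by
    filter_upwards [ae_lt_top hWm hWtop] with g hg
    refine csSup_le ⟨_, 0, by simp, rfl⟩ ?_
    rintro r ⟨x, hx, rfl⟩
    rw [le_div_iff₀ hl]
    have := hpt g hg.ne x hx
    linarith
  refine (integral_mono_of_nonneg (Filter.Eventually.of_forall fun g => Real.sSup_nonneg ?_)
    ((hWint.add (integrable_const _)).div_const lam) hbound).trans ?_
  · rintro r ⟨x, hx, rfl⟩; exact norm_nonneg _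
  · simp only [Pi.add_apply]
    rw [integral_div, integral_add hWint (integrable_const _), div_le_iff₀ hl]
    simp only [integral_const, probReal_univ, smul_eq_mul, one_mul]
    have : (a + 2 * lam * m + d / (2 * s ^ 2 * lam)) * lam
        = lam * a + 2 * lam ^ 2 * m + d / (2 * s ^ 2) := by field_simp
    linarith

end main

/-! ### Expansion at a smoothed point into the chaos norms -/

section chaos

variable {d n : ℕ} {E : Type*} [NormedAddCommGroup E] [NormedSpace ℝ E]
  {A : (Fin d → Fin n) → E}

lemma std_precomp {ι κ : Type*} [Fintype ι] [Fintype κ] {e : κ → ι} (he : Function.Injective e) :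
    MeasurePreserving (fun (ω : ι → ℝ) k => ω (e k)) (_root_.stdGaussian ι)
      (_root_.stdGaussian κ) := by
  refine ⟨by fun_prop, ?_⟩
  have hi : iIndepFun (fun (i : ι) (ω : ι → ℝ) => ω i) (_root_.stdGaussian ι) :=
    iIndepFun_pi (μ := fun _ => gaussianReal 0 1) (X := fun _ t => t) (fun _ => by fun_prop)
  have h2 : iIndepFun (fun (k : κ) (ω : ι → ℝ) => ω (e k)) (_root_.stdGaussian ι) := hi.precomp he
  rw [h2.map_fun_eq_pi_map (fun k => (measurable_pi_apply (e k)).aemeasurable)]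
  unfold _root_.stdGaussian
  congr 1
  ext1 k
  exact (measurePreserving_eval (fun _ : ι => gaussianReal 0 1) (e k)).map_eq

lemma std_curry :
    MeasurePreserving (fun (ω : Fin d × Fin n → ℝ) k j => ω (k, j))
      (_root_.stdGaussian (Fin d × Fin n)) (gFam d n) := by
  refine ⟨by fun_prop, ?_⟩
  have := Measure.infinitePi_map_curry (ι := Fin d) (κ := Fin n) (fun _ _ => gaussianReal 0 1)
  simp only [Measure.infinitePi_eq_pi] at this
  exact this

/-- Reading the Gaussian coordinates attached to singletons gives `d` independent vectors. -/
lemma std_singletons :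
    MeasurePreserving (fun (ω : GIdx d n → ℝ) (k : Fin d) (j : Fin n) => ω ⟨{k}, fun _ => j⟩)
      (_root_.stdGaussian (GIdx d n)) (gFam d n) := by
  have he : Function.Injective
      (fun q : Fin d × Fin n => (⟨{q.1}, fun _ => q.2⟩ : GIdx d n)) := by
    rintro ⟨k, j⟩ ⟨k', j'⟩ h
    simp only [Sigma.mk.injEq, Finset.singleton_inj] at h
    obtain ⟨rfl, h⟩ := h
    have := congrFun (eq_of_heq h) ⟨k, by simp⟩
    simpa using this
  exact std_curry.comp (std_precomp he)

lemma chaosNorm_nonneg (P' P : Finset (Finset (Fin d))) : 0 ≤ chaosNorm A P' P := by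
  refine Real.sSup_nonneg ?_
  rintro r ⟨x, _, rfl⟩
  exact integral_nonneg fun _ => norm_nonneg _

/-- The supremum defining `chaosNorm` is over a bounded set, so it is not a junk value. -/
lemma chaosNorm_bdd (P' P : Finset (Finset (Fin d))) :
    BddAbove { r : ℝ | ∃ x : (I : Finset (Fin d)) → ({l // l ∈ I} → Fin n) → ℝ,
      (∀ I ∈ P, ∑ v : {l // l ∈ I} → Fin n, x I v ^ 2 ≤ 1) ∧
      r = ∫ ω : GIdx d n → ℝ,
        ‖∑ i : Fin d → Fin n,
          ((∏ I ∈ P, x I fun l => i l.1) * ∏ J ∈ P', ω ⟨J, fun l => i l.1⟩) • A i‖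
          ∂ _root_.stdGaussian (GIdx d n) } := by
  refine ⟨∫ ω : GIdx d n → ℝ, Real.exp (∑ q, 1 * |ω q|) * ∑ i, ‖A i‖
    ∂ _root_.stdGaussian (GIdx d n), ?_⟩
  rintro r ⟨x, hx, rfl⟩
  refine integral_mono_of_nonneg (Filter.Eventually.of_forall fun _ => norm_nonneg _)
    ((std_integrable_exp_abs _ 1).mul_const _) (Filter.Eventually.of_forall fun ω => ?_)
  simp only
  rw [Finset.mul_sum]
  refine (norm_sum_le _ _).trans (Finset.sum_le_sum fun i _ => ?_)
  rw [norm_smul, norm_mul]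
  refine mul_le_mul_of_nonneg_right ?_ (norm_nonneg _)
  have h1 : ‖∏ I ∈ P, x I fun l => i l.1‖ ≤ 1 := by
    rw [norm_prod]
    refine Finset.prod_le_one (fun _ _ => norm_nonneg _) fun I hI => ?_
    rw [Real.norm_eq_abs, ← sq_le_one_iff_abs_le_one]
    exact (Finset.single_le_sum (f := fun v => x I v ^ 2) (fun _ _ => sq_nonneg _)
      (Finset.mem_univ _)).trans (hx I hI)
  have h2 : ‖∏ J ∈ P', ω ⟨J, fun l => i l.1⟩‖ ≤ Real.exp (∑ q, 1 * |ω q|) := by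
    rw [norm_prod]
    calc _ ≤ ∏ J ∈ P', Real.exp |ω ⟨J, fun l => i l.1⟩| := by
          refine Finset.prod_le_prod (fun _ _ => norm_nonneg _) fun J _ => ?_
          rw [Real.norm_eq_abs]
          linarith [Real.add_one_le_exp |ω ⟨J, fun l => i l.1⟩|]
      _ = Real.exp (∑ J ∈ P', |ω ⟨J, fun l => i l.1⟩|) := (Real.exp_sum _ _).symm
      _ ≤ _ := by
          refine Real.exp_le_exp.2 ?_
          simp only [one_mul]
          have hinj : Set.InjOn (fun J => (⟨J, fun l => i l.1⟩ : GIdx d n)) (P' : Set _) :=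
            fun J _ J' _ h => congrArg Sigma.fst h
          rw [← Finset.sum_image (f := fun q => |ω q|) hinj]
          exact Finset.sum_le_sum_of_subset_of_nonneg (Finset.subset_univ _)
            fun _ _ _ => abs_nonneg _
  calc _ ≤ 1 * Real.exp (∑ q, 1 * |ω q|) := by gcongr
    _ = _ := one_mul _

/-- The array on `[n]^J` that is the tensor product of the vectors `x l`, `l ∈ J`. -/
def tensorArr (x : Fin d → Fin n → ℝ) (J : Finset (Fin d)) (v : {l // l ∈ J} → Fin n) : ℝ :=
  ∏ l : {l // l ∈ J}, x l.1 (v l)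

lemma tensorArr_sq {x : Fin d → Fin n → ℝ} (hx : ∀ k, ∑ j, x k j ^ 2 ≤ 1) (J : Finset (Fin d)) :
    ∑ v, tensorArr x J v ^ 2 ≤ 1 := by
  have : ∑ v, tensorArr x J v ^ 2 = ∏ l : {l // l ∈ J}, ∑ j, x l.1 j ^ 2 := by
    rw [Finset.prod_univ_sum]
    simp [tensorArr, Finset.prod_pow]
  rw [this]
  exact Finset.prod_le_one (fun l _ => Finset.sum_nonneg fun _ _ => sq_nonneg _) fun l _ => hx l.1

lemma tensorArr_singletons (x : Fin d → Fin n → ℝ) (K : Finset (Fin d)) (i : Fin d → Fin n) :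
    ∏ J ∈ K.image (fun l => ({l} : Finset (Fin d))), tensorArr x J (fun l => i l.1)
      = ∏ k ∈ K, x k (i k) := by
  rw [Finset.prod_image (fun a _ b _ h => Finset.singleton_injective h)]
  refine Finset.prod_congr rfl fun k _ => ?_
  unfold tensorArr
  rw [Finset.prod_coe_sort {k} (fun l => x l (i l)), Finset.prod_singleton]

/-- The array `A` with Gaussian vectors `U k` in the slots `k ∈ K` and fixed vectors `x k` in the
others. -/
noncomputable def mixed (A : (Fin d → Fin n) → E) (K : Finset (Fin d)) (x U : Fin d → Fin n → ℝ) :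
    E :=
  ∑ i, ((∏ k ∈ Kᶜ, x k (i k)) * ∏ k ∈ K, U k (i k)) • A i

lemma mixed_continuous (K : Finset (Fin d)) (x : Fin d → Fin n → ℝ) :
    Continuous (mixed A K x) := by
  unfold mixed; fun_prop

lemma mixed_le_chaosNorm {x : Fin d → Fin n → ℝ} (hx : ∀ k, ∑ j, x k j ^ 2 ≤ 1)
    (K : Finset (Fin d)) :
    ∫ U, ‖mixed A K x U‖ ∂(gFam d n)
      ≤ chaosNorm A (K.image fun l => {l}) (Kᶜ.image fun l => {l}) := by
  refine le_csSup (chaosNorm_bdd _ _) ⟨tensorArr x, fun J _ => tensorArr_sq hx J, ?_⟩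
  have hmp := std_singletons (d := d) (n := n)
  have h := integral_map hmp.aemeasurable (f := fun U => ‖mixed A K x U‖)
    (mixed_continuous K x).norm.aestronglyMeasurable
  rw [hmp.map_eq] at h
  rw [h]
  refine integral_congr_ae (Filter.Eventually.of_forall fun ω => ?_)
  simp only [mixed]
  congr 1
  refine Finset.sum_congr rfl fun i _ => ?_
  rw [tensorArr_singletons, Finset.prod_image (fun a _ b _ h => Finset.singleton_injective h)]
  congr 2
  refine Finset.prod_congr rfl fun k _ => ?_
  congr 2
  ext l
  have : l.1 = k := Finset.mem_singleton.1 l.2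
  simp [this]

lemma mixed_integrable (K : Finset (Fin d)) (x : Fin d → Fin n → ℝ) :
    Integrable (fun U => ‖mixed A K x U‖) (gFam d n) := by
  have hI : ∀ i : Fin d → Fin n, Integrable (fun U : Fin d → Fin n → ℝ =>
      |(∏ k ∈ Kᶜ, x k (i k)) * ∏ k ∈ K, U k (i k)| * ‖A i‖) (gFam d n) := fun i =>
    ((fam_prod K (fun k y => y (i k)) (fun k _ =>
      std_integrable_coord _)).1.const_mul _).abs.mul_const _
  refine (integrable_finsetSum Finset.univ fun i _ => hI i).mono'
    (mixed_continuous K x).norm.aestronglyMeasurable (Filter.Eventually.of_forall fun U => ?_)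
  rw [norm_norm]
  refine (norm_sum_le _ _).trans (Finset.sum_le_sum fun i _ => ?_)
  rw [norm_smul, Real.norm_eq_abs]

lemma erase_sdiff (k₀ : Fin d) (I : Finset (Fin d)) :
    Finset.univ.erase k₀ \ I = (insert k₀ I)ᶜ := by
  ext k; simp

/-- Each slot `k ≠ k₀` of a smoothed point contributes `x k` or `s • U k`; the subset `I` collects
the slots of the second kind. -/
lemma slice_expand (k₀ : Fin d) (x U : Fin d → Fin n → ℝ) (s : ℝ) :
    slice A k₀ (U k₀) (x + s • U)
      = ∑ I ∈ (Finset.univ.erase k₀).powerset, s ^ I.card • mixed A (insert k₀ I) x U := by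
  unfold slice mixed
  simp_rw [Finset.smul_sum]
  rw [Finset.sum_comm]
  refine Finset.sum_congr rfl fun i _ => ?_
  have : ∏ k ∈ Finset.univ.erase k₀, (x + s • U) k (i k)
      = ∏ k ∈ Finset.univ.erase k₀, (s * U k (i k) + x k (i k)) :=
    Finset.prod_congr rfl fun k _ => by simp [add_comm]
  rw [this, Finset.prod_add, Finset.mul_sum, Finset.sum_smul]
  refine Finset.sum_congr rfl fun I hI => ?_
  have hk : k₀ ∉ I := fun h => by simpa using Finset.mem_powerset.1 hI h
  rw [smul_smul, Finset.prod_insert hk, Finset.prod_mul_distrib, Finset.prod_const, erase_sdiff]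
  congr 1; ring

/-- The mean at a smoothed point is controlled by the norms in which `k₀` and `I` carry Gaussians
and the other coordinates carry singleton sup-blocks. -/
lemma smoothed_mean_le (k₀ : Fin d) {x : Fin d → Fin n → ℝ} (hx : ∀ k, ∑ j, x k j ^ 2 ≤ 1)
    {s : ℝ} (hs : 0 < s) :
    ∫ U, ‖slice A k₀ (U k₀) (x + s • U)‖ ∂(gFam d n)
      ≤ ∑ I ∈ (Finset.univ.erase k₀).powerset, s ^ I.card *
        chaosNorm A ((insert k₀ I).image fun l => {l}) ((insert k₀ I)ᶜ.image fun l => {l}) := by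
  have hInt := fun I : Finset (Fin d) =>
    (mixed_integrable (A := A) (insert k₀ I) x).const_mul (s ^ I.card)
  calc _ ≤ ∫ U, ∑ I ∈ (Finset.univ.erase k₀).powerset, s ^ I.card * ‖mixed A (insert k₀ I) x U‖
          ∂(gFam d n) := by
        refine integral_mono_of_nonneg (Filter.Eventually.of_forall fun _ => norm_nonneg _)
          (integrable_finsetSum _ fun I _ => hInt I) (Filter.Eventually.of_forall fun U => ?_)
        simp only
        rw [slice_expand]
        refine (norm_sum_le _ _).trans (Finset.sum_le_sum fun I _ => ?_)
        rw [norm_smul, Real.norm_of_nonneg (by positivity)]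
    _ = ∑ I ∈ (Finset.univ.erase k₀).powerset, s ^ I.card * ∫ U, ‖mixed A (insert k₀ I) x U‖
          ∂(gFam d n) := by
        rw [integral_finsetSum _ fun I _ => hInt I]
        exact Finset.sum_congr rfl fun I _ => integral_const_mul _ _
    _ ≤ _ := Finset.sum_le_sum fun I _ =>
        mul_le_mul_of_nonneg_left (mixed_le_chaosNorm hx _) (by positivity)

/-- The partial contraction of `φ ∘ A` with the vectors `x k`, `k ∉ K`, as an array on `[n]^J`
(it is used for `J = K`; a free index `J` avoids transports along equalities). -/
noncomputable def contr (A : (Fin d → Fin n) → E) (φ : StrongDual ℝ E) (x : Fin d → Fin n → ℝ)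
    (K J : Finset (Fin d)) (v : {l // l ∈ J} → Fin n) : ℝ :=
  ∑ i : Fin d → Fin n, if (fun l : {l // l ∈ J} => i l.1) = v then
    φ (A i) * ∏ k ∈ Kᶜ, x k (i k) else 0

/-- The sup-block `K` is tested against the normalised contraction itself, which recovers its
Euclidean norm. -/
lemma contr_le {x : Fin d → Fin n → ℝ} (hx : ∀ k, ∑ j, x k j ^ 2 ≤ 1) {φ : StrongDual ℝ E}
    (hφ : ‖φ‖ ≤ 1) {K : Finset (Fin d)} :
    ∑ v, contr A φ x K K v ^ 2
      ≤ chaosNorm A ∅ (insert K (Kᶜ.image fun l => {l})) ^ 2 := by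
  set T := ∑ v, contr A φ x K K v ^ 2 with hT
  have hT0 : 0 ≤ T := Finset.sum_nonneg fun _ _ => sq_nonneg _
  rcases hT0.eq_or_lt with h0 | h0
  · rw [← h0]; positivity
  rw [← Real.sqrt_le_left (chaosNorm_nonneg _ _)]
  have hKn : K ∉ Kᶜ.image fun l => ({l} : Finset (Fin d)) := by
    intro h
    obtain ⟨k, hk, hkK⟩ := Finset.mem_image.1 h
    rw [Finset.mem_compl, ← hkK] at hk
    simp at hk
  set z : (J : Finset (Fin d)) → ({l // l ∈ J} → Fin n) → ℝ := fun J v =>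
    if J = K then contr A φ x K J v / Real.sqrt T else tensorArr x J v with hz
  have hprod : ∀ i : Fin d → Fin n, ∏ J ∈ insert K (Kᶜ.image fun l => ({l} : Finset (Fin d))),
      z J (fun l => i l.1)
      = contr A φ x K K (fun l => i l.1) / Real.sqrt T * ∏ k ∈ Kᶜ, x k (i k) := fun i => by
    rw [Finset.prod_insert hKn, ← tensorArr_singletons]
    congr 1
    · simp [hz]
    · refine Finset.prod_congr rfl fun J hJ => ?_
      have : J ≠ K := fun h => hKn (h ▸ hJ)
      simp [hz, this]
  have hmem : ‖∑ i, (contr A φ x K K (fun l => i l.1) / Real.sqrt T *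
      ∏ k ∈ Kᶜ, x k (i k)) • A i‖ ≤ chaosNorm A ∅ (insert K (Kᶜ.image fun l => {l})) := by
    refine le_csSup (chaosNorm_bdd _ _) ⟨z, fun J hJ => ?_, ?_⟩
    · by_cases hJK : J = K
      · subst hJK
        simp only [hz, if_true, div_pow, Real.sq_sqrt hT0]
        rw [← Finset.sum_div, ← hT, div_self h0.ne']
      · simp only [hz, hJK, if_false]
        exact tensorArr_sq hx J
    · simp [hprod]
  refine le_trans ?_ hmem
  have hφle := φ.le_opNorm (∑ i, (contr A φ x K K (fun l => i l.1) / Real.sqrt T *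
      ∏ k ∈ Kᶜ, x k (i k)) • A i)
  have hval : φ (∑ i, (contr A φ x K K (fun l => i l.1) / Real.sqrt T *
      ∏ k ∈ Kᶜ, x k (i k)) • A i) = Real.sqrt T := by
    have h1 : T = ∑ i, contr A φ x K K (fun l => i l.1) * (φ (A i) * ∏ k ∈ Kᶜ, x k (i k)) := by
      have : ∀ v, contr A φ x K K v ^ 2 = ∑ i : Fin d → Fin n,
          if (fun l : {l // l ∈ K} => i l.1) = v then
            contr A φ x K K v * (φ (A i) * ∏ k ∈ Kᶜ, x k (i k)) else 0 := fun v => by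
        rw [sq]
        conv_lhs => rw [contr.eq_1 A φ x K K v, Finset.mul_sum]
        refine Finset.sum_congr rfl fun i _ => ?_
        rw [← contr.eq_1 A φ x K K v, mul_ite, mul_zero]
      rw [hT, Finset.sum_congr rfl fun v _ => this v, Finset.sum_comm]
      refine Finset.sum_congr rfl fun i _ => ?_
      rw [Finset.sum_ite_eq]; simp
    rw [map_sum]
    have h2 : ∀ i, φ ((contr A φ x K K (fun l => i l.1) / Real.sqrt T *
        ∏ k ∈ Kᶜ, x k (i k)) • A i)
        = contr A φ x K K (fun l => i l.1) * (φ (A i) * ∏ k ∈ Kᶜ, x k (i k)) / Real.sqrt T :=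
      fun i => by rw [map_smul, smul_eq_mul]; ring
    rw [Finset.sum_congr rfl fun i _ => h2 i, ← Finset.sum_div, ← h1, Real.div_sqrt]
  rw [hval, Real.norm_of_nonneg (Real.sqrt_nonneg _)] at hφle
  refine hφle.trans ?_
  exact mul_le_of_le_one_left (norm_nonneg _) hφ

/-- Expansion of the weak variance at a smoothed point over the set `I` of slots in which the two
indices of the square coincide because of the smoothing noise. -/
lemma smoothed_sq_eq (k₀ : Fin d) (x : Fin d → Fin n → ℝ) (φ : StrongDual ℝ E) (s : ℝ) :
    ∑ j, ∫ G, φ (slice A k₀ (Pi.single j 1) (x + s • G)) ^ 2 ∂(gFam d n)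
      = ∑ I ∈ (Finset.univ.erase k₀).powerset, (s ^ I.card) ^ 2 *
        ∑ v, contr A φ x (insert k₀ I) (insert k₀ I) v ^ 2 := by
  have e : ∀ (j : Fin n) (y : Fin d → Fin n → ℝ), φ (slice A k₀ (Pi.single j 1) y) ^ 2
      = ∑ i, ∑ i', (((Pi.single j 1 : Fin n → ℝ) (i k₀) * φ (A i)) *
        ((Pi.single j 1 : Fin n → ℝ) (i' k₀) * φ (A i'))) *
        ∏ k ∈ Finset.univ.erase k₀, (y k (i k) * y k (i' k)) := fun j y => by
    rw [slice, map_sum, sq, Finset.sum_mul_sum]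
    refine Finset.sum_congr rfl fun i _ => Finset.sum_congr rfl fun i' _ => ?_
    rw [map_smul, smul_eq_mul, map_smul, smul_eq_mul, Finset.prod_mul_distrib]; ring
  have hp : ∀ i i' : Fin d → Fin n, Integrable (fun G : Fin d → Fin n → ℝ =>
      ∏ k ∈ Finset.univ.erase k₀, ((x + s • G) k (i k) * (x + s • G) k (i' k))) (gFam d n) ∧
      ∫ G, ∏ k ∈ Finset.univ.erase k₀, ((x + s • G) k (i k) * (x + s • G) k (i' k)) ∂(gFam d n)
        = ∏ k ∈ Finset.univ.erase k₀,
          (x k (i k) * x k (i' k) + if i k = i' k then s ^ 2 else 0) := fun i i' => by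
    have := fam_prod (Finset.univ.erase k₀)
      (fun k y => (x k (i k) + s * y (i k)) * (x k (i' k) + s * y (i' k)))
      (fun k _ => (std_affine_mul _ _ _ _ _).1)
    simp only [(std_affine_mul _ _ _ _ _).2] at this
    exact this
  have h1 : ∀ j, ∫ G, φ (slice A k₀ (Pi.single j 1) (x + s • G)) ^ 2 ∂(gFam d n)
      = ∑ i, ∑ i', (((Pi.single j 1 : Fin n → ℝ) (i k₀) * φ (A i)) *
        ((Pi.single j 1 : Fin n → ℝ) (i' k₀) * φ (A i'))) *
        ∏ k ∈ Finset.univ.erase k₀,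
          (x k (i k) * x k (i' k) + if i k = i' k then s ^ 2 else 0) := fun j => by
    simp_rw [e]
    rw [integral_finsetSum _ fun i _ => integrable_finsetSum _ fun i' _ =>
      (hp i i').1.const_mul _]
    refine Finset.sum_congr rfl fun i _ => ?_
    rw [integral_finsetSum _ fun i' _ => (hp i i').1.const_mul _]
    refine Finset.sum_congr rfl fun i' _ => ?_
    have hval := (hp i i').2
    rw [integral_const_mul, hval]
  -- Summing over `j` forces `i k₀ = i' k₀`, so `k₀` joins the set `I` of coinciding slots.
  have h2 : ∀ i i' : Fin d → Fin n, ∑ j, (((Pi.single j 1 : Fin n → ℝ) (i k₀) * φ (A i)) *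
        ((Pi.single j 1 : Fin n → ℝ) (i' k₀) * φ (A i'))) *
        ∏ k ∈ Finset.univ.erase k₀,
          (x k (i k) * x k (i' k) + if i k = i' k then s ^ 2 else 0)
      = ∑ I ∈ (Finset.univ.erase k₀).powerset, (s ^ I.card) ^ 2 *
        (if ∀ k ∈ insert k₀ I, i k = i' k then
          (φ (A i) * ∏ k ∈ (insert k₀ I)ᶜ, x k (i k)) *
          (φ (A i') * ∏ k ∈ (insert k₀ I)ᶜ, x k (i' k)) else 0) := fun i i' => by
    have hj : ∑ j, (Pi.single j 1 : Fin n → ℝ) (i k₀) * (Pi.single j 1 : Fin n → ℝ) (i' k₀)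
        = if i k₀ = i' k₀ then 1 else 0 := by
      rw [Finset.sum_eq_single (i k₀)]
      · rw [Pi.single_eq_same, one_mul, Pi.single_apply]
        simp only [eq_comm]
      · intro j _ hj
        rw [Pi.single_eq_of_ne hj.symm, zero_mul]
      · simp
    have hj' : ∀ Q : ℝ, ∑ j, (((Pi.single j 1 : Fin n → ℝ) (i k₀) * φ (A i)) *
        ((Pi.single j 1 : Fin n → ℝ) (i' k₀) * φ (A i'))) * Q
        = (if i k₀ = i' k₀ then 1 else 0) * (φ (A i) * φ (A i') * Q) := fun Q => by
      rw [← hj, Finset.sum_mul]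
      exact Finset.sum_congr rfl fun j _ => by ring
    rw [hj']
    simp_rw [add_comm (x _ _ * x _ _)]
    rw [Finset.prod_add, Finset.mul_sum, Finset.mul_sum]
    refine Finset.sum_congr rfl fun I hI => ?_
    rw [erase_sdiff, Finset.prod_mul_distrib]
    simp only [Finset.forall_mem_insert]
    have hI' : ∏ k ∈ I, (if i k = i' k then s ^ 2 else 0)
        = if ∀ k ∈ I, i k = i' k then (s ^ I.card) ^ 2 else 0 := by
      rw [Finset.prod_ite_zero, Finset.prod_const, ← pow_mul, ← pow_mul, mul_comm 2]
      split_ifs <;> rfl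
    rw [hI']
    by_cases ha : i k₀ = i' k₀
    · by_cases hb : ∀ k ∈ I, i k = i' k
      · rw [if_pos ha, if_pos hb, if_pos ⟨ha, hb⟩]; ring
      · rw [if_neg hb, if_neg fun h : i k₀ = i' k₀ ∧ ∀ k ∈ I, i k = i' k => hb h.2]; ring
    · rw [if_neg ha, if_neg fun h : i k₀ = i' k₀ ∧ ∀ k ∈ I, i k = i' k => ha h.1]; ring
  rw [Finset.sum_congr rfl fun j _ => h1 j, Finset.sum_comm]
  rw [Finset.sum_congr rfl fun i _ => Finset.sum_comm]
  rw [Finset.sum_congr rfl fun i _ => Finset.sum_congr rfl fun i' _ => h2 i i']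
  rw [Finset.sum_congr rfl fun i _ => Finset.sum_comm, Finset.sum_comm]
  refine Finset.sum_congr rfl fun I _ => ?_
  simp_rw [← Finset.mul_sum]
  congr 1
  set K := insert k₀ I
  simp_rw [contr, sq, Finset.sum_mul_sum]
  symm
  rw [Finset.sum_comm]
  refine Finset.sum_congr rfl fun i _ => ?_
  rw [Finset.sum_comm]
  refine Finset.sum_congr rfl fun i' _ => ?_
  simp_rw [ite_mul, zero_mul]
  rw [Finset.sum_ite_eq, if_pos (Finset.mem_univ _), mul_ite, mul_zero]
  refine if_congr ?_ rfl rfl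
  constructor
  · intro h k hk
    exact (congrFun h ⟨k, hk⟩).symm
  · intro h
    ext l
    rw [h l.1 l.2]

/-- The weak variance at a smoothed point is controlled by the norms with no Gaussians in which
`insert k₀ I` is one sup-block and the other coordinates are singleton sup-blocks. -/
lemma smoothed_sq_le (k₀ : Fin d) {x : Fin d → Fin n → ℝ} (hx : ∀ k, ∑ j, x k j ^ 2 ≤ 1)
    {φ : StrongDual ℝ E} (hφ : ‖φ‖ ≤ 1) {s : ℝ} (hs : 0 < s) :
    ∑ j, ∫ G, φ (slice A k₀ (Pi.single j 1) (x + s • G)) ^ 2 ∂(gFam d n)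
      ≤ (∑ I ∈ (Finset.univ.erase k₀).powerset, s ^ I.card *
        chaosNorm A ∅ (insert (insert k₀ I) ((insert k₀ I)ᶜ.image fun l => {l}))) ^ 2 := by
  rw [smoothed_sq_eq]
  refine le_trans (Finset.sum_le_sum fun I _ => ?_) (Finset.sum_sq_le_sq_sum_of_nonneg fun I _ =>
    mul_nonneg (pow_nonneg hs.le _) (chaosNorm_nonneg _ _))
  rw [mul_pow]
  exact mul_le_mul_of_nonneg_left (contr_le hx hφ) (by positivity)

end chaos

/-! ### The two families of partition pairs and the choice of parameters -/

section assembly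

variable {d : ℕ}

/-- The pair `(P, P')` with all blocks singletons, the Gaussian ones being those in `K`. -/
lemma mem_pairs_gaussian (K : Finset (Fin d)) :
    ((Kᶜ.image fun l => ({l} : Finset (Fin d))), (K.image fun l => ({l} : Finset (Fin d))))
      ∈ partitionPairs d := by
  simp only [partitionPairs, Finset.mem_filter, Finset.mem_univ, true_and]
  refine ⟨?_, ?_⟩
  · rw [Finset.disjoint_image Finset.singleton_injective]
    exact disjoint_compl_left
  · rw [← Finset.image_union, Finset.union_comm, Finset.union_compl]
    refine ⟨?_, ?_, ?_⟩
    · simp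
    · simpa using fun a b h => Ne.symm h
    · ext k; simp

/-- The pair `(P, ∅)` whose blocks are `K` and the singletons outside `K`. -/
lemma mem_pairs_block {K : Finset (Fin d)} (hK : K.Nonempty) :
    (insert K (Kᶜ.image fun l => ({l} : Finset (Fin d))), (∅ : Finset (Finset (Fin d))))
      ∈ partitionPairs d := by
  simp only [partitionPairs, Finset.mem_filter, Finset.mem_univ, true_and]
  refine ⟨by simp, ?_⟩
  rw [Finset.union_empty]
  refine ⟨?_, ?_, ?_⟩
  · intro I hI
    simp only [Finset.mem_insert, Finset.mem_image] at hI
    rcases hI with rfl | ⟨l, _, rfl⟩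
    · exact hK
    · simp
  · intro I hI J hJ hne
    simp only [Finset.mem_insert, Finset.mem_image, Finset.mem_compl] at hI hJ
    rcases hI with rfl | ⟨l, hl, rfl⟩ <;> rcases hJ with rfl | ⟨m, hm, rfl⟩
    · exact absurd rfl hne
    · simpa using hm
    · simpa using hl
    · simpa using hne
  · ext k
    simp only [Finset.mem_sup, Finset.mem_insert, Finset.mem_image, Finset.mem_compl, id,
      Finset.mem_univ, iff_true]
    by_cases hk : k ∈ K
    · exact ⟨K, Or.inl rfl, hk⟩
    · exact ⟨{k}, Or.inr ⟨k, hk, rfl⟩, by simp⟩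

lemma card_singletons {k₀ : Fin d} {I : Finset (Fin d)} (hI : k₀ ∉ I) :
    (((insert k₀ I)ᶜ.image fun l => ({l} : Finset (Fin d))).card : ℝ) = d - 1 - I.card := by
  have h := Finset.card_compl_add_card (insert k₀ I)
  rw [Finset.card_insert_of_notMem hI, Fintype.card_fin] at h
  rw [Finset.card_image_of_injective _ Finset.singleton_injective]
  have h' : (((insert k₀ I)ᶜ.card : ℕ) : ℝ) + (I.card + 1) = d := by exact_mod_cast h
  linarith

lemma card_block {k₀ : Fin d} {I : Finset (Fin d)} (hI : k₀ ∉ I) :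
    ((insert (insert k₀ I) ((insert k₀ I)ᶜ.image fun l => ({l} : Finset (Fin d)))).card : ℝ)
      = d - I.card := by
  rw [Finset.card_insert_of_notMem, Nat.cast_add, card_singletons hI]
  · push_cast; ring
  · intro h
    obtain ⟨k, hk, hkK⟩ := Finset.mem_image.1 h
    rw [Finset.mem_compl, ← hkK] at hk
    simp at hk

lemma rpow_neg_half_pow {p : ℝ} (hp : 0 < p) (m : ℕ) :
    (p ^ (-(1 / 2) : ℝ)) ^ m = p ^ (-(m : ℝ) / 2) := by
  rw [← Real.rpow_natCast, ← Real.rpow_mul hp.le]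
  congr 1; ring

end assembly

theorem gaussian_process_sup_bound (d : ℕ) (hd : 1 ≤ d) :
    ∃ C : ℝ, 0 < C ∧
      ∀ (n : ℕ) (E : Type*) [NormedAddCommGroup E] [NormedSpace ℝ E]
        (A : (Fin d → Fin n) → E) (p : ℝ), 1 ≤ p →
        (∫ ω : Fin n → ℝ, sSup { r : ℝ | ∃ x : Fin d → Fin n → ℝ,
            (∀ k : Fin d, k ≠ ⟨0, hd⟩ → ∑ j, x k j ^ 2 ≤ 1) ∧
            r = ‖∑ i : Fin d → Fin n,
              (ω (i ⟨0, hd⟩) * ∏ k ∈ Finset.univ.erase ⟨0, hd⟩, x k (i k)) • A i‖ }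
          ∂ stdGaussian (Fin n))
        ≤ C * ∑ PP ∈ partitionPairs d,
            p ^ (((PP.1.card : ℝ) + 1 - d) / 2) * chaosNorm A PP.2 PP.1 := by
  refine ⟨2 ^ d * (3 + d / 2), by positivity, fun n E _ _ A p hp => ?_⟩
  have hp0 : 0 < p := by linarith
  set k₀ : Fin d := ⟨0, hd⟩ with hk₀
  set R := ∑ PP ∈ partitionPairs d,
    p ^ (((PP.1.card : ℝ) + 1 - d) / 2) * chaosNorm A PP.2 PP.1 with hR
  have hterm : ∀ PP ∈ partitionPairs d,
      p ^ (((PP.1.card : ℝ) + 1 - d) / 2) * chaosNorm A PP.2 PP.1 ≤ R := fun PP hPP =>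
    Finset.single_le_sum (f := fun PP : Finset (Finset (Fin d)) × Finset (Finset (Fin d)) =>
      p ^ (((PP.1.card : ℝ) + 1 - d) / 2) * chaosNorm A PP.2 PP.1)
      (fun _ _ => mul_nonneg (Real.rpow_nonneg hp0.le _) (chaosNorm_nonneg _ _)) hPP
  have hR0 : 0 ≤ R := Finset.sum_nonneg fun _ _ =>
    mul_nonneg (Real.rpow_nonneg hp0.le _) (chaosNorm_nonneg _ _)
  set s : ℝ := p ^ (-(1 / 2) : ℝ) with hs
  have hs0 : 0 < s := Real.rpow_pos_of_pos hp0 _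
  have hs2 : s ^ 2 = p⁻¹ := by
    rw [hs, rpow_neg_half_pow hp0, ← Real.rpow_neg_one]; norm_num
  have hsp : 0 < Real.sqrt p := Real.sqrt_pos.2 hp0
  have hsp2 : Real.sqrt p ^ 2 = p := Real.sq_sqrt hp0.le
  -- A sum over subsets of `[d] \ {k₀}` has at most `2 ^ d` terms.
  have hcount : ∀ f : Finset (Fin d) → ℝ, (∀ I ∈ (Finset.univ.erase k₀).powerset, f I ≤ R) →
      ∑ I ∈ (Finset.univ.erase k₀).powerset, f I ≤ 2 ^ d * R := fun f hf => by
    refine (Finset.sum_le_card_nsmul _ _ R hf).trans ?_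
    rw [nsmul_eq_mul]
    refine mul_le_mul_of_nonneg_right ?_ hR0
    rw [Finset.card_powerset, Nat.cast_pow, Nat.cast_two]
    refine pow_le_pow_right₀ one_le_two ?_
    exact (Finset.card_le_univ _).trans (Fintype.card_fin d).le
  have hnot : ∀ I ∈ (Finset.univ.erase k₀).powerset, k₀ ∉ I := fun I hI h => by
    simpa using Finset.mem_powerset.1 hI h
  set a := ∑ I ∈ (Finset.univ.erase k₀).powerset, s ^ I.card *
    chaosNorm A ((insert k₀ I).image fun l => {l}) ((insert k₀ I)ᶜ.image fun l => {l}) with ha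
  have haR : a ≤ 2 ^ d * R := hcount _ fun I hI => by
    refine le_of_eq_of_le ?_ (hterm _ (mem_pairs_gaussian (insert k₀ I)))
    simp only
    rw [card_singletons (hnot I hI), hs, rpow_neg_half_pow hp0]
    congr 2; ring
  set Q := ∑ I ∈ (Finset.univ.erase k₀).powerset, s ^ I.card *
    chaosNorm A ∅ (insert (insert k₀ I) ((insert k₀ I)ᶜ.image fun l => {l})) with hQ
  have hQ0 : 0 ≤ Q := Finset.sum_nonneg fun I _ =>
    mul_nonneg (pow_nonneg hs0.le _) (chaosNorm_nonneg _ _)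
  have hQR : Real.sqrt p * Q ≤ 2 ^ d * R := by
    rw [hQ, Finset.mul_sum]
    refine hcount _ fun I hI => ?_
    refine le_of_eq_of_le ?_ (hterm _ (mem_pairs_block (Finset.insert_nonempty k₀ I)))
    simp only
    rw [card_block (hnot I hI), hs, rpow_neg_half_pow hp0, ← mul_assoc, Real.sqrt_eq_rpow,
      ← Real.rpow_add hp0]
    congr 2; ring
  -- The choice `lam = √p / (Q + η)` balances the last two terms of `sup_le_smoothed`;
  -- `η > 0` covers the degenerate case `Q = 0`.
  have key : ∀ η : ℝ, 0 < η → ∫ ω, sSup {r | ∃ x : Fin d → Fin n → ℝ,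
      (∀ k, k ≠ k₀ → ∑ j, x k j ^ 2 ≤ 1) ∧ r = ‖slice A k₀ ω x‖} ∂(_root_.stdGaussian (Fin n))
      ≤ a + (2 + d / 2) * (Real.sqrt p * Q) + d * Real.sqrt p / 2 * η := fun η hη => by
    have hQη : 0 < Q + η := by linarith
    refine (sup_le_smoothed s (Real.sqrt p / (Q + η)) a (Q ^ 2) hs0 (by positivity)
      (fun x hx => smoothed_mean_le k₀ hx hs0)
      (fun x hx φ hφ => smoothed_sq_le k₀ hx hφ hs0)).trans ?_
    have h1 : 2 * (Real.sqrt p / (Q + η)) * Q ^ 2 ≤ 2 * (Real.sqrt p * Q) := by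
      rw [mul_div_assoc', div_mul_eq_mul_div, div_le_iff₀ hQη]
      nlinarith [mul_nonneg (mul_nonneg hsp.le hQ0) hη.le]
    have h2 : d / (2 * s ^ 2 * (Real.sqrt p / (Q + η)))
        = d / 2 * (Real.sqrt p * Q) + d * Real.sqrt p / 2 * η := by
      rw [hs2]
      nth_rewrite 1 [← hsp2]
      field_simp
    rw [h2]
    linarith
  have hfin : ∫ ω, sSup {r | ∃ x : Fin d → Fin n → ℝ,
      (∀ k, k ≠ k₀ → ∑ j, x k j ^ 2 ≤ 1) ∧ r = ‖slice A k₀ ω x‖} ∂(_root_.stdGaussian (Fin n))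
      ≤ a + (2 + d / 2) * (Real.sqrt p * Q) := by
    refine le_of_forall_pos_le_add fun ε hε => ?_
    refine (key (ε / (d * Real.sqrt p / 2)) ?_).trans_eq ?_
    · have : (0 : ℝ) < d := by exact_mod_cast hd
      positivity
    · have : (0 : ℝ) < d := by exact_mod_cast hd
      rw [mul_div_cancel₀ _ (by positivity)]
  refine le_trans hfin ?_
  calc a + (2 + d / 2) * (Real.sqrt p * Q)
      ≤ 2 ^ d * R + (2 + d / 2) * (2 ^ d * R) := by gcongr
    _ = _ := by ring
end

section
/- Let F be a Banach space, G a standard Gaussian vector in ℝ^n and f : ℝ^n → F a polynomial of degree at most D. Then for every p ≥ 1, ‖f(G) − Ef(G)‖_p and Σ_{d=1}^D ‖ Σ_{i_1,...,i_d=1}^n (E∇^d f(G))_{i_1,...,i_d} g^1_{i_1} ⋯ g^d_{i_d} ‖_p are comparable up to multiplicative constants depending only on D, where (g^k_i)_{k≤D, i≤n} are i.i.d. standard Gaussian variables. -/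
/-!
For independent standard Gaussian vectors `G`, `G'` in `ℝ^n` and a polynomial `f` of degree at most
`D`, the function `t ↦ f (cos t • G + sin t • G')` is a trigonometric polynomial with vector
coefficients, of degree bounded in terms of `D`, and by rotation invariance all its values are
distributed as `f(G)`. On the finite-dimensional space of such trigonometric polynomials every
linear functional that depends only on the function (or only on its derivative) is a fixed finite
combination of point evaluations (of the derivative), see `exists_quadrature`. Two functionals are
used:

* the derivative at `t = 0`, which is `Df(G)[G']`; this gives
  `‖Df(G)[G']‖_p ≤ C₁ ‖f(G)‖_p` (`exists_eLpNorm_fderiv_le`);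
* the increment `f(G) - f(G')` over a quarter turn, a combination of the variables
  `Df(G_t)[G'_t]` for rotated pairs `(G_t, G'_t)`; by Jensen's inequality in `G'` this gives
  `‖f(G) - E f(G)‖_p ≤ C₂ ‖Df(G)[G']‖_p` (`exists_eLpNorm_sub_integral_le`).

The constants depend only on the degree. Let `N_d` be the `L^p` norm of `D^d f(G)[g^1, …, g^d]` and
`T_d` that of the decoupled chaos with coefficients `E ∇^d f(G)`. The chaos is the expectation of
`D^d f(G)[g^1, …, g^d]` over `G`. Applied conditionally on `g^1, …, g^d` to the polynomial
`v ↦ D^d f(v)[g^1, …, g^d]`, the first inequality gives `T_d ≤ N_d ≤ C₁^d N_0`, and the second one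
gives `N_d ≤ T_d + C₂ N_{d+1}`. As `N_{D+1} = 0`, iterating the latter from `d = 0` bounds `N_0` by
the `T_d`; after centering `f`, `T_0 = 0` (`exists_comparison`).
-/

open MeasureTheory ProbabilityTheory
open scoped Classical

noncomputable def gradArray {F : Type*} [NormedAddCommGroup F] [NormedSpace ℝ F] [CompleteSpace F]
    (n : ℕ) (f : (Fin n → ℝ) → F) (d : ℕ) : (Fin d → Fin n) → F :=
  fun i => ∫ v : Fin n → ℝ, iteratedFDeriv ℝ d f v (fun k => Pi.single (i k) 1)
    ∂ stdGaussian (Fin n)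

noncomputable def IsPolyDeg {F : Type*} [NormedAddCommGroup F] [NormedSpace ℝ F]
    (n D : ℕ) (f : (Fin n → ℝ) → F) : Prop :=
  ∃ b : (Fin n → Fin (D + 1)) → F,
    (∀ α, D < ∑ k, (α k : ℕ) → b α = 0) ∧
    ∀ v, f v = ∑ α : Fin n → Fin (D + 1), (∏ k, v k ^ (α k : ℕ)) • b α

noncomputable def fMomP {F : Type*} [NormedAddCommGroup F] [NormedSpace ℝ F] [CompleteSpace F]
    (n : ℕ) (f : (Fin n → ℝ) → F) (p : ℝ) : ℝ :=
  (∫ v, ‖f v - ∫ w, f w ∂ stdGaussian (Fin n)‖ ^ p ∂ stdGaussian (Fin n)) ^ (1 / p)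

/-! ### Quadrature formulas for trigonometric polynomials -/

/-- On a finite-dimensional space of functions, every linear functional is a finite combination of
point evaluations. The space is the span of `w i`, `i ∈ S`, and the functional takes the value
`ℓ i` at `w i`. -/
lemma exists_quadrature {ι : Type*} (S : Finset ι) (w : ι → ℝ → ℝ) (ℓ : ι → ℝ)
    (h : ∀ a : ι → ℝ, (∀ t, ∑ i ∈ S, a i * w i t = 0) → ∑ i ∈ S, a i * ℓ i = 0) :
    ∃ (N : ℕ) (φ : Fin N → ℝ) (c : Fin N → ℝ), ∀ i ∈ S, ∑ k, c k * w i (φ k) = ℓ i := by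
  have key : (fun i : S => ℓ i) ∈
      Submodule.span ℝ (Set.range fun t : ℝ => fun i : S => w i t) := by
    by_contra hn
    obtain ⟨g, hg, hker⟩ := Submodule.exists_le_ker_of_notMem hn
    have hrep : ∀ u : S → ℝ, g u = ∑ i : S, g (Pi.single i 1) * u i := by
      intro u
      conv_lhs => rw [pi_eq_sum_univ' u]
      simp [map_sum, mul_comm]
    let a : ι → ℝ := fun i => if hi : i ∈ S then g (Pi.single ⟨i, hi⟩ 1) else 0
    have hsum : ∀ u : ι → ℝ, ∑ i ∈ S, a i * u i = g (fun i : S => u i) := by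
      intro u
      rw [hrep, ← Finset.sum_coe_sort S]
      refine Finset.sum_congr rfl fun i _ => ?_
      simp [a]
    apply hg
    have h1 := h a fun t => by
      rw [hsum fun i => w i t]
      exact hker (Submodule.subset_span ⟨t, rfl⟩)
    rwa [hsum] at h1
  rw [Submodule.mem_span_set'] at key
  obtain ⟨N, c, v, hv⟩ := key
  choose φ hφ using fun k => (v k).2
  refine ⟨N, φ, c, fun i hi => ?_⟩
  have := congrFun hv ⟨i, hi⟩
  simp only [Finset.sum_apply, Pi.smul_apply, smul_eq_mul] at this
  rw [← this]
  refine Finset.sum_congr rfl fun k _ => ?_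
  rw [← hφ k]

/-- The monomial `cos ^ i * sin ^ j` in the cosine and the sine. -/
noncomputable def trigMon (s : ℕ × ℕ) (t : ℝ) : ℝ := Real.cos t ^ s.1 * Real.sin t ^ s.2

lemma differentiable_trigMon (s : ℕ × ℕ) : Differentiable ℝ (trigMon s) := by
  unfold trigMon; fun_prop

/-- The derivative at `0` is a fixed combination of values, on trigonometric polynomials of bounded
degree. -/
lemma exists_deriv_quadrature (S : Finset (ℕ × ℕ)) :
    ∃ (N : ℕ) (φ : Fin N → ℝ) (c : Fin N → ℝ),
      ∀ s ∈ S, ∑ k, c k * trigMon s (φ k) = deriv (trigMon s) 0 := by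
  refine exists_quadrature S trigMon _ fun a ha => ?_
  have h0 : (fun t => ∑ s ∈ S, a s * trigMon s t) = fun _ => 0 := funext ha
  have h1 := congrArg (fun g => deriv g 0) h0
  simp only [deriv_const] at h1
  rw [deriv_fun_sum fun s _ => ((differentiable_trigMon s) 0).const_mul _] at h1
  simpa [deriv_const_mul, (differentiable_trigMon _) 0] using h1

/-- The increment over a quarter turn is a fixed combination of values of the derivative, on
trigonometric polynomials of bounded degree. -/
lemma exists_increment_quadrature (S : Finset (ℕ × ℕ)) :
    ∃ (N : ℕ) (φ : Fin N → ℝ) (c : Fin N → ℝ),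
      ∀ s ∈ S, ∑ k, c k * deriv (trigMon s) (φ k)
        = trigMon s 0 - trigMon s (Real.pi / 2) := by
  refine exists_quadrature S (fun s => deriv (trigMon s)) _ fun a ha => ?_
  have hd : Differentiable ℝ (fun t => ∑ s ∈ S, a s * trigMon s t) :=
    Differentiable.fun_sum fun s _ => (differentiable_trigMon s).const_mul _
  have h1 := is_const_of_deriv_eq_zero hd (fun t => by
    rw [deriv_fun_sum fun s _ => ((differentiable_trigMon s) t).const_mul _]
    simpa [deriv_const_mul, (differentiable_trigMon _) t] using ha t) 0 (Real.pi / 2)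
  simp only [mul_sub, Finset.sum_sub_distrib]
  exact sub_eq_zero.2 h1

/-! ### Vector-valued polynomials -/

/-- `IsPolyLt m f`: the function `f` on `ℝ^n` is a polynomial of degree strictly less than `m` with
coefficients in `E`. In particular only the zero function satisfies `IsPolyLt 0`. -/
inductive IsPolyLt {E : Type*} [NormedAddCommGroup E] [NormedSpace ℝ E] {n : ℕ} :
    ℕ → ((Fin n → ℝ) → E) → Prop
  | zero (m : ℕ) : IsPolyLt m (fun _ => 0)
  | const (m : ℕ) (b : E) : IsPolyLt (m + 1) (fun _ => b)
  | add {m : ℕ} {f g : (Fin n → ℝ) → E} :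
      IsPolyLt m f → IsPolyLt m g → IsPolyLt m (fun v => f v + g v)
  | coord_smul {m : ℕ} {f : (Fin n → ℝ) → E} (k : Fin n) :
      IsPolyLt m f → IsPolyLt (m + 1) (fun v => v k • f v)
  | mono {m : ℕ} {f : (Fin n → ℝ) → E} : IsPolyLt m f → IsPolyLt (m + 1) f

section

variable {E : Type*} [NormedAddCommGroup E] [NormedSpace ℝ E] {n : ℕ}

lemma IsPolyLt.contDiff {m : ℕ} {f : (Fin n → ℝ) → E} (h : IsPolyLt m f) :
    ContDiff ℝ ⊤ f := by
  induction h with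
  | zero => exact contDiff_const
  | const => exact contDiff_const
  | add _ _ h1 h2 => exact h1.add h2
  | coord_smul k _ h => exact (contDiff_apply ℝ ℝ k).smul h
  | mono _ h => exact h

lemma IsPolyLt.differentiable {m : ℕ} {f : (Fin n → ℝ) → E} (h : IsPolyLt m f) :
    Differentiable ℝ f := h.contDiff.differentiable (by simp)

lemma IsPolyLt.eq_zero {m : ℕ} {f : (Fin n → ℝ) → E} (h : IsPolyLt m f) (hm : m = 0) :
    f = fun _ => 0 := by
  induction h with
  | zero => rfl
  | const => simp at hm
  | add _ _ h1 h2 => simp [h1 hm, h2 hm]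
  | coord_smul => simp at hm
  | mono => simp at hm

lemma IsPolyLt.of_le {m m' : ℕ} {f : (Fin n → ℝ) → E} (h : IsPolyLt m f) (hm : m ≤ m') :
    IsPolyLt m' f := by
  induction hm with
  | refl => exact h
  | step _ ih => exact ih.mono

lemma IsPolyLt.const_smul {m : ℕ} {f : (Fin n → ℝ) → E} (h : IsPolyLt m f) (c : ℝ) :
    IsPolyLt m (fun v => c • f v) := by
  induction h with
  | zero m => simpa using IsPolyLt.zero m
  | const m b => exact IsPolyLt.const m (c • b)
  | add _ _ h1 h2 => simpa [smul_add] using h1.add h2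
  | coord_smul k _ h => simpa [smul_comm c] using h.coord_smul k
  | mono _ h => exact h.mono

lemma IsPolyLt.sum {ι : Type*} {m : ℕ} {f : ι → (Fin n → ℝ) → E} (s : Finset ι)
    (h : ∀ i ∈ s, IsPolyLt m (f i)) : IsPolyLt m (fun v => ∑ i ∈ s, f i v) := by
  classical
  induction s using Finset.induction_on with
  | empty => simpa using IsPolyLt.zero m
  | insert a s ha ih =>
    simp only [Finset.sum_insert ha]
    exact (h a (by simp)).add (ih fun i hi => h i (by simp [hi]))

lemma IsPolyLt.fderiv_apply {m : ℕ} {f : (Fin n → ℝ) → E} (h : IsPolyLt m f) (y : Fin n → ℝ) :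
    IsPolyLt (m - 1) (fun v => fderiv ℝ f v y) := by
  induction h with
  | zero m => simpa using IsPolyLt.zero _
  | const m b => simpa using IsPolyLt.zero _
  | add h1 h2 i1 i2 =>
    simp only [fderiv_fun_add (h1.differentiable _) (h2.differentiable _)]
    exact i1.add i2
  | @coord_smul m f k h ih =>
    have e : (fun v => fderiv ℝ (fun v : Fin n → ℝ => v k • f v) v y)
        = fun v => v k • fderiv ℝ f v y + y k • f v := by
      funext v
      have hk : HasFDerivAt (fun v : Fin n → ℝ => v k) (ContinuousLinearMap.proj k) v :=
        (ContinuousLinearMap.proj (R := ℝ) (φ := fun _ : Fin n => ℝ) k).hasFDerivAt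
      rw [(hk.fun_smul (h.differentiable v).hasFDerivAt).fderiv]
      simp
    rw [e]
    rcases Nat.eq_zero_or_pos m with hm | hm
    · have hf := h.eq_zero hm
      subst hf
      simpa using IsPolyLt.zero _
    · have := ih.coord_smul k
      rw [Nat.sub_add_cancel hm] at this
      exact this.add (h.const_smul _)
  | mono _ ih => exact ih.of_le (by omega)

lemma IsPolyLt.iteratedFDeriv_apply {m : ℕ} {f : (Fin n → ℝ) → E} (h : IsPolyLt m f) (d : ℕ)
    (x : Fin d → Fin n → ℝ) : IsPolyLt (m - d) (fun v => iteratedFDeriv ℝ d f v x) := by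
  induction d with
  | zero => simpa using h
  | succ d ih =>
    have e : (fun v => iteratedFDeriv ℝ (d + 1) f v x) =
        fun v => fderiv ℝ (fun v => iteratedFDeriv ℝ d f v (Fin.tail x)) v (x 0) := by
      funext v
      rw [iteratedFDeriv_succ_apply_left]
      rw [fderiv_continuousMultilinear_apply_const_apply]
      exact (h.contDiff.differentiable_iteratedFDeriv
        (by exact_mod_cast WithTop.coe_lt_top _)) v
    rw [e]
    exact (ih (Fin.tail x)).fderiv_apply (x 0)

lemma IsPolyLt.prod_pow_smul {m : ℕ} {f : (Fin n → ℝ) → E} (h : IsPolyLt m f)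
    (α : Fin n → ℕ) (s : Finset (Fin n)) :
    IsPolyLt (m + ∑ k ∈ s, α k) (fun v => (∏ k ∈ s, v k ^ α k) • f v) := by
  classical
  induction s using Finset.induction_on with
  | empty => simpa using h
  | insert a s ha ih =>
    have : ∀ j : ℕ, IsPolyLt (m + ∑ k ∈ s, α k + j)
        (fun v => v a ^ j • (∏ k ∈ s, v k ^ α k) • f v) := by
      intro j
      induction j with
      | zero => simpa using ih
      | succ j ihj =>
        have := ihj.coord_smul a
        simpa [smul_smul, pow_succ', mul_assoc, add_assoc] using this
    have := this (α a)
    simp only [Finset.prod_insert ha, Finset.sum_insert ha, mul_smul]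
    exact this.of_le (by omega)

lemma IsPolyDeg.isPolyLt {D : ℕ} {f : (Fin n → ℝ) → E} (h : IsPolyDeg n D f) :
    IsPolyLt (D + 1) f := by
  obtain ⟨b, hb, hf⟩ := h
  rw [funext hf]
  refine IsPolyLt.sum _ fun α _ => ?_
  by_cases hα : D < ∑ k, (α k : ℕ)
  · simpa [hb α hα] using IsPolyLt.zero _
  · exact ((IsPolyLt.const 0 (b α)).prod_pow_smul (fun k => (α k : ℕ)) Finset.univ).of_le
      (by omega)

/-- Restricted to a plane, a polynomial of degree `< m` is a polynomial in two variables, of degree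
`< m` in each. -/
lemma IsPolyLt.exists_plane {m : ℕ} {f : (Fin n → ℝ) → E} (h : IsPolyLt m f)
    (x y : Fin n → ℝ) : ∃ e : ℕ × ℕ → E, ∀ a b : ℝ,
      f (a • x + b • y) =
        ∑ s ∈ Finset.range m ×ˢ Finset.range m, (a ^ s.1 * b ^ s.2) • e s := by
  -- Extending the coefficients by zero turns the sum into one over any larger square.
  have ext : ∀ (m : ℕ) (e : ℕ × ℕ → E), ∃ e' : ℕ × ℕ → E, ∀ a b : ℝ,
      ∑ s ∈ Finset.range m ×ˢ Finset.range m, (a ^ s.1 * b ^ s.2) • e s =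
      ∑ s ∈ Finset.range (m + 1) ×ˢ Finset.range (m + 1), (a ^ s.1 * b ^ s.2) • e' s := by
    intro m e
    refine ⟨fun s => if s.1 < m ∧ s.2 < m then e s else 0, fun a b => ?_⟩
    simp only [smul_ite, smul_zero, ← Finset.sum_filter]
    refine Finset.sum_congr ?_ fun _ _ => rfl
    ext s; simp; omega
  have shift1 : ∀ (m : ℕ) (e : ℕ × ℕ → E), ∃ e' : ℕ × ℕ → E, ∀ a b : ℝ,
      a • ∑ s ∈ Finset.range m ×ˢ Finset.range m, (a ^ s.1 * b ^ s.2) • e s =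
      ∑ s ∈ Finset.range (m + 1) ×ˢ Finset.range (m + 1), (a ^ s.1 * b ^ s.2) • e' s := by
    intro m e
    refine ⟨fun s => if s.1 = 0 then 0 else if s.2 < m then e (s.1 - 1, s.2) else 0,
      fun a b => ?_⟩
    rw [Finset.sum_product, Finset.sum_product, Finset.sum_range_succ', Finset.smul_sum]
    simp only [Finset.sum_range_succ _ m]
    simp [Finset.smul_sum, smul_smul, pow_succ']
    refine Finset.sum_congr rfl fun i _ => Finset.sum_congr rfl fun j hj => ?_
    rw [if_pos (by simpa using hj), mul_assoc]
  have shift2 : ∀ (m : ℕ) (e : ℕ × ℕ → E), ∃ e' : ℕ × ℕ → E, ∀ a b : ℝ,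
      b • ∑ s ∈ Finset.range m ×ˢ Finset.range m, (a ^ s.1 * b ^ s.2) • e s =
      ∑ s ∈ Finset.range (m + 1) ×ˢ Finset.range (m + 1), (a ^ s.1 * b ^ s.2) • e' s := by
    intro m e
    obtain ⟨e', he'⟩ := shift1 m fun s => e s.swap
    refine ⟨fun s => e' s.swap, fun a b => ?_⟩
    have := he' b a
    rw [Finset.sum_product_right, Finset.sum_product_right] at this
    rw [Finset.sum_product, Finset.sum_product]
    simpa [mul_comm] using this
  induction h with
  | zero m => exact ⟨0, by simp⟩
  | const m b =>
    refine ⟨fun s => if s = (0, 0) then b else 0, fun a c => ?_⟩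
    simp [Finset.sum_ite_eq']
  | add _ _ h1 h2 =>
    obtain ⟨e1, h1⟩ := h1
    obtain ⟨e2, h2⟩ := h2
    exact ⟨e1 + e2, fun a b => by simp [h1, h2, Finset.sum_add_distrib]⟩
  | @coord_smul m f k h ih =>
    obtain ⟨e, he⟩ := ih
    obtain ⟨e1, h1⟩ := shift1 m e
    obtain ⟨e2, h2⟩ := shift2 m e
    refine ⟨fun s => x k • e1 s + y k • e2 s, fun a b => ?_⟩
    simp only [smul_add, Finset.sum_add_distrib, smul_comm _ (x k), smul_comm _ (y k),
      ← Finset.smul_sum, ← h1, ← h2, ← he]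
    simp [smul_smul, add_smul, mul_comm]
  | @mono m f h ih =>
    obtain ⟨e, he⟩ := ih
    obtain ⟨e', he'⟩ := ext m e
    exact ⟨e', fun a b => by rw [he, he']⟩

/-- Derivative of a function along the rotation of the plane spanned by `x` and `y`. -/
lemma hasDerivAt_rotation {f : (Fin n → ℝ) → E} (h : Differentiable ℝ f)
    (x y : Fin n → ℝ) (t : ℝ) :
    HasDerivAt (fun t => f (Real.cos t • x + Real.sin t • y))
      (fderiv ℝ f (Real.cos t • x + Real.sin t • y) (-Real.sin t • x + Real.cos t • y)) t := by
  refine HasFDerivAt.comp_hasDerivAt t (h _).hasFDerivAt ?_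
  exact ((Real.hasDerivAt_cos t).smul_const x).add ((Real.hasDerivAt_sin t).smul_const y)

lemma IsPolyLt.exists_trig {m : ℕ} {f : (Fin n → ℝ) → E} (h : IsPolyLt m f)
    (x y : Fin n → ℝ) : ∃ e : ℕ × ℕ → E,
      (∀ t, f (Real.cos t • x + Real.sin t • y) =
        ∑ s ∈ Finset.range m ×ˢ Finset.range m, trigMon s t • e s) ∧
      ∀ t, fderiv ℝ f (Real.cos t • x + Real.sin t • y) (-Real.sin t • x + Real.cos t • y) =
        ∑ s ∈ Finset.range m ×ˢ Finset.range m, deriv (trigMon s) t • e s := by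
  obtain ⟨e, he⟩ := h.exists_plane x y
  have h1 : ∀ t, f (Real.cos t • x + Real.sin t • y) =
        ∑ s ∈ Finset.range m ×ˢ Finset.range m, trigMon s t • e s := fun t => he _ _
  refine ⟨e, h1, fun t => ?_⟩
  have h2 := hasDerivAt_rotation h.differentiable x y t
  rw [funext h1] at h2
  refine h2.unique ?_
  exact HasDerivAt.fun_sum fun s _ => ((differentiable_trigMon s) t).hasDerivAt.smul_const _

end

/-! ### The standard Gaussian measure on `ℝ^n` -/

instance isProbabilityMeasure_rootStdGaussian (ι : Type*) [Fintype ι] :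
    IsProbabilityMeasure (_root_.stdGaussian ι) := by
  unfold _root_.stdGaussian; infer_instance

/-- A pair of independent standard Gaussian vectors is invariant under rotations. -/
lemma measurePreserving_rotation (n : ℕ) (t : ℝ) :
    MeasurePreserving
      (fun z : (Fin n → ℝ) × (Fin n → ℝ) =>
        (Real.cos t • z.1 + Real.sin t • z.2, -Real.sin t • z.1 + Real.cos t • z.2))
      ((_root_.stdGaussian (Fin n)).prod (_root_.stdGaussian (Fin n)))
      ((_root_.stdGaussian (Fin n)).prod (_root_.stdGaussian (Fin n))) := by
  have h1 : MeasurePreserving (ContinuousLinearMap.rotation t : ℝ × ℝ →L[ℝ] ℝ × ℝ)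
      ((gaussianReal 0 1).prod (gaussianReal 0 1)) ((gaussianReal 0 1).prod (gaussianReal 0 1)) :=
    ⟨(ContinuousLinearMap.rotation t).continuous.measurable,
      IsGaussian.map_rotation_eq_self (by simp) t⟩
  have h2 := measurePreserving_pi (ι := Fin n) _ _ fun _ => h1
  have h3 := measurePreserving_arrowProdEquivProdArrow ℝ ℝ (Fin n)
    (fun _ => gaussianReal 0 1) (fun _ => gaussianReal 0 1)
  exact h3.comp (h2.comp (MeasurePreserving.symm _ h3))

/-- A family of `d + 1` independent Gaussian vectors consists of one vector and of `d` further
ones. -/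
lemma measurePreserving_cons (d n : ℕ) :
    MeasurePreserving
      (fun (z : (Fin n → ℝ) × (Fin d × Fin n → ℝ)) (k : Fin (d + 1) × Fin n) =>
        (Fin.cons z.1 (fun j i => z.2 (j, i)) : Fin (d + 1) → Fin n → ℝ) k.1 k.2)
      ((_root_.stdGaussian (Fin n)).prod (_root_.stdGaussian (Fin d × Fin n)))
      (_root_.stdGaussian (Fin (d + 1) × Fin n)) := by
  let e : Fin n ⊕ (Fin d × Fin n) ≃ Fin (d + 1) × Fin n :=
    { toFun := Sum.elim (fun i => (0, i)) (fun k => (k.1.succ, k.2))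
      invFun := fun k => Fin.cases (motive := fun _ => Fin n ⊕ (Fin d × Fin n))
        (Sum.inl k.2) (fun j => Sum.inr (j, k.2)) k.1
      left_inv := by rintro (i | k) <;> simp
      right_inv := by
        rintro ⟨k, i⟩
        refine Fin.cases ?_ (fun j => ?_) k <;> simp }
  have h1 := measurePreserving_sumPiEquivProdPi_symm
    (X := fun _ : Fin n ⊕ (Fin d × Fin n) => ℝ) (fun _ => gaussianReal 0 1)
  have h2 := measurePreserving_piCongrLeft (α := fun _ : Fin (d + 1) × Fin n => ℝ)
    (fun _ => gaussianReal 0 1) e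
  have h3 := h2.comp h1
  suffices hfun : (fun (z : (Fin n → ℝ) × (Fin d × Fin n → ℝ)) (k : Fin (d + 1) × Fin n) =>
        (Fin.cons z.1 (fun j i => z.2 (j, i)) : Fin (d + 1) → Fin n → ℝ) k.1 k.2) =
      (MeasurableEquiv.piCongrLeft (fun _ : Fin (d + 1) × Fin n => ℝ) e) ∘
        (MeasurableEquiv.sumPiEquivProdPi fun _ : Fin n ⊕ (Fin d × Fin n) => ℝ).symm by
    rw [hfun]
    exact h3
  funext z k
  obtain ⟨k, rfl⟩ := e.surjective k
  have : ∀ g : (Fin n ⊕ (Fin d × Fin n)) → ℝ,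
      MeasurableEquiv.piCongrLeft (fun _ : Fin (d + 1) × Fin n => ℝ) e g (e k) = g k := fun g =>
    Equiv.piCongrLeft_apply_apply (fun _ : Fin (d + 1) × Fin n => ℝ) e g k
  simp only [Function.comp_apply]
  rw [this]
  rcases k with i | k
  · rfl
  · rfl

/-! ### Inequalities for `L^p` norms on product spaces -/

section

variable {E F : Type*} [NormedAddCommGroup E] [NormedAddCommGroup F]
  {α β β' : Type*} [MeasurableSpace α] [MeasurableSpace β] [MeasurableSpace β']
  {μ : Measure α} {ν : Measure β} {ν' : Measure β'}
  {p : ENNReal}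

lemma eLpNorm_rpow_prod [SFinite ν] (hp0 : p ≠ 0) (hpt : p ≠ ⊤) {a : α × β → E}
    (ha : AEStronglyMeasurable a (μ.prod ν)) :
    eLpNorm a p (μ.prod ν) =
      (∫⁻ x, (eLpNorm (fun y => a (x, y)) p ν) ^ p.toReal ∂μ) ^ (1 / p.toReal) := by
  have hpos : 0 < p.toReal := ENNReal.toReal_pos hp0 hpt
  rw [eLpNorm_eq_lintegral_rpow_enorm_toReal hp0 hpt,
    lintegral_prod _ (ha.enorm.pow_const _)]
  simp_rw [eLpNorm_eq_lintegral_rpow_enorm_toReal hp0 hpt, ← ENNReal.rpow_mul,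
    one_div_mul_cancel hpos.ne', ENNReal.rpow_one]

/-- An `L^p` inequality valid for each value of a parameter may be integrated over it. -/
lemma eLpNorm_prod_le [SFinite ν] [SFinite ν'] (hp0 : p ≠ 0) (hpt : p ≠ ⊤)
    {a : α × β → E} {b : α × β' → F}
    (ha : AEStronglyMeasurable a (μ.prod ν)) (hb : AEStronglyMeasurable b (μ.prod ν'))
    (C : ENNReal) (hC : C ≠ ⊤)
    (h : ∀ x, eLpNorm (fun y => a (x, y)) p ν ≤ C * eLpNorm (fun y => b (x, y)) p ν') :
    eLpNorm a p (μ.prod ν) ≤ C * eLpNorm b p (μ.prod ν') := by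
  have hpos : 0 < p.toReal := ENNReal.toReal_pos hp0 hpt
  rw [eLpNorm_rpow_prod hp0 hpt ha, eLpNorm_rpow_prod hp0 hpt hb]
  calc _ ≤ (∫⁻ x, C ^ p.toReal * (eLpNorm (fun y => b (x, y)) p ν') ^ p.toReal ∂μ)
        ^ (1 / p.toReal) := by
        gcongr with x
        rw [← ENNReal.mul_rpow_of_nonneg _ _ hpos.le]
        exact ENNReal.rpow_le_rpow (h x) hpos.le
    _ = _ := by
        rw [lintegral_const_mul' _ _ (ENNReal.rpow_ne_top_of_nonneg hpos.le hC),
          ENNReal.mul_rpow_of_nonneg _ _ (by positivity), ← ENNReal.rpow_mul,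
          mul_one_div_cancel hpos.ne', ENNReal.rpow_one]

/-- Averaging over an independent variable is a contraction of `L^p`. -/
lemma eLpNorm_integral_le [NormedSpace ℝ E] [IsProbabilityMeasure ν] (hp1 : 1 ≤ p) (hpt : p ≠ ⊤)
    {a : α × β → E} (hm : ∀ x, AEStronglyMeasurable (fun y => a (x, y)) ν)
    (ha : AEStronglyMeasurable a (μ.prod ν)) :
    eLpNorm (fun x => ∫ y, a (x, y) ∂ν) p μ ≤ eLpNorm a p (μ.prod ν) := by
  have hp0 : p ≠ 0 := (zero_lt_one.trans_le hp1).ne'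
  rw [eLpNorm_rpow_prod hp0 hpt ha, eLpNorm_eq_lintegral_rpow_enorm_toReal hp0 hpt]
  gcongr with x
  refine (enorm_integral_le_lintegral_enorm _).trans ?_
  rw [← eLpNorm_one_eq_lintegral_enorm]
  exact eLpNorm_le_eLpNorm_of_exponent_le hp1 (hm x)

/-- If pointwise `g` is a combination of copies of `u` under measure-preserving maps, then its
`L^p` norm is bounded by a multiple of that of `u`. -/
lemma eLpNorm_le_of_quadrature [NormedSpace ℝ E] (hp1 : 1 ≤ p)
    {N : ℕ} (c : Fin N → ℝ) {T : Fin N → α → β} (hT : ∀ k, MeasurePreserving (T k) μ ν)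
    {g : α → E} {u : β → E} (hu : AEStronglyMeasurable u ν)
    (h : ∀ x, g x = ∑ k, c k • u (T k x)) :
    eLpNorm g p μ ≤ (∑ k, ‖c k‖ₑ) * eLpNorm u p ν := by
  have e : g = ∑ k, c k • (u ∘ T k) := by
    funext x; simp [h, Finset.sum_apply]
  rw [e, Finset.sum_mul]
  refine (eLpNorm_sum_le (fun k _ => ?_) hp1).trans (Finset.sum_le_sum fun k _ => ?_)
  · exact (hu.comp_measurePreserving (hT k)).const_smul _
  · rw [← eLpNorm_comp_measurePreserving hu (hT k)]
    exact eLpNorm_const_smul_le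

end

/-! ### The two one-step inequalities -/

section

variable {E : Type*} [NormedAddCommGroup E] [NormedSpace ℝ E] {n : ℕ}

lemma IsPolyLt.memLp {m : ℕ} {f : (Fin n → ℝ) → E} (h : IsPolyLt m f) :
    ∀ p : ENNReal, p ≠ ⊤ → MemLp f p (_root_.stdGaussian (Fin n)) := by
  induction h with
  | zero => exact fun p _ => memLp_const 0
  | const => exact fun p _ => memLp_const _
  | add _ _ h1 h2 => exact fun p hp => (h1 p hp).add (h2 p hp)
  | @coord_smul m f k _ h =>
    intro p hp
    have hp2 : 2 * p ≠ ⊤ := ENNReal.mul_ne_top (by simp) hp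
    have hk : MemLp (fun v : Fin n → ℝ => v k) (2 * p) (_root_.stdGaussian (Fin n)) :=
      (memLp_id_gaussianReal' (2 * p) hp2).comp_measurePreserving (measurePreserving_eval _ k)
    have : ENNReal.HolderTriple (2 * p) (2 * p) p := ⟨by
      rw [ENNReal.mul_inv (by simp) (by simp), ← add_mul, ENNReal.inv_two_add_inv_two, one_mul]⟩
    exact (h (2 * p) hp2).smul hk
  | mono _ h => exact h

lemma IsPolyLt.integrable {m : ℕ} {f : (Fin n → ℝ) → E} (h : IsPolyLt m f) :
    Integrable f (_root_.stdGaussian (Fin n)) :=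
  memLp_one_iff_integrable.1 (h.memLp 1 (by simp))

lemma IsPolyLt.continuous_fderiv {m : ℕ} {f : (Fin n → ℝ) → E} (h : IsPolyLt m f) :
    Continuous (fun z : (Fin n → ℝ) × (Fin n → ℝ) => fderiv ℝ f z.1 z.2) :=
  ((h.contDiff.continuous_fderiv (by simp)).comp continuous_fst).clm_apply continuous_snd

/-- For independent Gaussian vectors `G`, `G'`, the `L^p` norm of `Df(G)[G']` is controlled by that
of `f(G)`: it is the derivative at `t = 0` of the trigonometric polynomial
`f (cos t • G + sin t • G')`, hence a combination of values of the latter. -/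
lemma exists_eLpNorm_fderiv_le (m : ℕ) : ∃ C : ENNReal, C ≠ ⊤ ∧
    ∀ (n : ℕ) (E : Type*) [NormedAddCommGroup E] [NormedSpace ℝ E]
      (f : (Fin n → ℝ) → E), IsPolyLt m f → ∀ p : ENNReal, 1 ≤ p →
      eLpNorm (fun z : (Fin n → ℝ) × (Fin n → ℝ) => fderiv ℝ f z.1 z.2) p
        ((_root_.stdGaussian (Fin n)).prod (_root_.stdGaussian (Fin n)))
      ≤ C * eLpNorm f p (_root_.stdGaussian (Fin n)) := by
  obtain ⟨N, φ, c, hc⟩ := exists_deriv_quadrature (Finset.range m ×ˢ Finset.range m)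
  refine ⟨∑ k, ‖c k‖ₑ, by simp [ENNReal.sum_eq_top], fun n E _ _ f hf p hp => ?_⟩
  refine eLpNorm_le_of_quadrature hp c
    (fun k => measurePreserving_fst.comp (measurePreserving_rotation n (φ k)))
    hf.contDiff.continuous.aestronglyMeasurable fun z => ?_
  obtain ⟨e, h1, h2⟩ := hf.exists_trig z.1 z.2
  have h20 := h2 0
  simp only [Real.cos_zero, Real.sin_zero, one_smul, zero_smul, add_zero, neg_zero,
    zero_add] at h20
  simp only [Function.comp_apply]
  rw [h20]
  simp only [h1, Finset.smul_sum, smul_smul]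
  rw [Finset.sum_comm]
  simp only [← Finset.sum_smul]
  exact Finset.sum_congr rfl fun s hs => by rw [hc s hs]

/-- A Poincaré inequality: the `L^p` norm of `f(G) - E f(G)` is controlled by that of `Df(G)[G']`,
since `f(G) - f(G')` is the increment of `f (cos t • G + sin t • G')` over a quarter turn, hence a
combination of values of `Df` at rotated pairs. -/
lemma exists_eLpNorm_sub_integral_le (m : ℕ) : ∃ C : ENNReal, C ≠ ⊤ ∧
    ∀ (n : ℕ) (E : Type*) [NormedAddCommGroup E] [NormedSpace ℝ E] [CompleteSpace E]
      (f : (Fin n → ℝ) → E), IsPolyLt m f → ∀ p : ENNReal, 1 ≤ p → p ≠ ⊤ →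
      eLpNorm (fun v => f v - ∫ w, f w ∂ _root_.stdGaussian (Fin n)) p
        (_root_.stdGaussian (Fin n))
      ≤ C * eLpNorm (fun z : (Fin n → ℝ) × (Fin n → ℝ) => fderiv ℝ f z.1 z.2) p
        ((_root_.stdGaussian (Fin n)).prod (_root_.stdGaussian (Fin n))) := by
  obtain ⟨N, φ, c, hc⟩ := exists_increment_quadrature (Finset.range m ×ˢ Finset.range m)
  refine ⟨∑ k, ‖c k‖ₑ, by simp [ENNReal.sum_eq_top], fun n E _ _ _ f hf p hp hpt => ?_⟩
  have hcont : Continuous (fun z : (Fin n → ℝ) × (Fin n → ℝ) => f z.1 - f z.2) :=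
    (hf.contDiff.continuous.comp continuous_fst).sub (hf.contDiff.continuous.comp continuous_snd)
  have e1 : (fun v => f v - ∫ w, f w ∂ _root_.stdGaussian (Fin n)) =
      fun v => ∫ w, (f v - f w) ∂ _root_.stdGaussian (Fin n) := by
    funext v
    rw [integral_sub (integrable_const _) hf.integrable]
    simp
  rw [e1]
  refine (eLpNorm_integral_le (a := fun z : (Fin n → ℝ) × (Fin n → ℝ) => f z.1 - f z.2) hp hpt
    (fun x => (hcont.comp (Continuous.prodMk_right x)).aestronglyMeasurable)
    hcont.aestronglyMeasurable).trans ?_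
  refine eLpNorm_le_of_quadrature hp c (fun k => measurePreserving_rotation n (φ k))
    hf.continuous_fderiv.aestronglyMeasurable fun z => ?_
  obtain ⟨e, h1, h2⟩ := hf.exists_trig z.1 z.2
  have h10 := h1 0
  have h11 := h1 (Real.pi / 2)
  simp only [Real.cos_zero, Real.sin_zero, one_smul, zero_smul, add_zero] at h10
  simp only [Real.cos_pi_div_two, Real.sin_pi_div_two, one_smul, zero_smul, zero_add] at h11
  rw [h10, h11, ← Finset.sum_sub_distrib]
  simp only [h2, Finset.smul_sum, smul_smul, ← sub_smul]
  rw [Finset.sum_comm]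
  simp only [← Finset.sum_smul]
  exact Finset.sum_congr rfl fun s hs => by rw [hc s hs]

end

/-! ### Iterating the one-step inequalities -/

section

variable {E : Type*} [NormedAddCommGroup E] [NormedSpace ℝ E] {n : ℕ}

/-- The iterated derivative `D^d f(v)[ω_1, …, ω_d]`, as a function of the pair `(ω, v)`. -/
noncomputable def gradChaos (f : (Fin n → ℝ) → E) (d : ℕ)
    (z : (Fin d × Fin n → ℝ) × (Fin n → ℝ)) : E :=
  iteratedFDeriv ℝ d f z.2 (fun k i => z.1 (k, i))

lemma gradChaos_eq_sum (f : (Fin n → ℝ) → E) (d : ℕ) (z : (Fin d × Fin n → ℝ) × (Fin n → ℝ)) :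
    gradChaos f d z = ∑ i : Fin d → Fin n, (∏ k, z.1 (k, i k)) •
      iteratedFDeriv ℝ d f z.2 (fun k => Pi.single (i k) 1) := by
  have h : (fun (k : Fin d) (i : Fin n) => z.1 (k, i)) =
      fun k => ∑ i : Fin n, z.1 (k, i) • (Pi.single i 1 : Fin n → ℝ) := by
    funext k
    exact pi_eq_sum_univ' _
  rw [gradChaos, h, ContinuousMultilinearMap.map_sum]
  refine Finset.sum_congr rfl fun i _ => ?_
  rw [ContinuousMultilinearMap.map_smul_univ]

lemma IsPolyLt.continuous_gradChaos {m : ℕ} {f : (Fin n → ℝ) → E} (h : IsPolyLt m f) (d : ℕ) :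
    Continuous (gradChaos f d) := by
  rw [funext (gradChaos_eq_sum f d)]
  refine continuous_finsetSum _ fun i _ => Continuous.smul (by fun_prop) ?_
  exact (h.iteratedFDeriv_apply d fun k => Pi.single (i k) 1).contDiff.continuous.comp
    continuous_snd

lemma IsPolyLt.isPolyLt_gradChaos {m : ℕ} {f : (Fin n → ℝ) → E} (h : IsPolyLt m f) (d : ℕ)
    (ω : Fin d × Fin n → ℝ) : IsPolyLt (m - d) (fun v => gradChaos f d (ω, v)) :=
  h.iteratedFDeriv_apply d (fun k i => ω (k, i))

/-- The decoupled chaos is the conditional expectation of the iterated derivative at an independent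
Gaussian point. -/
lemma IsPolyLt.decChaos_gradArray [CompleteSpace E] {m : ℕ} {f : (Fin n → ℝ) → E}
    (h : IsPolyLt m f) (d : ℕ) (ω : Fin d × Fin n → ℝ) :
    decChaos (gradArray n f d) ω = ∫ v, gradChaos f d (ω, v) ∂ _root_.stdGaussian (Fin n) := by
  simp only [gradChaos_eq_sum, decChaos, gradArray]
  have hi : ∀ i : Fin d → Fin n, Integrable (fun v => (∏ k, ω (k, i k)) •
      iteratedFDeriv ℝ d f v (fun k => Pi.single (i k) 1)) (_root_.stdGaussian (Fin n)) := fun i =>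
    (h.iteratedFDeriv_apply d _).integrable.smul _
  rw [integral_finsetSum _ fun i _ => hi i]
  simp only [integral_smul]

lemma IsPolyLt.gradChaos_succ {m : ℕ} {f : (Fin n → ℝ) → E} (h : IsPolyLt m f) (d : ℕ)
    (ω : Fin d × Fin n → ℝ) (v x : Fin n → ℝ) :
    gradChaos f (d + 1) (fun k =>
        (Fin.cons x (fun j i => ω (j, i)) : Fin (d + 1) → Fin n → ℝ) k.1 k.2, v)
      = fderiv ℝ (fun v => gradChaos f d (ω, v)) v x := by
  simp only [gradChaos]
  rw [iteratedFDeriv_succ_apply_left, fderiv_continuousMultilinear_apply_const_apply]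
  · rfl
  · exact (h.contDiff.differentiable_iteratedFDeriv (by exact_mod_cast WithTop.coe_lt_top _)) v

/-- The `L^p` norm of `D^d f(G)[g^1, …, g^d]`. -/
noncomputable def gradNorm (f : (Fin n → ℝ) → E) (d : ℕ) (p : ENNReal) : ENNReal :=
  eLpNorm (gradChaos f d) p
    ((_root_.stdGaussian (Fin d × Fin n)).prod (_root_.stdGaussian (Fin n)))

lemma IsPolyLt.continuous_fderiv_gradChaos {m : ℕ} {f : (Fin n → ℝ) → E} (h : IsPolyLt m f)
    (d : ℕ) : Continuous (fun z : (Fin d × Fin n → ℝ) × ((Fin n → ℝ) × (Fin n → ℝ)) =>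
      fderiv ℝ (fun v => gradChaos f d (z.1, v)) z.2.1 z.2.2) := by
  simp only [← h.gradChaos_succ]
  refine (h.continuous_gradChaos (d + 1)).comp (Continuous.prodMk ?_ (by fun_prop))
  refine continuous_pi fun k => ?_
  obtain ⟨k, i⟩ := k
  refine Fin.cases ?_ (fun j => ?_) k
  · simp only [Fin.cons_zero]; fun_prop
  · simp only [Fin.cons_succ]; fun_prop

lemma IsPolyLt.gradNorm_succ {m : ℕ} {f : (Fin n → ℝ) → E} (h : IsPolyLt m f) (d : ℕ)
    (p : ENNReal) : gradNorm f (d + 1) p =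
      eLpNorm (fun z : (Fin d × Fin n → ℝ) × ((Fin n → ℝ) × (Fin n → ℝ)) =>
        fderiv ℝ (fun v => gradChaos f d (z.1, v)) z.2.1 z.2.2) p
        ((_root_.stdGaussian (Fin d × Fin n)).prod
          ((_root_.stdGaussian (Fin n)).prod (_root_.stdGaussian (Fin n)))) := by
  have h1 : MeasurePreserving
      (fun z : (Fin d × Fin n → ℝ) × ((Fin n → ℝ) × (Fin n → ℝ)) => ((z.2.2, z.1), z.2.1))
      ((_root_.stdGaussian (Fin d × Fin n)).prod
          ((_root_.stdGaussian (Fin n)).prod (_root_.stdGaussian (Fin n))))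
      (((_root_.stdGaussian (Fin n)).prod (_root_.stdGaussian (Fin d × Fin n))).prod
        (_root_.stdGaussian (Fin n))) :=
    Measure.measurePreserving_swap.comp
      ((measurePreserving_prodAssoc _ _ _).comp Measure.measurePreserving_swap)
  have h2 := ((measurePreserving_cons d n).prod
    (MeasurePreserving.id (_root_.stdGaussian (Fin n)))).comp h1
  rw [gradNorm, ← eLpNorm_comp_measurePreserving
    (h.continuous_gradChaos (d + 1)).aestronglyMeasurable h2]
  exact congrArg (fun g => eLpNorm g p _) (funext fun z => h.gradChaos_succ d z.1 z.2.1 z.2.2)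

lemma IsPolyLt.gradNorm_zero {m : ℕ} {f : (Fin n → ℝ) → E} (h : IsPolyLt m f) (p : ENNReal) :
    gradNorm f 0 p = eLpNorm f p (_root_.stdGaussian (Fin n)) := by
  rw [gradNorm, ← eLpNorm_comp_measurePreserving h.contDiff.continuous.aestronglyMeasurable
    (measurePreserving_snd (μ := _root_.stdGaussian (Fin 0 × Fin n)))]
  exact congrArg (fun g => eLpNorm g p _) (funext fun z => by simp [gradChaos])

lemma IsPolyLt.gradNorm_eq_zero {m : ℕ} {f : (Fin n → ℝ) → E} (h : IsPolyLt m f) (p : ENNReal) :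
    gradNorm f m p = 0 := by
  have : gradChaos f m = 0 := by
    funext z
    exact congrFun ((h.isPolyLt_gradChaos m z.1).eq_zero (by simp)) z.2
  simp [gradNorm, this]

lemma continuous_decChaos {d : ℕ} (A : (Fin d → Fin n) → E) : Continuous (decChaos A) := by
  unfold decChaos; fun_prop

/-- The `L^p` norm of the decoupled chaos with coefficients `E ∇^d f(G)`. -/
noncomputable def decNorm [CompleteSpace E] (f : (Fin n → ℝ) → E) (d : ℕ) (p : ENNReal) :
    ENNReal :=
  eLpNorm (decChaos (gradArray n f d)) p (_root_.stdGaussian (Fin d × Fin n))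

lemma IsPolyLt.decNorm_le [CompleteSpace E] {m : ℕ} {f : (Fin n → ℝ) → E} (h : IsPolyLt m f)
    (d : ℕ) {p : ENNReal} (hp : 1 ≤ p) (hpt : p ≠ ⊤) : decNorm f d p ≤ gradNorm f d p := by
  rw [decNorm, gradNorm, funext (h.decChaos_gradArray d)]
  exact eLpNorm_integral_le hp hpt
    (fun ω => (h.isPolyLt_gradChaos d ω).contDiff.continuous.aestronglyMeasurable)
    (h.continuous_gradChaos d).aestronglyMeasurable

/-- Two-sided comparison for centered polynomials. Iterating `gradNorm (d + 1) ≤ C₁ * gradNorm d`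
bounds the chaoses by `f`; iterating `gradNorm d ≤ decNorm d + C₂ * gradNorm (d + 1)` until the
derivative vanishes bounds `f` by the chaoses. -/
lemma exists_comparison (D : ℕ) : ∃ K : ENNReal, K ≠ ⊤ ∧
    ∀ (n : ℕ) (E : Type*) [NormedAddCommGroup E] [NormedSpace ℝ E] [CompleteSpace E]
      (f : (Fin n → ℝ) → E), IsPolyLt (D + 1) f → ∫ v, f v ∂ _root_.stdGaussian (Fin n) = 0 →
      ∀ p : ENNReal, 1 ≤ p → p ≠ ⊤ →
      ∑ d ∈ Finset.Icc 1 D, decNorm f d p ≤ K * eLpNorm f p (_root_.stdGaussian (Fin n)) ∧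
      eLpNorm f p (_root_.stdGaussian (Fin n)) ≤ K * ∑ d ∈ Finset.Icc 1 D, decNorm f d p := by
  obtain ⟨C₁, hC₁, h₁⟩ := exists_eLpNorm_fderiv_le (D + 1)
  obtain ⟨C₂, hC₂, h₂⟩ := exists_eLpNorm_sub_integral_le (D + 1)
  refine ⟨∑ d ∈ Finset.range (D + 1), (C₁ ^ d + C₂ ^ d), ?_, ?_⟩
  · exact ENNReal.sum_ne_top.2 fun d _ => ENNReal.add_ne_top.2
      ⟨ENNReal.pow_ne_top hC₁, ENNReal.pow_ne_top hC₂⟩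
  intro n E _ _ _ f hf hf0 p hp hpt
  have hp0 : p ≠ 0 := (zero_lt_one.trans_le hp).ne'
  have hpoly : ∀ d ω, IsPolyLt (D + 1) (fun v => gradChaos f d (ω, v)) := fun d ω =>
    (hf.isPolyLt_gradChaos d ω).of_le (by omega)
  have stepA : ∀ d, gradNorm f (d + 1) p ≤ C₁ * gradNorm f d p := by
    intro d
    rw [hf.gradNorm_succ]
    exact eLpNorm_prod_le hp0 hpt (hf.continuous_fderiv_gradChaos d).aestronglyMeasurable
      (hf.continuous_gradChaos d).aestronglyMeasurable C₁ hC₁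
      fun ω => h₁ n E _ (hpoly d ω) p hp
  have powA : ∀ d, gradNorm f d p ≤ C₁ ^ d * gradNorm f 0 p := by
    intro d
    induction d with
    | zero => simp
    | succ d ih =>
      calc _ ≤ C₁ * gradNorm f d p := stepA d
        _ ≤ C₁ * (C₁ ^ d * gradNorm f 0 p) := by gcongr
        _ = _ := by ring
  have stepB : ∀ d, gradNorm f d p ≤ decNorm f d p + C₂ * gradNorm f (d + 1) p := by
    intro d
    have hc : Continuous fun z : (Fin d × Fin n → ℝ) × (Fin n → ℝ) =>
        decChaos (gradArray n f d) z.1 := (continuous_decChaos _).comp continuous_fst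
    have e : gradChaos f d = (fun z => decChaos (gradArray n f d) z.1) +
        fun z => gradChaos f d z - decChaos (gradArray n f d) z.1 := by
      funext z; simp
    rw [gradNorm, e]
    refine (eLpNorm_add_le hc.aestronglyMeasurable
      ((hf.continuous_gradChaos d).sub hc).aestronglyMeasurable hp).trans (add_le_add ?_ ?_)
    · exact (eLpNorm_comp_measurePreserving (continuous_decChaos _).aestronglyMeasurable
        measurePreserving_fst).le
    · rw [hf.gradNorm_succ]
      refine eLpNorm_prod_le hp0 hpt ((hf.continuous_gradChaos d).sub hc).aestronglyMeasurable
        (hf.continuous_fderiv_gradChaos d).aestronglyMeasurable C₂ hC₂ fun ω => ?_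
      simp only [hf.decChaos_gradArray]
      exact h₂ n E _ (hpoly d ω) p hp hpt
  have sumB : ∀ k, gradNorm f 0 p ≤
      ∑ d ∈ Finset.range k, C₂ ^ d * decNorm f d p + C₂ ^ k * gradNorm f k p := by
    intro k
    induction k with
    | zero => simp
    | succ k ih =>
      refine ih.trans ?_
      rw [Finset.sum_range_succ, add_assoc]
      gcongr
      calc _ ≤ C₂ ^ k * (decNorm f k p + C₂ * gradNorm f (k + 1) p) := by
            gcongr; exact stepB k
        _ = _ := by ring
  have hdec0 : decNorm f 0 p = 0 := by
    have : decChaos (gradArray n f 0) = 0 := by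
      funext ω
      rw [hf.decChaos_gradArray]
      simpa [gradChaos] using hf0
    simp [decNorm, this]
  rw [← hf.gradNorm_zero p]
  constructor
  · rw [Finset.sum_mul]
    refine (Finset.sum_le_sum_of_subset (t := Finset.range (D + 1)) ?_).trans
      (Finset.sum_le_sum fun d _ => ?_)
    · intro d hd
      simp only [Finset.mem_Icc, Finset.mem_range] at hd ⊢
      omega
    · refine ((hf.decNorm_le d hp hpt).trans (powA d)).trans ?_
      gcongr
      exact le_self_add
  · have h := sumB (D + 1)
    rw [hf.gradNorm_eq_zero, mul_zero, add_zero] at h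
    refine h.trans ?_
    rw [Finset.range_eq_Ico, Finset.sum_eq_sum_Ico_succ_bot (by omega), hdec0, mul_zero, zero_add,
      Finset.mul_sum, ← Finset.range_eq_Ico]
    refine Finset.sum_le_sum fun d hd => ?_
    gcongr
    refine le_trans (le_add_self (a := C₂ ^ d) (b := C₁ ^ d)) ?_
    refine Finset.single_le_sum (f := fun d => C₁ ^ d + C₂ ^ d) (fun _ _ => zero_le) ?_
    simp only [Finset.mem_Ico, Finset.mem_range] at hd ⊢
    omega

lemma rpow_integral_eq_toReal_eLpNorm {α : Type*} [MeasurableSpace α] {μ : Measure α}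
    {E' : Type*} [NormedAddCommGroup E'] {g : α → E'} (hg : AEStronglyMeasurable g μ)
    {p : ℝ} (hp : 1 ≤ p) :
    (∫ x, ‖g x‖ ^ p ∂μ) ^ (1 / p) = (eLpNorm g (ENNReal.ofReal p) μ).toReal := by
  have hp0 : 0 < p := by linarith
  rw [toReal_eLpNorm hg, lpNorm_eq_integral_norm_rpow_toReal (by simpa using hp0) (by simp) hg,
    ENNReal.toReal_ofReal hp0.le, one_div]

lemma gradArray_sub_const [CompleteSpace E] (f : (Fin n → ℝ) → E) (b : E) {d : ℕ} (hd : 1 ≤ d) :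
    gradArray n (fun v => f v - b) d = gradArray n f d := by
  obtain ⟨d, rfl⟩ := Nat.exists_eq_add_of_le' hd
  funext i
  simp only [gradArray]
  refine integral_congr_ae (Filter.Eventually.of_forall fun v => ?_)
  have : iteratedFDeriv ℝ (d + 1) (fun v => f v - b) v = iteratedFDeriv ℝ (d + 1) f v := by
    simp [iteratedFDeriv_succ_eq_comp_right, fderiv_sub_const]
  simp only [this]

end

theorem gaussian_polynomial_splitting (D : ℕ) (hD : 1 ≤ D) :
    ∃ C : ℝ, 0 < C ∧
      ∀ (n : ℕ) (E : Type*) [NormedAddCommGroup E] [NormedSpace ℝ E] [CompleteSpace E]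
        (f : (Fin n → ℝ) → E), IsPolyDeg n D f →
        ∀ p : ℝ, 1 ≤ p →
          (1 / C) * (∑ d ∈ Finset.Icc 1 D, momP (gradArray n f d) p) ≤ fMomP n f p ∧
          fMomP n f p ≤ C * ∑ d ∈ Finset.Icc 1 D, momP (gradArray n f d) p := by
  obtain ⟨K, hK, h⟩ := exists_comparison D
  refine ⟨K.toReal + 1, by positivity, ?_⟩
  intro n E _ _ _ f hf p hp
  have hP := hf.isPolyLt
  let b : E := ∫ w, f w ∂ _root_.stdGaussian (Fin n)
  have hP' : IsPolyLt (D + 1) (fun v => f v - b) := by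
    simpa [sub_eq_add_neg] using hP.add (IsPolyLt.const D (-b))
  have hmean : ∫ v, (f v - b) ∂ _root_.stdGaussian (Fin n) = 0 := by
    rw [integral_sub hP.integrable (integrable_const _)]
    simp [b]
  obtain ⟨hl, hu⟩ := h n E _ hP' hmean (ENNReal.ofReal p) (by simpa using hp) (by simp)
  have hfin : eLpNorm (fun v => f v - b) (ENNReal.ofReal p) (_root_.stdGaussian (Fin n)) ≠ ⊤ :=
    (hP'.memLp _ (by simp)).eLpNorm_ne_top
  have hsfin : ∑ d ∈ Finset.Icc 1 D, decNorm (fun v => f v - b) d (ENNReal.ofReal p) ≠ ⊤ :=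
    ne_top_of_le_ne_top (ENNReal.mul_ne_top hK hfin) hl
  have e1 : fMomP n f p =
      (eLpNorm (fun v => f v - b) (ENNReal.ofReal p) (_root_.stdGaussian (Fin n))).toReal :=
    rpow_integral_eq_toReal_eLpNorm hP'.contDiff.continuous.aestronglyMeasurable hp
  have e2 : ∑ d ∈ Finset.Icc 1 D, momP (gradArray n f d) p =
      (∑ d ∈ Finset.Icc 1 D, decNorm (fun v => f v - b) d (ENNReal.ofReal p)).toReal := by
    rw [ENNReal.toReal_sum (ENNReal.sum_ne_top.1 hsfin)]
    refine Finset.sum_congr rfl fun d hd => ?_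
    rw [decNorm, gradArray_sub_const f b (Finset.mem_Icc.1 hd).1]
    exact rpow_integral_eq_toReal_eLpNorm (continuous_decChaos _).aestronglyMeasurable hp
  rw [e1, e2]
  have hl' := ENNReal.toReal_mono (ENNReal.mul_ne_top hK hfin) hl
  have hu' := ENNReal.toReal_mono (ENNReal.mul_ne_top hK hsfin) hu
  rw [ENNReal.toReal_mul] at hl' hu'
  constructor
  · rw [one_div, inv_mul_le_iff₀ (by positivity)]
    refine hl'.trans ?_
    gcongr
    linarith
  · refine hu'.trans ?_
    gcongr
    linarith
end

section
/- There is a universal constant C such that for every q ≥ 1 and every measure space (X,μ), the space L_q(X,μ) satisfies Gaussian property (α+) with constant K = C√q; that is, for every n and every L_q(X,μ)-valued matrix (b_{ij})_{i,j≤n}, E‖ Σ_{i,j} b_{ij} g_{ij} ‖_{L_q} ≤ C√q · E‖ Σ_{i,j} b_{ij} g_i g'_j ‖_{L_q}, where (g_{ij})_{i,j≤n}, (g_i)_{i≤n}, (g'_j)_{j≤n} are all i.i.d. standard Gaussian N(0,1) variables. -/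
/-!
Write `S = (∑ b_ij²)^{1/2}`, `M_q = (E|g|^q)^{1/q}` and `m = E|g|` for a standard Gaussian `g`.
Both sides of the inequality are compared with `‖S‖_q`.

* Upper bound. By Jensen and Tonelli, `E‖∑ b_ij g_ij‖_q ≤ (E‖∑ b_ij g_ij‖_q^q)^{1/q} = M_q ‖S‖_q`,
  since pointwise `∑ b_ij(x) g_ij` has the law of `S(x) g`; and `M_q = O(√q)`
  (`upper_bound`, `gaussian_moment_le`).
* Lower bound. `E‖∑ b_ij g_i g'_j‖_q ≥ ‖E|∑ b_ij g_i g'_j|‖_q ≥ m² ‖S‖_q`, where the pointwise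
  estimate `E|∑ a_ij g_i g'_j| ≥ m² (∑ a_ij²)^{1/2}` comes from integrating first in `g'`, then in
  `g`, with Cauchy–Schwarz in between (`chaos_lower`, `lower_bound`).

As `μ` need not be σ-finite, Tonelli is not available for it. The change of density
`ν = S^q μ`, `a_ij = b_ij / S` (`change_of_density`) preserves all the `L_q` norms in question and
reduces to a finite measure `ν` with `∑ a_ij² = 1` almost everywhere, where moreover
`‖S‖_q = ν(X)^{1/q}`.
-/

open MeasureTheory ProbabilityTheory
open scoped Classical ENNReal

noncomputable section

def GaussAlphaPlus (F : Type*) [NormedAddCommGroup F] [NormedSpace ℝ F] (K : ℝ) : Prop :=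
  ∀ (n : ℕ) (b : Fin n → Fin n → F),
    (∫ ω : Fin n × Fin n → ℝ, ‖∑ i, ∑ j, ω (i, j) • b i j‖
        ∂ stdGaussian (Fin n × Fin n)) ≤
      K * ∫ ω : (Fin n → ℝ) × (Fin n → ℝ), ‖∑ i, ∑ j, (ω.1 i * ω.2 j) • b i j‖
          ∂ (stdGaussian (Fin n)).prod (stdGaussian (Fin n))

end

/-! ### Gaussian linear forms and moments -/

instance isProbabilityMeasure_stdGaussian (ι : Type*) [Fintype ι] :
    IsProbabilityMeasure (_root_.stdGaussian ι) := by
  unfold _root_.stdGaussian; infer_instance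

/-- A linear form in independent standard Gaussians has the law of `√(∑ v_i²) g`; proved by comparing
characteristic functions. -/
lemma map_linear_stdGaussian {ι : Type*} [Fintype ι] (v : ι → ℝ) :
    (_root_.stdGaussian ι).map (fun ω => ∑ i, v i * ω i) =
      (gaussianReal 0 1).map (fun x => √(∑ i, v i ^ 2) * x) := by
  have hm : Measurable (fun ω : ι → ℝ => ∑ i, v i * ω i) := by fun_prop
  have hsq : √(∑ i, v i ^ 2) ^ 2 = ∑ i, v i ^ 2 :=
    Real.sq_sqrt (Finset.sum_nonneg fun i _ => sq_nonneg (v i))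
  have : IsProbabilityMeasure ((_root_.stdGaussian ι).map (fun ω => ∑ i, v i * ω i)) :=
    Measure.isProbabilityMeasure_map hm.aemeasurable
  rw [gaussianReal_map_const_mul]
  refine Measure.ext_of_charFun (funext fun t => ?_)
  have h := charFun_pi (μ := fun _ : ι => gaussianReal 0 1) (WithLp.toLp 2 (fun i => t * v i))
  rw [charFun_apply, integral_map (by fun_prop) (by fun_prop)] at h
  rw [charFun_apply_real, integral_map hm.aemeasurable (by fun_prop)]
  have h2 : ∀ ω : ι → ℝ, Complex.exp (t * ((∑ i, v i * ω i : ℝ) : ℂ) * Complex.I) =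
      Complex.exp ((inner ℝ (WithLp.toLp 2 ω) (WithLp.toLp 2 fun i => t * v i) : ℝ) * Complex.I) := by
    intro ω
    simp [PiLp.inner_apply, Finset.mul_sum, mul_assoc]
  simp_rw [h2]
  refine h.trans ?_
  simp only [charFun_gaussianReal, ← Complex.exp_sum]
  congr 1
  simp only [hsq, NNReal.coe_mul, NNReal.coe_one, NNReal.coe_mk]
  push_cast
  simp only [Finset.sum_mul, mul_zero, zero_mul, zero_sub, Finset.sum_neg_distrib, Finset.sum_div, mul_one]
  congr 1
  refine Finset.sum_congr rfl fun i _ => ?_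
  ring

lemma lintegral_linear_stdGaussian {ι : Type*} [Fintype ι] (v : ι → ℝ) {q : ℝ} (hq : 0 ≤ q) :
    ∫⁻ ω, ‖∑ i, v i * ω i‖ₑ ^ q ∂(_root_.stdGaussian ι) =
      ‖√(∑ i, v i ^ 2)‖ₑ ^ q * ∫⁻ x, ‖x‖ₑ ^ q ∂(gaussianReal 0 1) := by
  have h := lintegral_map (μ := _root_.stdGaussian ι) (f := fun y : ℝ => ‖y‖ₑ ^ q)
    (g := fun ω => ∑ i, v i * ω i) (by fun_prop) (by fun_prop)
  rw [← h, map_linear_stdGaussian, lintegral_map (by fun_prop) (by fun_prop),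
    ← lintegral_const_mul _ (by fun_prop)]
  simp_rw [enorm_mul, ENNReal.mul_rpow_of_nonneg _ _ hq]

lemma lintegral_abs_gaussian_ne_zero : ∫⁻ x, ‖x‖ₑ ∂(gaussianReal 0 1) ≠ 0 := by
  intro h
  rw [lintegral_eq_zero_iff (by fun_prop)] at h
  have hn := nullSingletonClass_gaussianReal (μ := 0) (v := 1) one_ne_zero
  have h0 : ∀ᵐ x ∂(gaussianReal 0 1), x ≠ 0 := by
    rw [ae_iff]; simp
  have : ∀ᵐ x ∂(gaussianReal 0 1), False := by
    filter_upwards [h, h0] with x h1 h2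
    simp at h1; exact h2 h1
  exact IsProbabilityMeasure.ne_zero (gaussianReal 0 1) (by simpa using this)

lemma lintegral_exp_sq_gaussian_lt_top :
    ∫⁻ x, ENNReal.ofReal (Real.exp (x ^ 2 / 4)) ∂(gaussianReal 0 1) < ∞ := by
  rw [gaussianReal_of_var_ne_zero _ one_ne_zero,
    lintegral_withDensity_eq_lintegral_mul _ (measurable_gaussianPDF _ _) (by fun_prop)]
  have hi : Integrable (fun x : ℝ => (√(2 * Real.pi))⁻¹ * Real.exp (-(1/4) * x ^ 2)) :=
    (integrable_exp_neg_mul_sq (by norm_num)).const_mul _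
  refine lt_of_eq_of_lt (lintegral_congr fun x => ?_) hi.lintegral_lt_top
  simp only [Pi.mul_apply, gaussianPDF, gaussianPDFReal]
  rw [← ENNReal.ofReal_mul (by positivity)]
  simp only [NNReal.coe_one, mul_one, sub_zero]
  rw [mul_assoc, ← Real.exp_add]
  ring_nf

lemma one_le_lintegral_exp_sq_gaussian :
    1 ≤ ∫⁻ x, ENNReal.ofReal (Real.exp (x ^ 2 / 4)) ∂(gaussianReal 0 1) := by
  calc (1 : ℝ≥0∞) = ∫⁻ x, 1 ∂(gaussianReal 0 1) := by simp
    _ ≤ _ := lintegral_mono fun x => by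
      rw [← ENNReal.ofReal_one]
      exact ENNReal.ofReal_le_ofReal (Real.one_le_exp (by positivity))

lemma abs_rpow_le {q : ℝ} (hq : 1 ≤ q) (x : ℝ) :
    |x| ^ q ≤ (√(2 * q)) ^ q * Real.exp (x ^ 2 / 4) := by
  have hq0 : 0 < q := by linarith
  have hs : 0 < √(2 * q) := Real.sqrt_pos.2 (by positivity)
  have hss : √(2 * q) ^ 2 = 2 * q := Real.sq_sqrt (by positivity)
  have h1 : |x| / √(2 * q) ≤ Real.exp (x ^ 2 / (4 * q)) := by
    have h2 : (|x| / √(2 * q)) ^ 2 ≤ Real.exp (x ^ 2 / (4 * q)) ^ 2 := by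
      rw [div_pow, hss, sq_abs, ← Real.exp_nat_mul]
      have := Real.add_one_le_exp (x ^ 2 / (2 * q))
      have e : ((2 : ℕ) : ℝ) * (x ^ 2 / (4 * q)) = x ^ 2 / (2 * q) := by
        push_cast; field_simp; ring
      rw [e]; linarith
    exact le_of_sq_le_sq h2 (by positivity)
  calc |x| ^ q = (√(2 * q) * (|x| / √(2 * q))) ^ q := by congr 1; field_simp
    _ = √(2 * q) ^ q * (|x| / √(2 * q)) ^ q := Real.mul_rpow hs.le (by positivity)
    _ ≤ √(2 * q) ^ q * Real.exp (x ^ 2 / (4 * q)) ^ q := by gcongr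
    _ = _ := by rw [← Real.exp_mul]; congr 2; field_simp

/-- Growth of order `√q` for the `L_q` norm of a standard Gaussian. The constant is the integral of
`exp (x² / 4)`, which absorbs the tail because `y ≤ exp y` at `y = x² / (2 * q)`. -/
lemma gaussian_moment_le {q : ℝ} (hq : 1 ≤ q) :
    (∫⁻ x, ‖x‖ₑ ^ q ∂(gaussianReal 0 1)) ^ (1 / q) ≤ ENNReal.ofReal (√(2 * q)) *
      ∫⁻ x, ENNReal.ofReal (Real.exp (x ^ 2 / 4)) ∂(gaussianReal 0 1) := by
  have hq0 : 0 < q := by linarith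
  have h1 : ∫⁻ x, ‖x‖ₑ ^ q ∂(gaussianReal 0 1) ≤ ENNReal.ofReal (√(2 * q)) ^ q *
      ∫⁻ x, ENNReal.ofReal (Real.exp (x ^ 2 / 4)) ∂(gaussianReal 0 1) := by
    rw [← lintegral_const_mul _ (by fun_prop)]
    refine lintegral_mono fun x => ?_
    rw [Real.enorm_eq_ofReal_abs, ENNReal.ofReal_rpow_of_nonneg (abs_nonneg _) hq0.le,
      ENNReal.ofReal_rpow_of_nonneg (Real.sqrt_nonneg _) hq0.le,
      ← ENNReal.ofReal_mul (by positivity)]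
    exact ENNReal.ofReal_le_ofReal (abs_rpow_le hq x)
  refine (ENNReal.rpow_le_rpow h1 (by positivity)).trans ?_
  rw [ENNReal.mul_rpow_of_nonneg _ _ (by positivity), ← ENNReal.rpow_mul,
    mul_one_div_cancel hq0.ne', ENNReal.rpow_one]
  gcongr
  have h2 := ENNReal.rpow_le_rpow_of_exponent_le one_le_lintegral_exp_sq_gaussian
    (show 1 / q ≤ 1 by rw [div_le_one hq0]; exact hq)
  rwa [ENNReal.rpow_one] at h2

/-! ### Decoupled chaos -/

/-- Lower bound for the first moment of a decoupled Gaussian chaos with normalized coefficients. -/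
lemma chaos_lower {n : ℕ} (a : Fin n → Fin n → ℝ) (ha : ∑ i, ∑ j, a i j ^ 2 = 1) :
    (∫⁻ x, ‖x‖ₑ ∂(gaussianReal 0 1)) * (∫⁻ x, ‖x‖ₑ ∂(gaussianReal 0 1)) ≤
      ∫⁻ ω : (Fin n → ℝ) × (Fin n → ℝ), ‖∑ i, ∑ j, (ω.1 i * ω.2 j) * a i j‖ₑ
        ∂(_root_.stdGaussian (Fin n)).prod (_root_.stdGaussian (Fin n)) := by
  set m := ∫⁻ x, ‖x‖ₑ ∂(gaussianReal 0 1)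
  have key : ∀ v : Fin n → ℝ, ∫⁻ ω, ‖∑ i, v i * ω i‖ₑ ∂(_root_.stdGaussian (Fin n)) =
      ‖√(∑ i, v i ^ 2)‖ₑ * m := fun v => by
    simpa using lintegral_linear_stdGaussian v (q := 1) zero_le_one
  let u : (Fin n → ℝ) → Fin n → ℝ := fun ω j => ∑ i, a i j * ω i
  -- the `ℓ₂` norms of the columns, used as weights in Cauchy–Schwarz
  let t : Fin n → ℝ := fun j => √(∑ i, a i j ^ 2)
  have ht : ∀ j, t j ^ 2 = ∑ i, a i j ^ 2 := fun j =>
    Real.sq_sqrt (Finset.sum_nonneg fun i _ => sq_nonneg _)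
  have ht1 : ∑ j, t j ^ 2 = 1 := by
    simp_rw [ht]; rw [Finset.sum_comm]; exact ha
  have hinner : ∀ ω : Fin n → ℝ,
      ∫⁻ ω', ‖∑ i, ∑ j, (ω i * ω' j) * a i j‖ₑ ∂(_root_.stdGaussian (Fin n)) =
        ‖√(∑ j, u ω j ^ 2)‖ₑ * m := by
    intro ω
    rw [← key]
    refine lintegral_congr fun ω' => ?_
    rw [Finset.sum_comm]
    congr 1
    refine Finset.sum_congr rfl fun j _ => ?_
    simp only [u, Finset.sum_mul]
    exact Finset.sum_congr rfl fun i _ => by ring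
  have hcs : ∀ ω, ∑ j, ‖t j‖ₑ * ‖u ω j‖ₑ ≤ ‖√(∑ j, u ω j ^ 2)‖ₑ := by
    intro ω
    have h := Real.sum_mul_le_sqrt_mul_sqrt Finset.univ t (fun j => |u ω j|)
    simp only [ht1, Real.sqrt_one, one_mul, sq_abs] at h
    simp only [Real.enorm_eq_ofReal_abs]
    simp_rw [← ENNReal.ofReal_mul (abs_nonneg _)]
    rw [← ENNReal.ofReal_sum_of_nonneg (fun j _ => by positivity),
      abs_of_nonneg (Real.sqrt_nonneg _)]
    refine ENNReal.ofReal_le_ofReal (le_trans (le_of_eq ?_) h)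
    exact Finset.sum_congr rfl fun j _ => by rw [abs_of_nonneg (Real.sqrt_nonneg _)]
  have hsum : ∑ j, ‖t j‖ₑ * (‖t j‖ₑ * m) = m := by
    simp_rw [← mul_assoc, ← Finset.sum_mul, ← enorm_mul, ← sq, Real.enorm_eq_ofReal_abs,
      abs_sq]
    rw [← ENNReal.ofReal_sum_of_nonneg (fun j _ => by positivity), ht1]
    simp
  rw [lintegral_prod _ (by fun_prop)]
  simp only [hinner]
  rw [lintegral_mul_const _ (by fun_prop)]
  gcongr
  calc m = ∑ j, ‖t j‖ₑ * (‖t j‖ₑ * m) := hsum.symm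
    _ = ∑ j, ‖t j‖ₑ * ∫⁻ ω, ‖u ω j‖ₑ ∂(_root_.stdGaussian (Fin n)) := by
      simp only [u, key, t]
    _ = ∫⁻ ω, ∑ j, ‖t j‖ₑ * ‖u ω j‖ₑ ∂(_root_.stdGaussian (Fin n)) := by
      rw [lintegral_finsetSum _ (fun j _ => by fun_prop)]
      exact Finset.sum_congr rfl fun j _ => (lintegral_const_mul _ (by fun_prop)).symm
    _ ≤ _ := lintegral_mono hcs

/-! ### The normalized case on a finite measure space -/

/-- In the normalized situation `∑ a_ij² = 1` on a finite measure space, the left-hand side of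
property (α+) is at most the Gaussian `L_q` norm times `ν(X)^{1/q}`. -/
lemma upper_bound {X : Type*} [MeasurableSpace X] (ν : Measure X) [IsFiniteMeasure ν] {q : ℝ}
    (hq : 1 ≤ q) {n : ℕ} (a : Fin n → Fin n → X → ℝ) (ham : ∀ i j, Measurable (a i j))
    (ha : ∀ᵐ x ∂ν, ∑ i, ∑ j, a i j x ^ 2 = 1) :
    ∫⁻ ω : Fin n × Fin n → ℝ, (∫⁻ x, ‖∑ i, ∑ j, ω (i, j) * a i j x‖ₑ ^ q ∂ν) ^ (1 / q)
        ∂(_root_.stdGaussian (Fin n × Fin n)) ≤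
      (∫⁻ x, ‖x‖ₑ ^ q ∂(gaussianReal 0 1)) ^ (1 / q) * ν Set.univ ^ (1 / q) := by
  have hq0 : 0 < q := by linarith
  let P := _root_.stdGaussian (Fin n × Fin n)
  have hmeas : Measurable (Function.uncurry fun (ω : Fin n × Fin n → ℝ) x =>
      ‖∑ i, ∑ j, ω (i, j) * a i j x‖ₑ ^ q) := by
    unfold Function.uncurry
    fun_prop
  let F : (Fin n × Fin n → ℝ) → ℝ≥0∞ := fun ω =>
    (∫⁻ x, ‖∑ i, ∑ j, ω (i, j) * a i j x‖ₑ ^ q ∂ν) ^ (1 / q)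
  have hF : Measurable F := hmeas.lintegral_prod_right'.pow_const _
  have h1 := eLpNorm'_le_eLpNorm'_mul_rpow_measure_univ (μ := P) (f := F) zero_lt_one hq
    hF.aestronglyMeasurable
  simp only [eLpNorm', enorm_eq_self, ENNReal.rpow_one, div_one, P, measure_univ,
    ENNReal.one_rpow, mul_one] at h1
  refine h1.trans ?_
  rw [← ENNReal.mul_rpow_of_nonneg _ _ (by positivity)]
  refine ENNReal.rpow_le_rpow (le_of_eq ?_) (by positivity)
  simp only [F, ← ENNReal.rpow_mul, one_div_mul_cancel hq0.ne', ENNReal.rpow_one]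
  rw [lintegral_lintegral_swap hmeas.aemeasurable, ← lintegral_const]
  refine lintegral_congr_ae ?_
  filter_upwards [ha] with x hx
  have h := lintegral_linear_stdGaussian (fun p : Fin n × Fin n => a p.1 p.2 x) hq0.le
  simp only [Fintype.sum_prod_type, hx, Real.sqrt_one, enorm_one, ENNReal.one_rpow, one_mul] at h
  rw [← h]
  simp only [mul_comm]

/-- In the same normalized situation, the right-hand side of property (α+) is at least
`(E|g|)² ν(X)^{1/q}`. -/
lemma lower_bound {X : Type*} [MeasurableSpace X] (ν : Measure X) [IsFiniteMeasure ν] {q : ℝ}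
    (hq : 1 ≤ q) {n : ℕ} (a : Fin n → Fin n → X → ℝ) (ham : ∀ i j, Measurable (a i j))
    (ha : ∀ᵐ x ∂ν, ∑ i, ∑ j, a i j x ^ 2 = 1) :
    (∫⁻ x, ‖x‖ₑ ∂(gaussianReal 0 1)) * (∫⁻ x, ‖x‖ₑ ∂(gaussianReal 0 1)) * ν Set.univ ^ (1 / q) ≤
    ∫⁻ ω : (Fin n → ℝ) × (Fin n → ℝ),
      (∫⁻ x, ‖∑ i, ∑ j, (ω.1 i * ω.2 j) * a i j x‖ₑ ^ q ∂ν) ^ (1 / q)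
        ∂(_root_.stdGaussian (Fin n)).prod (_root_.stdGaussian (Fin n)) := by
  have hq0 : 0 < q := by linarith
  set m := ∫⁻ x, ‖x‖ₑ ∂(gaussianReal 0 1)
  set P := (_root_.stdGaussian (Fin n)).prod (_root_.stdGaussian (Fin n))
  -- the case `ν = 0` is trivial; otherwise the factor `ν(X)^{1-1/q}` from Hölder can be cancelled
  rcases eq_or_ne (ν Set.univ) 0 with h0 | h0
  · rw [h0, ENNReal.zero_rpow_of_pos (by positivity), mul_zero]; exact zero_le
  have hmeas1 : Measurable (Function.uncurry fun (ω : (Fin n → ℝ) × (Fin n → ℝ)) x =>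
      ‖∑ i, ∑ j, (ω.1 i * ω.2 j) * a i j x‖ₑ) := by
    unfold Function.uncurry
    fun_prop
  have hmeas : Measurable (Function.uncurry fun (ω : (Fin n → ℝ) × (Fin n → ℝ)) x =>
      ‖∑ i, ∑ j, (ω.1 i * ω.2 j) * a i j x‖ₑ ^ q) := hmeas1.pow_const q
  have hF : Measurable fun ω : (Fin n → ℝ) × (Fin n → ℝ) =>
      (∫⁻ x, ‖∑ i, ∑ j, (ω.1 i * ω.2 j) * a i j x‖ₑ ^ q ∂ν) ^ (1 / q) :=
    hmeas.lintegral_prod_right'.pow_const _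
  have hN0 : ν Set.univ ^ (1 - 1 / q) ≠ 0 := by simp [h0]
  have hNt : ν Set.univ ^ (1 - 1 / q) ≠ ∞ :=
    ENNReal.rpow_ne_top_of_ne_zero h0 (measure_ne_top _ _)
  have hle : ∀ ω : (Fin n → ℝ) × (Fin n → ℝ),
      ∫⁻ x, ‖∑ i, ∑ j, (ω.1 i * ω.2 j) * a i j x‖ₑ ∂ν ≤
      (∫⁻ x, ‖∑ i, ∑ j, (ω.1 i * ω.2 j) * a i j x‖ₑ ^ q ∂ν) ^ (1 / q) *
        ν Set.univ ^ (1 - 1 / q) := by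
    intro ω
    have h := eLpNorm'_le_eLpNorm'_mul_rpow_measure_univ (μ := ν)
      (f := fun x => ∑ i, ∑ j, (ω.1 i * ω.2 j) * a i j x) zero_lt_one hq
      (by fun_prop)
    simpa only [eLpNorm', ENNReal.rpow_one, div_one] using h
  refine (ENNReal.mul_le_mul_iff_left hN0 hNt).1 ?_
  rw [mul_assoc, ← ENNReal.rpow_add _ _ h0 (measure_ne_top _ _), add_sub_cancel, ENNReal.rpow_one,
    ← lintegral_mul_const _ hF]
  refine le_trans ?_ (lintegral_mono hle)
  rw [lintegral_lintegral_swap hmeas1.aemeasurable, ← lintegral_const]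
  refine lintegral_mono_ae ?_
  filter_upwards [ha] with x hx
  exact chaos_lower (fun i j => a i j x) hx

/-! ### Reduction to the normalized case -/

/-- Linear combinations of finitely many `L_q` functions `b_ij` on an arbitrary measure space have
the same norms as those of some `a_ij` on a *finite* measure space with `∑ a_ij² = 1` almost
everywhere: take density `S^q` and `a_ij = b_ij / S`, with `S = (∑ b_ij²)^{1/2}`. -/
lemma change_of_density {X : Type*} [MeasurableSpace X] (μ : Measure X) {q : ℝ} (hq : 1 ≤ q)
    [Fact ((1 : ℝ≥0∞) ≤ ENNReal.ofReal q)] {n : ℕ}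
    (b : Fin n → Fin n → Lp ℝ (ENNReal.ofReal q) μ) :
    ∃ (ν : Measure X) (a : Fin n → Fin n → X → ℝ), IsFiniteMeasure ν ∧
      (∀ i j, Measurable (a i j)) ∧ (∀ᵐ x ∂ν, ∑ i, ∑ j, a i j x ^ 2 = 1) ∧
      ∀ θ : Fin n → Fin n → ℝ, ‖∑ i, ∑ j, θ i j • b i j‖ₑ =
        (∫⁻ x, ‖∑ i, ∑ j, θ i j * a i j x‖ₑ ^ q ∂ν) ^ (1 / q) := by
  have hq0 : 0 < q := by linarith
  have hfm : ∀ i j, Measurable (b i j : X → ℝ) := fun i j => (Lp.stronglyMeasurable _).measurable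
  let S : X → ℝ := fun x => √(∑ i, ∑ j, (b i j : X → ℝ) x ^ 2)
  have hSm : Measurable S := by fun_prop
  have hS2 : ∀ x, S x ^ 2 = ∑ i, ∑ j, (b i j : X → ℝ) x ^ 2 := fun x =>
    Real.sq_sqrt (Finset.sum_nonneg fun i _ => Finset.sum_nonneg fun j _ => sq_nonneg _)
  have hfS : ∀ i j x, |(b i j : X → ℝ) x| ≤ S x := fun i j x => by
    refine Real.abs_le_sqrt ?_
    refine le_trans ?_ (Finset.single_le_sum
      (f := fun i => ∑ j, (b i j : X → ℝ) x ^ 2)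
      (fun i _ => Finset.sum_nonneg fun j _ => sq_nonneg _) (Finset.mem_univ i))
    exact Finset.single_le_sum (f := fun j => (b i j : X → ℝ) x ^ 2)
      (fun j _ => sq_nonneg _) (Finset.mem_univ j)
  have hSle : ∀ x, S x ≤ ∑ i, ∑ j, |(b i j : X → ℝ) x| := fun x => by
    refine Real.sqrt_le_iff.2 ⟨by positivity, ?_⟩
    rw [← Fintype.sum_prod_type' (f := fun i j => (b i j : X → ℝ) x ^ 2),
      ← Fintype.sum_prod_type' (f := fun i j => |(b i j : X → ℝ) x|)]
    simp_rw [← sq_abs ((b _ _ : X → ℝ) x)]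
    exact Finset.sum_sq_le_sq_sum_of_nonneg fun _ _ => abs_nonneg _
  have hSmem : MemLp S (ENNReal.ofReal q) μ := by
    refine MemLp.of_le (g := fun x => ∑ i, ∑ j, ‖(b i j : X → ℝ) x‖) ?_
      hSm.aestronglyMeasurable (Filter.Eventually.of_forall fun x => ?_)
    · exact memLp_finsetSum _ fun i _ => memLp_finsetSum _ fun j _ => (Lp.memLp (b i j)).norm
    · rw [Real.norm_of_nonneg (Real.sqrt_nonneg _)]
      exact (hSle x).trans (le_abs_self _)
  have hqt : (ENNReal.ofReal q).toReal = q := ENNReal.toReal_ofReal hq0.le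
  have hq00 : ENNReal.ofReal q ≠ 0 := by simpa using hq0
  have hw : Measurable fun x => ‖S x‖ₑ ^ q := by fun_prop
  have hfin : ∫⁻ x, ‖S x‖ₑ ^ q ∂μ < ∞ := by
    have h := lintegral_rpow_enorm_lt_top_of_eLpNorm_lt_top hq00 ENNReal.ofReal_ne_top hSmem.2
    rwa [hqt] at h
  refine ⟨μ.withDensity fun x => ‖S x‖ₑ ^ q, fun i j x => (b i j : X → ℝ) x / S x,
    isFiniteMeasure_withDensity hfin.ne, fun i j => (hfm i j).div hSm, ?_, fun θ => ?_⟩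
  · rw [ae_withDensity_iff hw]
    refine Filter.Eventually.of_forall fun x hx => ?_
    have hx0 : S x ≠ 0 := fun h => hx (by simp [h, hq0])
    simp_rw [div_pow, ← Finset.sum_div, ← hS2]
    exact div_self (pow_ne_zero 2 hx0)
  · rw [Lp.enorm_def, eLpNorm_eq_lintegral_rpow_enorm_toReal hq00 ENNReal.ofReal_ne_top, hqt,
      lintegral_withDensity_eq_lintegral_mul _ hw (by fun_prop)]
    congr 1
    refine lintegral_congr_ae ?_
    have h1 : ((∑ i, ∑ j, θ i j • b i j : Lp ℝ (ENNReal.ofReal q) μ) : X → ℝ) =ᵐ[μ]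
        fun x => ∑ i, ∑ j, θ i j * (b i j : X → ℝ) x := by
      have h2 : ∀ᵐ x ∂μ, ∀ i j, ((θ i j • b i j : Lp ℝ (ENNReal.ofReal q) μ) : X → ℝ) x =
          θ i j * (b i j : X → ℝ) x :=
        ae_all_iff.2 fun i => ae_all_iff.2 fun j => Lp.coeFn_smul (θ i j) (b i j)
      have h3 : ∀ᵐ x ∂μ, ∀ i, ((∑ j, θ i j • b i j : Lp ℝ (ENNReal.ofReal q) μ) : X → ℝ) x =
          ∑ j, ((θ i j • b i j : Lp ℝ (ENNReal.ofReal q) μ) : X → ℝ) x :=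
        ae_all_iff.2 fun i => (Lp.coeFn_finsetSum _ _).trans
          (Filter.Eventually.of_forall fun x => by simp)
      filter_upwards [Lp.coeFn_finsetSum Finset.univ fun i => ∑ j, θ i j • b i j, h2, h3]
        with x e1 e2 e3
      rw [e1, Finset.sum_apply]
      simp_rw [e3, e2]
    filter_upwards [h1] with x hx
    rw [hx, Pi.mul_apply, ← ENNReal.mul_rpow_of_nonneg _ _ hq0.le, ← enorm_mul, Finset.mul_sum]
    congr 2
    refine Finset.sum_congr rfl fun i _ => ?_
    rw [Finset.mul_sum]
    refine Finset.sum_congr rfl fun j _ => ?_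
    -- where `S x = 0` the quotient is the junk value `0`, but then every `b i j` vanishes at `x`
    rcases eq_or_ne (S x) 0 with h | h
    · have h2 := hfS i j x
      rw [h, abs_nonpos_iff] at h2
      simp [h2]
    · field_simp

theorem Lq_gaussAlphaPlus :
    ∃ C : ℝ, 0 < C ∧
      ∀ (q : ℝ) (hq : 1 ≤ q) (X : Type*) (mX : MeasurableSpace X) (μ : Measure X),
        haveI : Fact ((1 : ℝ≥0∞) ≤ ENNReal.ofReal q) :=
          ⟨by rw [← ENNReal.ofReal_one]; exact ENNReal.ofReal_le_ofReal hq⟩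
        GaussAlphaPlus (Lp ℝ (ENNReal.ofReal q) μ) (C * Real.sqrt q) := by
  set m := ∫⁻ x, ‖x‖ₑ ∂(gaussianReal 0 1) with hm
  set D := ∫⁻ x, ENNReal.ofReal (Real.exp (x ^ 2 / 4)) ∂(gaussianReal 0 1) with hD
  have hm0 : m ≠ 0 := lintegral_abs_gaussian_ne_zero
  have hmt : m ≠ ∞ := by
    have h := gaussian_moment_le le_rfl
    simp only [ENNReal.rpow_one, div_one] at h
    exact ne_top_of_le_ne_top
      (ENNReal.mul_ne_top ENNReal.ofReal_ne_top lintegral_exp_sq_gaussian_lt_top.ne) h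
  have hDt : D ≠ ∞ := lintegral_exp_sq_gaussian_lt_top.ne
  have hD0 : D ≠ 0 := (lt_of_lt_of_le zero_lt_one one_le_lintegral_exp_sq_gaussian).ne'
  have hmpos : 0 < m.toReal := ENNReal.toReal_pos hm0 hmt
  have hDpos : 0 < D.toReal := ENNReal.toReal_pos hD0 hDt
  refine ⟨√2 * D.toReal / (m.toReal * m.toReal), by positivity, ?_⟩
  intro q hq X mX μ
  have : Fact ((1 : ℝ≥0∞) ≤ ENNReal.ofReal q) :=
    ⟨by rw [← ENNReal.ofReal_one]; exact ENNReal.ofReal_le_ofReal hq⟩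
  intro n b
  obtain ⟨ν, a, hν, ham, ha, hab⟩ := change_of_density μ hq b
  have hU := upper_bound ν hq a ham ha
  have hL := lower_bound ν hq a ham ha
  have hM := gaussian_moment_le hq
  simp only [← hab (fun i j => _)] at hU hL
  -- needed since a non-integrable right-hand side would have the junk integral `0`
  have hint : Integrable (fun ω : (Fin n → ℝ) × (Fin n → ℝ) =>
      ∑ i, ∑ j, (ω.1 i * ω.2 j) • b i j)
      ((_root_.stdGaussian (Fin n)).prod (_root_.stdGaussian (Fin n))) := by
    have hcoord : ∀ i, Integrable (fun ω : Fin n → ℝ => ω i) (_root_.stdGaussian (Fin n)) := by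
      intro i
      have hid : Integrable (fun x : ℝ => x) (gaussianReal 0 1) :=
        ⟨by fun_prop, lt_top_iff_ne_top.2 hmt⟩
      exact integrable_comp_eval (μ := fun _ : Fin n => gaussianReal 0 1) (i := i) hid
    exact integrable_finsetSum _ fun i _ => integrable_finsetSum _ fun j _ =>
      ((hcoord i).mul_prod (hcoord j)).smul_const _
  rw [integral_norm_eq_lintegral_enorm (Continuous.aestronglyMeasurable (by fun_prop)),
    integral_norm_eq_lintegral_enorm hint.1]
  set I := ∫⁻ ω : (Fin n → ℝ) × (Fin n → ℝ), ‖∑ i, ∑ j, (ω.1 i * ω.2 j) • b i j‖ₑ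
    ∂(_root_.stdGaussian (Fin n)).prod (_root_.stdGaussian (Fin n)) with hI
  have hIt : I ≠ ∞ := hint.2.ne
  have hfinal : (∫⁻ ω : Fin n × Fin n → ℝ, ‖∑ i, ∑ j, ω (i, j) • b i j‖ₑ
      ∂(_root_.stdGaussian (Fin n × Fin n))) * (m * m) ≤ ENNReal.ofReal √(2 * q) * D * I := by
    calc _ ≤ (ENNReal.ofReal √(2 * q) * D * ν Set.univ ^ (1 / q)) * (m * m) := by
          gcongr
          exact hU.trans (by gcongr)
      _ = ENNReal.ofReal √(2 * q) * D * (m * m * ν Set.univ ^ (1 / q)) := by ring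
      _ ≤ _ := by gcongr
  have hreal := ENNReal.toReal_mono
    (ENNReal.mul_ne_top (ENNReal.mul_ne_top ENNReal.ofReal_ne_top hDt) hIt) hfinal
  simp only [ENNReal.toReal_mul, ENNReal.toReal_ofReal (Real.sqrt_nonneg _)] at hreal
  rw [Real.sqrt_mul (by norm_num)] at hreal
  rw [← le_div_iff₀ (by positivity)] at hreal
  refine hreal.trans (le_of_eq ?_)
  ring
end
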